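/- In G = PSU(3,q), q = 2^(2^n), every element of order 3 is contained in exactly (q²-1)/3 maximal subgroups of G of order 6(q+1)², and in exactly 2(q²-1)/3 maximal subgroups of G of order 3(q²-q+1). -/

import Mathlib

/-! The center of `SU(3,q)` is trivial: it lies in a Singer torus and in the diagonal torus, which
have coprime orders (`center_eq_bot`). So the count takes place in `G = SU(3,q)`, by counting in two
ways the pairs consisting of a subgroup of the given order and an element of order 3 in it.

*Elements of order 3.* They form a single conjugacy class, represented by the permutation matrix of a
3-cycle (`conj_sg`). Its centralizer consists of the unitary circulant matrices of determinant 1. As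
`q ≡ 1` modulo 3, these are simultaneously diagonalized by a Fourier transform over `F_q`, and they
are determined by one eigenvalue, an arbitrary nonzero element of `F_{q²}` (`card_centralizer_sg`).
Thus the centralizer of an element of order 3 is abelian of order `q² - 1` (`centralizer_three`).

*Conjugacy of the subgroups.* Let `X` be the diagonal torus `T`, of order `(q+1)²`, or a Singer torus
`C`, of order `q² - q + 1`. A Singer torus is obtained as the centralizer of an element of prime
order dividing `q² - q + 1`: such an element acts irreducibly, so its commuting algebra is a field
with `q⁶` elements (`exists_singer`). In both cases `X` is an abelian Hall subgroup of order prime to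
6, containing for every prime `r` dividing its order an element of order `r` with centralizer `X`.
Its normalizer has order `6(q+1)²`, respectively `3(q²-q+1)`. A subgroup of that order has a normal
subgroup of order `|X|` by transfer, and every subgroup of order `|X|` is conjugate to `X`, again by
transfer; so all subgroups of that order are conjugate to `N(X)` (`conj_normalizer_of_card_eq`).

*Maximality.* `N(T)` is maximal (`isCoatom_Mon`): let `H` be an overgroup and `L` the stabilizer of
an axis of the triangle. Counting cosets of `N(T)` modulo `q + 1` shows that `H` contains `L` or meets
it in monomial matrices only. In the first case `H` is transitive on unit vectors, so `H = G`. In the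
second case the index of `N(T)` in `H` is `1` modulo `(q+1)²` and 4 does not divide `|H|`, and
arithmetic gives `H = N(T)`. `N(C)` is maximal (`IsSinger.isCoatom`): its index in an overgroup is `1`
modulo `q² - q + 1`, and the only proper overgroup not excluded by arithmetic would have order 1560
for `q = 4`; the normalizers of its subgroups of order 3, 5 and 13 rule it out (`no_1560`).

*The count.* The subgroups `N(X)` are self-normalizing, so if `s` is the number of conjugates of
`N(X)` containing a given element `σ` of order 3 then `s · |N(X)|` is the number of elements of order
3 in `N(X)` times the order of the centralizer of `σ` (`card_conj_mul`). The number of elements of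
order 3 is `2(q+1)²` for `X = T` (the products of a 3-cycle with a diagonal matrix) and
`2(q²-q+1)` for `X = C` (the elements outside `C`), which gives `(q²-1)/3` and `2(q²-1)/3`.
-/

open scoped Classical Pointwise

namespace PSUPaper

/-- `q = 2^(2^n)`. -/
abbrev qval (n : ℕ) : ℕ := 2 ^ 2 ^ n

/-- The field with `q² = 2^(2^(n+1))` elements. -/
abbrev Fq2 (n : ℕ) : Type := GaloisField 2 (2 ^ (n + 1))

/-- The involutory automorphism `x ↦ x^q` of `F_{q²}`, as a star-ring structure. -/
noncomputable instance starRingFq2 (n : ℕ) : StarRing (Fq2 n) where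
  star x := x ^ qval n
  star_involutive x := by
    letI : Fintype (Fq2 n) := Fintype.ofFinite _
    show (x ^ qval n) ^ qval n = x
    rw [← pow_mul]
    have h : qval n * qval n = 2 ^ 2 ^ (n + 1) := by
      rw [← pow_add, ← two_mul, pow_succ, mul_comm]
    have hcard : Fintype.card (Fq2 n) = 2 ^ 2 ^ (n + 1) := by
      rw [← Nat.card_eq_fintype_card, GaloisField.card 2 (2 ^ (n + 1)) (by positivity)]
    rw [h, ← hcard]
    exact FiniteField.pow_card x
  star_mul x y := by
    show (x * y) ^ qval n = y ^ qval n * x ^ qval n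
    rw [mul_pow, mul_comm]
  star_add x y := by
    show (x + y) ^ qval n = x ^ qval n + y ^ qval n
    exact add_pow_char_pow x y 2 (2 ^ n)

/-- `SU(3,q)`: the subgroup of the unitary group `{M | M * (M^σ)ᵀ = 1}` (with respect to the
star structure `σ : x ↦ x^q` on `F_{q²}`) consisting of the matrices of determinant 1. -/
noncomputable def SU3 (n : ℕ) : Subgroup (Matrix.unitaryGroup (Fin 3) (Fq2 n)) where
  carrier := {M | (M : Matrix (Fin 3) (Fin 3) (Fq2 n)).det = 1}
  one_mem' := by simp
  mul_mem' := by
    intro a b ha hb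
    simp only [Set.mem_setOf_eq, Matrix.UnitaryGroup.mul_val, Matrix.det_mul] at *
    rw [ha, hb, mul_one]
  inv_mem' := by
    intro a ha
    simp only [Set.mem_setOf_eq, Matrix.UnitaryGroup.inv_val] at *
    rw [Matrix.star_eq_conjTranspose, Matrix.det_conjTranspose, ha, star_one]

/-- `PSU(3,q)`: the quotient of `SU(3,q)` by its center. -/
noncomputable abbrev PSU3 (n : ℕ) : Type := SU3 n ⧸ Subgroup.center (SU3 n)

/-- `mu` is the Möbius function `H ↦ μ(H, G)` of the subgroup lattice of `G`:
`μ(G,G) = 1` and `∑_{J : H ≤ J ≤ G} μ(J,G) = 0` for `H < G`. -/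
def IsSubgroupMobius {G : Type*} [Group G] (mu : Subgroup G → ℤ) : Prop :=
  ∀ H : Subgroup G, (∑ᶠ K ∈ {K : Subgroup G | H ≤ K}, mu K) = if H = ⊤ then 1 else 0

/-- `H` and `K` are conjugate subgroups. -/
def IsConjSub {G : Type*} [Group G] (H K : Subgroup G) : Prop :=
  ∃ g : G, Subgroup.map (MulAut.conj g).toMonoidHom H = K

/-- The conjugacy classes of subgroups of `G`. -/
abbrev SubClasses (G : Type*) [Group G] : Type _ :=
  Quotient (MulAction.orbitRel (ConjAct G) (Subgroup G))

/-- The conjugacy class of a subgroup. -/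
def clsOf {G : Type*} [Group G] (H : Subgroup G) : SubClasses G :=
  Quotient.mk (MulAction.orbitRel (ConjAct G) (Subgroup G)) H

/-- The order on conjugacy classes of subgroups: `[H] ≤ [K]` iff `H` is contained in some
conjugate of `K`. -/
def clsLe {G : Type*} [Group G] (x y : SubClasses G) : Prop :=
  ∃ H K : Subgroup G, clsOf H = x ∧ clsOf K = y ∧ ∃ g : ConjAct G, H ≤ g • K

/-- `lam` is the Möbius function `[H] ↦ μ([H], [G])` of the poset of conjugacy classes of
subgroups of `G`: `μ([G],[G]) = 1` and `∑_{[J] : [H] ≤ [J] ≤ [G]} μ([J],[G]) = 0` for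
`[H] < [G]`. -/
def IsClassMobius {G : Type*} [Group G] (lam : SubClasses G → ℤ) : Prop :=
  ∀ x : SubClasses G, (∑ᶠ y ∈ {y : SubClasses G | clsLe x y}, lam y) =
    if x = clsOf (⊤ : Subgroup G) then 1 else 0

/-- `m` is the Möbius function `H ↦ μ_{L_p}({1}, H)` of the poset `L_p` of `p`-subgroups of `G`:
`μ_{L_p}({1},{1}) = 1` and `∑_{J ∈ L_p : J ≤ K} μ_{L_p}({1},J) = 0` for `{1} < K ∈ L_p`. -/
def IsPMobiusBot {G : Type*} [Group G] (p : ℕ) (m : Subgroup G → ℤ) : Prop :=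
  m ⊥ = 1 ∧ ∀ K : Subgroup G, IsPGroup p K → ⊥ < K →
    (∑ᶠ J ∈ {J : Subgroup G | IsPGroup p J ∧ J ≤ K}, m J) = 0

/-! ### Coprime powers and indices modulo `d` -/

theorem mem_of_pow_mem_of_coprime {G : Type*} [Group G] (C : Subgroup G) (x : G) {a b : ℕ}
    (hab : a.Coprime b) (ha : x ^ a ∈ C) (hb : x ^ b ∈ C) : x ∈ C := by
  have h : x = (x ^ a) ^ (Nat.gcdA a b) * (x ^ b) ^ (Nat.gcdB a b) := by
    rw [← zpow_natCast, ← zpow_natCast, ← zpow_mul, ← zpow_mul, ← zpow_add,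
      ← Nat.gcd_eq_gcd_ab, hab.gcd_eq_one]; simp
  rw [h]
  exact C.mul_mem (C.zpow_mem ha _) (C.zpow_mem hb _)

theorem pow_relIndex_mem {G : Type*} [Group G] {C N : Subgroup G}
    (hN : N ≤ Subgroup.normalizer (C : Set G)) {x : G} (hx : x ∈ N) : x ^ (C.relIndex N) ∈ C := by
  have : (C.subgroupOf N).Normal := Subgroup.normal_subgroupOf_of_le_normalizer hN
  have := (C.subgroupOf N).pow_index_mem ⟨x, hx⟩
  rw [Subgroup.mem_subgroupOf] at this
  exact this

theorem mem_of_pow_eq_one {G : Type*} [Group G] {C N : Subgroup G}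
    (hN : N ≤ Subgroup.normalizer (C : Set G)) {x : G} (hx : x ∈ N) {k : ℕ}
    (hk : (C.relIndex N).Coprime k) (hxk : x ^ k = 1) : x ∈ C :=
  mem_of_pow_mem_of_coprime C x hk (pow_relIndex_mem hN hx) (by rw [hxk]; exact C.one_mem)

/-- Count `J ⧸ N` by orbits of `X`: the base coset is fixed, and the orbit of any other coset has
length divisible by `d`, since its stabilizer has index `d` in `X`. -/
theorem index_modEq_one {J : Type*} [Group J] [Finite J] (X N : Subgroup J) (hXN : X ≤ N) (d : ℕ)
    (h : ∀ g : J, g ∉ N → Nat.card {x : J // x ∈ X ∧ g⁻¹ * x * g ∈ N} * d = Nat.card X) :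
    N.index ≡ 1 [MOD d] := by
  have e := MulAction.selfEquivSigmaOrbitsQuotientStabilizer X (J ⧸ N)
  have hc : N.index = ∑ᶠ ω : Quotient (MulAction.orbitRel X (J ⧸ N)),
      (MulAction.stabilizer X ω.out).index := by
    rw [Subgroup.index, Nat.card_congr e]
    let : Fintype (Quotient (MulAction.orbitRel X (J ⧸ N))) := Fintype.ofFinite _
    rw [finsum_eq_sum_of_fintype, Nat.card_sigma]
    rfl
  let : Fintype (Quotient (MulAction.orbitRel X (J ⧸ N))) := Fintype.ofFinite _
  rw [finsum_eq_sum_of_fintype] at hc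
  let ω0 : Quotient (MulAction.orbitRel X (J ⧸ N)) := Quotient.mk (MulAction.orbitRel X (J ⧸ N)) ((1 : J) : J ⧸ N)
  rw [← Finset.add_sum_erase _ _ (Finset.mem_univ ω0)] at hc
  have stab : ∀ (g : J), Nat.card (MulAction.stabilizer X (g : J ⧸ N)) =
      Nat.card {x : J // x ∈ X ∧ g⁻¹ * x * g ∈ N} := by
    intro g
    refine Nat.card_congr ⟨fun x => ⟨x.1.1, x.1.2, ?_⟩, fun x => ⟨⟨x.1, x.2.1⟩, ?_⟩, ?_, ?_⟩
    · have := x.2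
      rw [MulAction.mem_stabilizer_iff] at this
      have h2 : ((x.1.1 * g : J) : J ⧸ N) = g := this
      have h3 := QuotientGroup.eq.1 h2.symm
      simpa [mul_assoc] using h3
    · rw [MulAction.mem_stabilizer_iff]
      change ((x.1 * g : J) : J ⧸ N) = g
      refine (QuotientGroup.eq.2 ?_).symm
      simpa [mul_assoc] using x.2.2
    · intro x; rfl
    · intro x; rfl
  have h0 : (MulAction.stabilizer X ω0.out).index = 1 := by
    have hr : ∃ x : X, x • ω0.out = ((1 : J) : J ⧸ N) := by
      have h1 := Quotient.mk_out (s := MulAction.orbitRel X (J ⧸ N)) ((1 : J) : J ⧸ N)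
      have h2 : (MulAction.orbitRel X (J ⧸ N)) ((1 : J) : J ⧸ N) ω0.out := (MulAction.orbitRel X (J ⧸ N)).symm h1
      rw [MulAction.orbitRel_apply, MulAction.mem_orbit_iff] at h2
      exact h2
    obtain ⟨x, hx⟩ := hr
    have h3 : ω0.out = ((1 : J) : J ⧸ N) := by
      have : ω0.out = x⁻¹ • ((1 : J) : J ⧸ N) := by rw [← hx, inv_smul_smul]
      rw [this]
      change (((x⁻¹ : X) : J) * 1 : J) = ((1 : J) : J ⧸ N)
      refine (QuotientGroup.eq.2 ?_).symm
      simpa using hXN x.2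
    rw [h3, Subgroup.index_eq_one, Subgroup.eq_top_iff']
    intro y
    rw [MulAction.mem_stabilizer_iff]
    change ((y.1 * 1 : J) : J ⧸ N) = ((1 : J) : J ⧸ N)
    refine (QuotientGroup.eq.2 ?_).symm
    simpa using hXN y.2
  rw [h0] at hc
  rw [hc]
  have : d ∣ ∑ x ∈ Finset.univ.erase ω0, (MulAction.stabilizer X (Quotient.out x)).index := by
    refine Finset.dvd_sum fun ω hω => ?_
    obtain ⟨g, hg⟩ := QuotientGroup.mk_surjective ω.out
    have hgN : g ∉ N := by
      intro hgN
      apply (Finset.mem_erase.1 hω).1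
      rw [← Quotient.out_eq ω, ← hg]
      have : ((g : J) : J ⧸ N) = ((1 : J) : J ⧸ N) := (QuotientGroup.eq.2 (by simpa using hgN))
      rw [this]
    have h1 := h g hgN
    rw [← stab g] at h1
    have h2 := (MulAction.stabilizer X (g : J ⧸ N)).card_mul_index
    rw [← hg]
    have hpos : 0 < Nat.card (MulAction.stabilizer X (g : J ⧸ N)) := Nat.card_pos
    exact (Nat.eq_of_mul_eq_mul_left hpos (h1.trans h2.symm)).dvd
  simpa using (Nat.modEq_zero_iff_dvd.2 this).add_left 1

theorem relIndex_modEq_one {G : Type*} [Group G] [Finite G] (X N J : Subgroup G)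
    (hXN : X ≤ N) (hNJ : N ≤ J) (d : ℕ)
    (h : ∀ g ∈ J, g ∉ N → Nat.card {x : G // x ∈ X ∧ g⁻¹ * x * g ∈ N} * d = Nat.card X) :
    N.relIndex J ≡ 1 [MOD d] := by
  refine index_modEq_one (X.subgroupOf J) (N.subgroupOf J) ?_ d ?_
  · intro x hx
    exact hXN hx
  · intro g hg
    have := h g g.2 hg
    have hX : Nat.card (X.subgroupOf J) = Nat.card X :=
      Nat.card_congr (Subgroup.subgroupOfEquivOfLe (hXN.trans hNJ)).toEquiv
    rw [hX, ← this]
    congr 1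
    refine Nat.card_congr ⟨fun x => ⟨x.1.1, x.2⟩,
      fun x => ⟨⟨x.1, hNJ (hXN x.2.1)⟩, x.2⟩, fun x => rfl, fun x => rfl⟩

/-! ### Conjugate subgroups and conjugacy of Hall subgroups -/

/-- The conjugate `g X g⁻¹` of a subgroup. -/
def cj {G : Type*} [Group G] (g : G) (X : Subgroup G) : Subgroup G :=
  X.map (MulAut.conj g).toMonoidHom

theorem mem_cj {G : Type*} [Group G] {g y : G} {X : Subgroup G} :
    y ∈ cj g X ↔ g⁻¹ * y * g ∈ X := by
  unfold cj
  rw [Subgroup.mem_map]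
  constructor
  · rintro ⟨x, hx, rfl⟩
    simpa [mul_assoc] using hx
  · intro h
    exact ⟨_, h, by simp [mul_assoc]⟩

theorem card_cj {G : Type*} [Group G] (g : G) (X : Subgroup G) :
    Nat.card (cj g X) = Nat.card X :=
  (Nat.card_congr (X.equivMapOfInjective _ (MulAut.conj g).injective).toEquiv).symm

theorem cj_mul {G : Type*} [Group G] (g h : G) (X : Subgroup G) :
    cj (g * h) X = cj g (cj h X) := by
  ext y
  simp only [mem_cj, mul_inv_rev, mul_assoc]

theorem cj_one {G : Type*} [Group G] (X : Subgroup G) : cj 1 X = X := by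
  ext y; simp [mem_cj]

theorem index_cj {G : Type*} [Group G] (g : G) (X : Subgroup G) :
    (cj g X).index = X.index :=
  Subgroup.index_map_equiv X (MulAut.conj g)

theorem cj_eq_iff {G : Type*} [Group G] {g : G} {X : Subgroup G} :
    cj g X = X ↔ g ∈ Subgroup.normalizer (X : Set G) := by
  constructor
  · intro h
    rw [Subgroup.mem_normalizer_iff]
    intro y
    have := mem_cj (g := g) (y := g * y * g⁻¹) (X := X)
    rw [h] at this
    simpa [mul_assoc] using this.symm
  · intro h
    ext y
    rw [mem_cj]
    rw [Subgroup.mem_normalizer_iff] at h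
    have := h (g⁻¹ * y * g)
    simpa [mul_assoc] using this

theorem card_mul_relIndex {G : Type*} [Group G] {H K : Subgroup G} (h : H ≤ K) :
    Nat.card H * H.relIndex K = Nat.card K := by
  have := Subgroup.relIndex_mul_relIndex ⊥ H K bot_le h
  simpa using this

/-- A subgroup `R` of prime power order whose prime does not divide the index of `X` is
conjugate into `X`. -/
theorem exists_cj_le {G : Type*} [Group G] [Finite G] (X R : Subgroup G) (r : ℕ) [Fact r.Prime]
    (hR : IsPGroup r R) (hX : ¬ r ∣ X.index) : ∃ g : G, R ≤ cj g X := by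
  have := Fintype.ofFinite (G ⧸ X)
  obtain ⟨z, hz⟩ := hR.nonempty_fixed_point_of_prime_not_dvd_card (G ⧸ X) hX
  obtain ⟨g, rfl⟩ := QuotientGroup.mk_surjective z
  refine ⟨g, fun y hy => mem_cj.2 ?_⟩
  have h := hz ⟨y, hy⟩
  have h2 : ((y * g : G) : G ⧸ X) = g := h
  have h3 := QuotientGroup.eq.1 h2.symm
  simpa [mul_assoc] using h3

/-- Let `X` be an abelian Hall subgroup which, for each prime `r` dividing its order, contains an
element of order `r` together with its centralizer. Then every subgroup of order `|X|` is conjugate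
to `X`. The Sylow subgroups of `F` lie in conjugates of `X` and contain such special elements, so
they are central in their normalizers in `F`; by transfer `F` is abelian, and it therefore lies in
the centralizer of a special element. -/
theorem conj_of_card_eq {G : Type*} [Group G] [Finite G] (X F : Subgroup G)
    (hab : ∀ x ∈ X, ∀ y ∈ X, x * y = y * x) (hidx : (X.index).Coprime (Nat.card X))
    (hx : ∀ r : ℕ, r.Prime → r ∣ Nat.card X → ∃ x ∈ X, x ≠ 1 ∧ x ^ r = 1 ∧
      ∀ g : G, g * x = x * g → g ∈ X)
    (hF : Nat.card F = Nat.card X) : ∃ g : G, F = cj g X := by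
  -- each Sylow subgroup of `F` lies in a conjugate of `X` and contains a special element of it
  have key : ∀ r : ℕ, r.Prime → r ∣ Nat.card X → ∀ P : Sylow r F,
      ∃ g : G, P.1.map F.subtype ≤ cj g X ∧ ∃ x ∈ P.1.map F.subtype,
        ∀ h : G, h * x = x * h → h ∈ cj g X := by
    intro r hr hrX P
    have : Fact r.Prime := ⟨hr⟩
    have hnd : ¬ r ∣ X.index := by
      intro h
      exact hr.one_lt.ne' (Nat.dvd_one.1 (hidx ▸ Nat.dvd_gcd h hrX))
    obtain ⟨g, hg⟩ := exists_cj_le X (P.1.map F.subtype) r (P.2.map _) hnd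
    refine ⟨g, hg, ?_⟩
    obtain ⟨x, hxX, hx1, hxr, hxC⟩ := hx r hr hrX
    refine ⟨g * x * g⁻¹, ?_, ?_⟩
    · have hn : cj g X ≤ Subgroup.normalizer ((P.1.map F.subtype : Subgroup G) : Set G) := by
        intro c hc
        rw [Subgroup.mem_normalizer_iff]
        have hcom : ∀ d ∈ cj g X, c * d = d * c := by
          intro d hd
          rw [mem_cj] at hc hd
          have := hab _ hc _ hd
          simp only [mul_assoc, mul_inv_cancel_left] at this
          have := mul_left_cancel this
          simp only [← mul_assoc] at this
          exact mul_right_cancel this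
        intro y
        constructor
        · intro hy
          rw [hcom _ (hg hy), mul_inv_cancel_right]; exact hy
        · intro hy
          have h1 := hcom _ (hg hy)
          have : c * y * c⁻¹ = y := by
            have : c * (c * y * c⁻¹) = c * y := by rw [h1]; simp
            exact mul_left_cancel this
          rwa [this] at hy
      refine mem_of_pow_eq_one hn (k := r) ?_ ?_ ?_
      · rw [mem_cj]; simpa [mul_assoc] using hxX
      · have hmul := card_mul_relIndex hg
        have hmul2 := P.1.card_mul_index
        rw [card_cj, ← hF, ← hmul2,
          Nat.card_congr (P.1.equivMapOfInjective _ F.subtype_injective).symm.toEquiv] at hmul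
        rw [Nat.eq_of_mul_eq_mul_left Nat.card_pos hmul]
        exact ((Nat.Prime.coprime_iff_not_dvd hr).2 P.not_dvd_index).symm
      · rw [conj_pow, hxr]; simp
    · intro h hh
      rw [mem_cj]
      apply hxC
      have : g⁻¹ * (h * (g * x * g⁻¹)) * g = g⁻¹ * (g * x * g⁻¹ * h) * g := by rw [hh]
      simpa [mul_assoc] using this
  -- by Burnside's transfer theorem the order of a commutator in `F` is prime to every `r`
  have habF : ∀ a b : F, a * b = b * a := by
    intro a b
    by_contra hne
    set c := a * b * a⁻¹ * b⁻¹ with hc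
    have hc1 : c ≠ 1 := by
      intro h
      apply hne
      have : a * b = c * (b * a) := by rw [hc]; group
      rw [this, h, one_mul]
    obtain ⟨r, hr, hrc⟩ := Nat.exists_prime_and_dvd (mt orderOf_eq_one_iff.1 hc1)
    have : Fact r.Prime := ⟨hr⟩
    have hrX : r ∣ Nat.card X := hF ▸ hrc.trans (orderOf_dvd_natCard c)
    obtain ⟨P⟩ : Nonempty (Sylow r F) := inferInstance
    obtain ⟨g, hg, x, hxP, hxC⟩ := key r hr hrX P
    have hcom : ∀ c ∈ cj g X, ∀ d ∈ cj g X, c * d = d * c := by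
      intro c hc d hd
      rw [mem_cj] at hc hd
      have := hab _ hc _ hd
      simp only [mul_assoc, mul_inv_cancel_left] at this
      have := mul_left_cancel this
      simp only [← mul_assoc] at this
      exact mul_right_cancel this
    have hPg : ∀ y ∈ P, (y : G) ∈ cj g X := fun y hy => hg ⟨y, hy, rfl⟩
    obtain ⟨x, hxP, rfl⟩ := hxP
    have hnorm : ∀ n : F, n ∈ Subgroup.normalizer (P : Set F) → (n : G) ∈ cj g X := by
      intro n hn
      have h1 : ∀ n : F, n ∈ Subgroup.normalizer (P : Set F) → ∀ c ∈ cj g X,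
          (n : G) * c * (n : G)⁻¹ ∈ cj g X := by
        intro n hn c hc
        apply hxC
        have h2 : (n⁻¹ * x * n) ∈ P := by
          have := (Subgroup.mem_normalizer_iff.1 (inv_mem hn) x).1 hxP
          rw [inv_inv] at this
          exact this
        have h3 := hcom _ hc _ (hPg _ h2)
        have h4 : (n : G) * (c * ((n : G)⁻¹ * x * n)) * (n : G)⁻¹ =
          (n : G) * (((n : G)⁻¹ * x * n) * c) * (n : G)⁻¹ := by
            simpa using congrArg (fun z => (n : G) * z * (n : G)⁻¹) h3
        simpa [mul_assoc] using h4
      refine mem_of_pow_eq_one (C := cj g X) (N := Subgroup.normalizer (cj g X : Set G))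
        le_rfl (k := Nat.card X) ?_ ?_ ?_
      · rw [Subgroup.mem_normalizer_iff]
        intro c
        refine ⟨h1 n hn c, fun h => ?_⟩
        have := h1 _ (inv_mem hn) _ h
        simpa [mul_assoc] using this
      · refine Nat.Coprime.coprime_dvd_left (Subgroup.relIndex_dvd_index_of_le ?_) ?_
        · exact Subgroup.le_normalizer
        · rwa [index_cj]
      · rw [← hF]
        exact_mod_cast congrArg Subtype.val (pow_card_eq_one' (x := n))
    have hP : Subgroup.normalizer (P : Set F) ≤ Subgroup.centralizer (P : Set F) := by
      intro n hn
      rw [Subgroup.mem_centralizer_iff]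
      intro y hy
      exact Subtype.ext (hcom _ (hPg y hy) _ (hnorm n hn))
    have hker : ¬ r ∣ Nat.card (MonoidHom.transferSylow P hP).ker :=
      MonoidHom.not_dvd_card_ker_transferSylow P hP
    apply hker
    have hcm : c ∈ (MonoidHom.transferSylow P hP).ker := by
      rw [MonoidHom.mem_ker, hc]
      have hPc : ∀ u v : P, u * v = v * u := fun u v =>
        Subtype.ext (Subtype.ext (hcom _ (hPg _ u.2) _ (hPg _ v.2)))
      simp only [map_mul, map_inv]
      rw [hPc (MonoidHom.transferSylow P hP a)]
      simp
    have := Subgroup.orderOf_dvd_natCard _ hcm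
    exact hrc.trans this
  by_cases h1 : Nat.card X = 1
  · refine ⟨1, ?_⟩
    rw [h1] at hF
    rw [Subgroup.card_eq_one.1 hF, Subgroup.card_eq_one.1 h1, cj_one]
  obtain ⟨r, hr, hrX⟩ := Nat.exists_prime_and_dvd h1
  have : Fact r.Prime := ⟨hr⟩
  obtain ⟨P⟩ : Nonempty (Sylow r F) := inferInstance
  obtain ⟨g, hg, x, hxP, hxC⟩ := key r hr hrX P
  obtain ⟨x, hxP, rfl⟩ := hxP
  refine ⟨g, Subgroup.eq_of_le_of_card_ge ?_ ?_⟩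
  · intro y hy
    exact hxC y (congrArg Subtype.val (habF ⟨y, hy⟩ x))
  · rw [card_cj, hF]

/-! ### Normal complements and the double count -/

/-- Burnside's transfer theorem for the smallest prime `p` dividing `|F|`, when the Sylow
`p`-subgroup has order `p`: it has a normal complement `K`, which contains all elements whose order
divides `|K|`. -/
theorem exists_complement {G : Type*} [Group G] [Finite G] (F : Subgroup G) (p k : ℕ)
    (hp : p.Prime) (hF : Nat.card F = p * k) (hk : ∀ r : ℕ, r.Prime → r ∣ k → p < r) :
    ∃ K ≤ F, Nat.card K = k ∧ ∀ x ∈ F, x ^ k = 1 → x ∈ K := by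
  have : Fact p.Prime := ⟨hp⟩
  have hcop : p.Coprime k := (Nat.Prime.coprime_iff_not_dvd hp).2 fun h => (hk p hp h).ne rfl
  have hmin : (Nat.card F).minFac = p := by
    have hd : p ∣ Nat.card F := hF ▸ dvd_mul_right _ _
    refine le_antisymm (Nat.minFac_le_of_dvd hp.two_le hd) ?_
    have hne : Nat.card F ≠ 1 := fun h => hp.one_lt.ne' (Nat.dvd_one.1 (h ▸ hd))
    have h1 := Nat.minFac_prime hne
    have h2 := Nat.minFac_dvd (Nat.card F)
    generalize (Nat.card F).minFac = r at *
    rw [hF] at h2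
    rcases (Nat.Prime.dvd_mul h1).1 h2 with h | h
    · exact ((Nat.prime_dvd_prime_iff_eq h1 hp).1 h).ge
    · exact (hk r h1 h).le
  obtain ⟨P⟩ : Nonempty (Sylow p F) := inferInstance
  have hPc : Nat.card P = p := by
    rw [P.card_eq_multiplicity, hF, Nat.factorization_mul hp.ne_zero]
    · simp [hp.factorization, Nat.factorization_eq_zero_of_not_dvd
        (fun h => (hk p hp h).ne rfl : ¬ p ∣ k)]
    · rintro rfl
      exact (Nat.card_pos (α := F)).ne' (by rw [hF, mul_zero])
  have hPcyc : IsCyclic P := isCyclic_of_prime_card hPc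
  have hN := IsCyclic.normalizer_le_centralizer hmin hPcyc
  have hcomp := MonoidHom.ker_transferSylow_isComplement' P hN
  set K := (MonoidHom.transferSylow P hN).ker with hK
  have hKP := hcomp.card_mul_card
  have hKc : Nat.card K = k := by
    have : Nat.card K * p = k * p := by
      rw [mul_comm k, ← hF, ← hKP]; congr 1; exact hPc.symm
    exact Nat.eq_of_mul_eq_mul_right hp.pos this
  refine ⟨K.map F.subtype, Subgroup.map_subtype_le K, ?_, ?_⟩
  · rw [Nat.card_congr (K.equivMapOfInjective _ F.subtype_injective).symm.toEquiv, hKc]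
  · intro x hx hxk
    refine ⟨⟨x, hx⟩, ?_, rfl⟩
    have hKi : K.index = p := by
      have := K.card_mul_index
      rw [hKc, hF, mul_comm] at this
      have hk0 : 0 < k := hKc ▸ Nat.card_pos
      exact Nat.eq_of_mul_eq_mul_right hk0 this
    refine mem_of_pow_mem_of_coprime K _ hcop ?_ (b := k) ?_
    · rw [← hKi]; exact K.pow_index_mem _
    · have : (⟨x, hx⟩ : F) ^ k = 1 := Subtype.ext hxk
      rw [this]; exact K.one_mem

/-- `exists_complement` for the prime 3, preceded by the prime 2 if `e = 6`. -/
theorem exists_complement_three {G : Type*} [Group G] [Finite G] (F : Subgroup G) (e k : ℕ)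
    (he : e = 3 ∨ e = 6) (hF : Nat.card F = e * k) (hk : ∀ r : ℕ, r.Prime → r ∣ k → 3 < r) :
    ∃ K ≤ F, Nat.card K = k ∧ ∀ x ∈ F, x ^ k = 1 → x ∈ K := by
  rcases he with rfl | rfl
  · exact exists_complement F 3 k Nat.prime_three hF hk
  · obtain ⟨K1, hK1, hc1, h1⟩ := exists_complement F 2 (3 * k) Nat.prime_two (by rw [hF]; ring)
      (by
        intro r hr hrk
        rcases (Nat.Prime.dvd_mul hr).1 hrk with h | h
        · rw [(Nat.prime_dvd_prime_iff_eq hr Nat.prime_three).1 h]; norm_num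
        · have := hk r hr h; omega)
    obtain ⟨K, hK, hc, h2⟩ := exists_complement K1 3 k Nat.prime_three hc1 hk
    refine ⟨K, hK.trans hK1, hc, fun x hx hxk => h2 x (h1 x hx ?_) hxk⟩
    rw [mul_comm, pow_mul, hxk, one_pow]

theorem normalizer_cj {G : Type*} [Group G] (g : G) (X : Subgroup G) :
    Subgroup.normalizer (cj g X : Set G) = cj g (Subgroup.normalizer (X : Set G)) := by
  ext h
  rw [mem_cj, ← cj_eq_iff, ← cj_eq_iff, cj_mul, cj_mul]
  constructor
  · intro hh
    rw [hh, ← cj_mul, inv_mul_cancel, cj_one]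
  · intro hh
    have := congrArg (cj g) hh
    rwa [← cj_mul g, mul_inv_cancel, cj_one] at this

/-- Subgroups having the order of the normalizer of a suitable abelian Hall subgroup `X` are
conjugate to that normalizer. -/
theorem conj_normalizer_of_card_eq {G : Type*} [Group G] [Finite G] (X F : Subgroup G) (e : ℕ)
    (he : e = 3 ∨ e = 6)
    (hab : ∀ x ∈ X, ∀ y ∈ X, x * y = y * x) (hidx : (X.index).Coprime (Nat.card X))
    (hx : ∀ r : ℕ, r.Prime → r ∣ Nat.card X → ∃ x ∈ X, x ≠ 1 ∧ x ^ r = 1 ∧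
      ∀ g : G, g * x = x * g → g ∈ X) (h3 : ∀ r : ℕ, r.Prime → r ∣ Nat.card X → 3 < r)
    (hN : Nat.card (Subgroup.normalizer (X : Set G)) = e * Nat.card X)
    (hF : Nat.card F = e * Nat.card X) :
    ∃ g : G, F = cj g (Subgroup.normalizer (X : Set G)) := by
  obtain ⟨K, hKF, hKc, hK⟩ := exists_complement_three F e _ he hF h3
  obtain ⟨g, rfl⟩ := conj_of_card_eq X K hab hidx hx hKc
  refine ⟨g, Subgroup.eq_of_le_of_card_ge ?_ ?_⟩
  · rw [← normalizer_cj]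
    have hf : ∀ f ∈ F, ∀ y ∈ cj g X, f * y * f⁻¹ ∈ cj g X := by
      intro f hf y hy
      refine hK _ (F.mul_mem (F.mul_mem hf (hKF hy)) (F.inv_mem hf)) ?_
      rw [conj_pow]
      have : y ^ Nat.card X = 1 := by
        rw [← hKc]
        exact orderOf_dvd_iff_pow_eq_one.1 (Subgroup.orderOf_dvd_natCard _ hy)
      rw [this]; simp
    intro f hfF
    rw [Subgroup.mem_normalizer_iff]
    intro y
    refine ⟨hf f hfF y, fun h => ?_⟩
    have := hf _ (F.inv_mem hfF) _ h
    simpa [mul_assoc] using this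
  · rw [card_cj, hN, hF]

/-- Double count of the conjugates of `N` containing a given element of order 3. -/
theorem card_conj_mul {G : Type*} [Group G] [Finite G] (N : Subgroup G)
    (hN : Subgroup.normalizer (N : Set G) = N) (σ : G)
    (hσ : ∀ τ : G, orderOf τ = 3 ↔ ∃ g : G, τ = g⁻¹ * σ * g) :
    Nat.card {H : Subgroup G // (∃ g : G, H = cj g N) ∧ σ ∈ H} * Nat.card N =
      Nat.card {ν : G // ν ∈ N ∧ orderOf ν = 3} * Nat.card (Subgroup.centralizer ({σ} : Set G)) := by
  have h1 : Nat.card {g : G // g⁻¹ * σ * g ∈ N} =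
      Nat.card {H : Subgroup G // (∃ g : G, H = cj g N) ∧ σ ∈ H} * Nat.card N := by
    have c : ∀ H : {H : Subgroup G // (∃ g : G, H = cj g N) ∧ σ ∈ H}, ∃ g : G, H.1 = cj g N :=
      fun H => H.2.1
    choose c hc using c
    rw [← Nat.card_prod]
    have hcN : ∀ x : N, cj (x : G) N = N := fun x => cj_eq_iff.2 (by rw [hN]; exact x.2)
    have hm : ∀ z : {H : Subgroup G // (∃ g : G, H = cj g N) ∧ σ ∈ H} × N,
        (c z.1 * z.2.1)⁻¹ * σ * (c z.1 * z.2.1) ∈ N := by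
      intro z
      rw [← mem_cj, cj_mul, hcN, ← hc]; exact z.1.2.2
    refine (Nat.card_congr (Equiv.ofBijective (fun z => ⟨c z.1 * z.2.1, hm z⟩) ⟨?_, ?_⟩)).symm
    · rintro ⟨H, x⟩ ⟨H', x'⟩ h
      have h := congrArg Subtype.val h
      change c H * x = c H' * x' at h
      have h2 := congrArg (fun z => cj z N) h
      simp only [cj_mul] at h2
      rw [hcN, hcN, ← hc, ← hc] at h2
      obtain rfl := Subtype.ext h2
      rw [Subtype.ext (mul_left_cancel h)]
    · rintro ⟨g, hg⟩
      let H : {H : Subgroup G // (∃ g : G, H = cj g N) ∧ σ ∈ H} :=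
        ⟨cj g N, ⟨g, rfl⟩, mem_cj.2 hg⟩
      have hx : (c H)⁻¹ * g ∈ N := by
        rw [← hN, ← cj_eq_iff, cj_mul]
        have : cj g N = cj (c H) N := hc H
        rw [this, ← cj_mul, inv_mul_cancel, cj_one]
      exact ⟨⟨H, ⟨_, hx⟩⟩, Subtype.ext (by simp)⟩
  have h2 : Nat.card {g : G // g⁻¹ * σ * g ∈ N} =
      Nat.card {ν : G // ν ∈ N ∧ orderOf ν = 3} *
        Nat.card (Subgroup.centralizer ({σ} : Set G)) := by
    have c : ∀ ν : {ν : G // ν ∈ N ∧ orderOf ν = 3}, ∃ g : G, ν.1 = g⁻¹ * σ * g :=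
      fun ν => (hσ _).1 ν.2.2
    choose c hc using c
    rw [← Nat.card_prod]
    have hm : ∀ z : {ν : G // ν ∈ N ∧ orderOf ν = 3} × Subgroup.centralizer ({σ} : Set G),
        (z.2.1 * c z.1)⁻¹ * σ * (z.2.1 * c z.1) ∈ N := by
      intro z
      have hz := Subgroup.mem_centralizer_singleton_iff.1 z.2.2
      have : (z.2.1 * c z.1)⁻¹ * σ * (z.2.1 * c z.1) = z.1.1 := by
        rw [hc z.1, mul_inv_rev]
        simp only [mul_assoc]
        rw [← mul_assoc σ, ← hz]; simp [mul_assoc]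
      rw [this]; exact z.1.2.1
    refine (Nat.card_congr (Equiv.ofBijective (fun z => ⟨z.2.1 * c z.1, hm z⟩) ⟨?_, ?_⟩)).symm
    · rintro ⟨ν, x⟩ ⟨ν', x'⟩ h
      have h := congrArg Subtype.val h
      change x.1 * c ν = x'.1 * c ν' at h
      have hh : ∀ (ν : {ν : G // ν ∈ N ∧ orderOf ν = 3})
          (x : Subgroup.centralizer ({σ} : Set G)), (x.1 * c ν)⁻¹ * σ * (x.1 * c ν) = ν.1 := by
        intro ν x
        have hz := Subgroup.mem_centralizer_singleton_iff.1 x.2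
        rw [hc ν, mul_inv_rev]
        simp only [mul_assoc]
        rw [← mul_assoc σ, ← hz]; simp [mul_assoc]
      obtain rfl : ν = ν' := Subtype.ext (by rw [← hh ν x, h, hh])
      rw [Subtype.ext (mul_right_cancel h)]
    · rintro ⟨g, hg⟩
      let ν : {ν : G // ν ∈ N ∧ orderOf ν = 3} := ⟨g⁻¹ * σ * g, hg, (hσ _).2 ⟨g, rfl⟩⟩
      have hx : g * (c ν)⁻¹ ∈ Subgroup.centralizer ({σ} : Set G) := by
        rw [Subgroup.mem_centralizer_singleton_iff]
        have h := hc ν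
        change g⁻¹ * σ * g = _ at h
        have h3 : σ = g * ((c ν)⁻¹ * σ * c ν) * g⁻¹ := by rw [← h]; simp [mul_assoc]
        conv_rhs => rw [h3]
        simp [mul_assoc]
      exact ⟨⟨ν, ⟨_, hx⟩⟩, Subtype.ext (by simp)⟩
  rw [← h1, h2]

/-! ### Arithmetic of `q` -/

theorem qval_cases {n : ℕ} (hn : 1 ≤ n) : qval n = 4 ∨ 16 ≤ qval n := by
  rcases hn.eq_or_lt with rfl | h
  · left; norm_num [qval]
  · right
    calc 16 = 2 ^ 2 ^ 2 := by norm_num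
      _ ≤ 2 ^ 2 ^ n := Nat.pow_le_pow_right (by norm_num) (Nat.pow_le_pow_right (by norm_num) h)

theorem qval_mod_three {n : ℕ} (hn : 1 ≤ n) : qval n % 3 = 1 := by
  obtain ⟨k, rfl⟩ : ∃ k, n = k + 1 := ⟨n - 1, by omega⟩
  rw [qval, pow_succ, mul_comm, pow_mul, Nat.pow_mod]; norm_num

theorem four_dvd_qval {n : ℕ} (hn : 1 ≤ n) : 4 ∣ qval n := by
  obtain ⟨k, rfl⟩ : ∃ k, n = k + 1 := ⟨n - 1, by omega⟩
  rw [qval, pow_succ, mul_comm, pow_mul]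
  exact dvd_pow_self _ (by positivity)

theorem four_le_qval {n : ℕ} (hn : 1 ≤ n) : 4 ≤ qval n := by
  rcases qval_cases hn with h | h <;> omega

/-- If `1 + b Q²` divides `(q-1)(q²-q+1)/3`, where `Q = q + 1`, then `b = 0`. -/
theorem arith_triangle (q b c : ℕ) (hq : 4 ≤ q) (h3 : q % 3 = 1)
    (h : 3 * (1 + b * (q + 1) ^ 2) * c = (q - 1) * (q ^ 2 - q + 1)) : b = 0 := by
  obtain ⟨p, rfl⟩ : ∃ p, q = p + 1 := ⟨q - 1, by omega⟩
  have e : (p + 1) ^ 2 - (p + 1) = p ^ 2 + p := by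
    have : (p + 1) ^ 2 = p ^ 2 + p + (p + 1) := by ring
    omega
  rw [e, Nat.add_sub_cancel] at h
  by_contra hb
  have hb1 : 1 ≤ b := Nat.one_le_iff_ne_zero.2 hb
  have h' : (3 * (1 + b * (p + 2) ^ 2) * c : ℤ) = p * (p ^ 2 + p + 1) := by
    exact_mod_cast h
  have hdvd : ((p : ℤ) + 2) ^ 2 ∣ 3 * ((c : ℤ) - (3 * p + 4)) := by
    refine ⟨(p : ℤ) - 3 - 3 * b * c, ?_⟩
    linear_combination h'
  have hcop : IsCoprime (((p : ℤ) + 2) ^ 2) 3 := by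
    refine IsCoprime.pow_left ?_
    refine ⟨2, -(2 * (p / 3 : ℤ) + 1), ?_⟩
    omega
  have hd := hcop.dvd_of_dvd_mul_left hdvd
  have hc : 3 * (p : ℤ) + 4 ≤ c := by
    by_contra hlt
    push Not at hlt
    have hle := Int.le_of_dvd (a := ((p : ℤ) + 2) ^ 2) (b := 3 * p + 4 - c) (by linarith)
      (by rw [← dvd_neg]; convert hd using 1; ring)
    have hp : (3 : ℤ) ≤ p := by exact_mod_cast (by omega : 3 ≤ p)
    have : (0 : ℤ) ≤ c := by positivity
    nlinarith
  have hb' : (1 : ℤ) ≤ b := by exact_mod_cast hb1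
  have hp : (3 : ℤ) ≤ p := by exact_mod_cast (by omega : 3 ≤ p)
  have h1 : (1 + (p + 2) ^ 2 : ℤ) ≤ 1 + b * (p + 2) ^ 2 := by nlinarith [sq_nonneg ((p : ℤ) + 2)]
  have h2 : 3 * (1 + (p + 2) ^ 2 : ℤ) * (3 * p + 4) ≤ 3 * (1 + b * (p + 2) ^ 2) * c := by
    have : (0 : ℤ) ≤ 1 + (p + 2) ^ 2 := by positivity
    nlinarith
  nlinarith

theorem m_cast {q : ℕ} : ((q ^ 2 - q + 1 : ℕ) : ℤ) = (q : ℤ) ^ 2 - q + 1 := by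
  have : q ≤ q ^ 2 := Nat.le_self_pow (by norm_num) q
  push_cast [Nat.cast_sub this]; ring

theorem coprime_three_m {q : ℕ} (h3 : q % 3 = 1) : IsCoprime ((q : ℤ) ^ 2 - q + 1) 3 := by
  have h : (q ^ 2 - q : ℤ) % 3 = 0 := by
    have h1 : (q : ℤ) % 3 = 1 := by exact_mod_cast h3
    have h2 : (q ^ 2 - q : ℤ) = q * (q - 1) := by ring
    rw [h2, Int.mul_emod, Int.sub_emod, h1]; norm_num
  refine ⟨1, -((q ^ 2 - q) / 3 : ℤ), ?_⟩
  omega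

/-- The complementary index `j` is `1` modulo `m = q² - q + 1`, because
`q³ (q+1)² (q-1) ≡ 3` modulo `m` and 3 is invertible modulo `m`. -/
theorem arith_singer_index (q k j : ℕ) (h3 : q % 3 = 1) (hq : 1 ≤ q)
    (h : 3 * (1 + k * (q ^ 2 - q + 1)) * j = q ^ 3 * (q + 1) ^ 2 * (q - 1)) :
    ((q : ℤ) ^ 2 - q + 1) ∣ (j : ℤ) - 1 := by
  have h' : (3 * (1 + k * ((q : ℤ) ^ 2 - q + 1)) * j : ℤ) = q ^ 3 * (q + 1) ^ 2 * (q - 1) := by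
    rw [← m_cast]
    have := congrArg (Nat.cast : ℕ → ℤ) h
    push_cast [Nat.cast_sub hq] at this ⊢
    exact this
  refine (coprime_three_m h3).dvd_of_dvd_mul_left ?_
  refine ⟨-3 * k * j + q ^ 4 + 2 * q ^ 3 - 3 * q - 3, ?_⟩
  linear_combination h'

/-- The possible indices `1 + k m` of a Singer normalizer, `m = q² - q + 1`, in an overgroup. -/
theorem arith_singer (q k j : ℕ) (hq : q = 4 ∨ 16 ≤ q) (h3 : q % 3 = 1) (hj : 0 < j)
    (h : 3 * (1 + k * (q ^ 2 - q + 1)) * j = q ^ 3 * (q + 1) ^ 2 * (q - 1)) :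
    k = 0 ∨ j = 1 ∨ (q = 4 ∧ k = 3) := by
  have hq1 : 1 ≤ q := by omega
  obtain ⟨l, hl⟩ := arith_singer_index q k j h3 hq1 h
  have h' : (3 * (1 + k * ((q : ℤ) ^ 2 - q + 1)) * j : ℤ) = q ^ 3 * (q + 1) ^ 2 * (q - 1) := by
    rw [← m_cast]
    have := congrArg (Nat.cast : ℕ → ℤ) h
    push_cast [Nat.cast_sub hq1] at this ⊢
    exact this
  have hq4 : (4 : ℤ) ≤ q := by exact_mod_cast (by omega : 4 ≤ q)
  have hm : (0 : ℤ) < (q : ℤ) ^ 2 - q + 1 := by nlinarith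
  by_contra hcon
  push Not at hcon
  obtain ⟨hk, hj1, hq'⟩ := hcon
  have hk1 : (1 : ℤ) ≤ k := by exact_mod_cast Nat.one_le_iff_ne_zero.2 hk
  have hl1 : 1 ≤ l := by
    have : (1 : ℤ) < j := by exact_mod_cast (by omega : 1 < j)
    have : 0 < ((q : ℤ) ^ 2 - q + 1) * l := by linarith
    exact pos_of_mul_pos_right this hm.le
  have hje : (j : ℤ) = 1 + l * ((q : ℤ) ^ 2 - q + 1) := by linarith
  rw [hje] at h'
  obtain ⟨t, ht⟩ : ∃ t : ℤ, t = q ^ 2 + 3 * q + 2 - 3 * k * l := ⟨_, rfl⟩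
  have key : 3 * (k + l) = ((q : ℤ) ^ 2 - q + 1) * t - 4 * q - 5 := by
    apply mul_left_cancel₀ hm.ne'
    rw [ht]
    linear_combination h'
  have htpos : 1 ≤ t := by
    by_contra hlt
    have : t ≤ 0 := by omega
    nlinarith
  have ht3 : t % 3 = 0 := by
    have h1 : (q : ℤ) % 3 = 1 := by exact_mod_cast h3
    have : (q : ℤ) ^ 2 % 3 = 1 := by rw [pow_two, Int.mul_emod, h1]; norm_num
    rw [ht, mul_assoc]; omega
  have ht3' : 3 ≤ t := by omega
  have hkl : (k : ℤ) + l ≤ k * l + 1 := by nlinarith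
  have hA : ((q : ℤ) ^ 2 - q + 1) * 3 ≤ ((q : ℤ) ^ 2 - q + 1) * t :=
    mul_le_mul_of_nonneg_left ht3' hm.le
  rcases hq with rfl | hq
  · have hk3 := hq' rfl
    push_cast at *
    have ht4 : t < 6 := by nlinarith
    have : t = 3 := by omega
    subst this
    have h1 : (k : ℤ) + l = 6 := by linarith
    have h2 : (k : ℤ) * l = 9 := by linarith
    have h4 : ((k : ℤ) - 3) ^ 2 = 0 := by
      have : l = 6 - k := by linarith
      rw [this] at h2; linarith
    have := pow_eq_zero_iff (two_ne_zero) |>.1 h4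
    apply hk3
    have : (k : ℤ) = 3 := by linarith
    exact_mod_cast this
  · have : (16 : ℤ) ≤ q := by exact_mod_cast hq
    nlinarith

/-! ### Groups of order 1560 -/

/-- Distinct Sylow `p`-subgroups of order `p` meet trivially, so each contributes `p - 1` elements of
order `p`. -/
theorem card_mul_le_card_order {G : Type*} [Group G] [Finite G] (p : ℕ) [Fact p.Prime]
    (h : ∀ P : Sylow p G, Nat.card P.1 = p) :
    Nat.card (Sylow p G) * (p - 1) ≤ Nat.card {x : G // orderOf x = p} := by
  have hp : p.Prime := Fact.out
  have hcard : ∀ P : Sylow p G, Nat.card {y : P // y ≠ 1} = p - 1 := by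
    intro P
    have := Fintype.ofFinite P
    rw [Nat.card_eq_fintype_card, Fintype.card_subtype_compl, Fintype.card_subtype_eq,
      ← Nat.card_eq_fintype_card]
    exact congrArg (· - 1) (h P)
  have : Fintype (Sylow p G) := Fintype.ofFinite _
  have hs : Nat.card (Sylow p G) * (p - 1) = Nat.card (Σ P : Sylow p G, {y : P // y ≠ 1}) := by
    rw [Nat.card_sigma, Finset.sum_congr rfl (fun P _ => hcard P)]
    simp
  have hord : ∀ (P : Sylow p G) (y : P), y ≠ 1 → orderOf (y : G) = p := by
    intro P y hy
    have h1 : orderOf y ∣ p := by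
      have := orderOf_dvd_natCard y
      have h2 : Nat.card P = p := h P
      exact this.trans h2.dvd
    rw [Subgroup.orderOf_coe]
    rcases (Nat.dvd_prime hp).1 h1 with h2 | h2
    · exact absurd (orderOf_eq_one_iff.1 h2) hy
    · exact h2
  have hz : ∀ (P : Sylow p G) (y : P), y ≠ 1 → Subgroup.zpowers (y : G) = P := by
    intro P y hy
    refine Subgroup.eq_of_le_of_card_ge ?_ ?_
    · rw [Subgroup.zpowers_le]; exact y.2
    · rw [Nat.card_zpowers, hord P y hy]; exact (h P).le
  rw [hs]
  refine Nat.card_le_card_of_injective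
    (fun z => (⟨z.2.1, hord z.1 z.2.1 z.2.2⟩ : {x : G // orderOf x = p})) ?_
  rintro ⟨P, y, hy⟩ ⟨Q, y', hy'⟩ heq
  have heq := congrArg Subtype.val heq
  change (y : G) = y' at heq
  have hPQ : P = Q := Sylow.ext (by rw [← hz P y hy, ← hz Q y' hy', heq])
  subst hPQ
  obtain rfl : y = y' := Subtype.ext heq
  rfl

/-- The automorphism group of `F` has order 4, so `C` would centralize `F`, which forces `F ≤ C`. -/
theorem five_not_normalized {G : Type*} [Group G] [Finite G] (C F : Subgroup G)
    (hC : Nat.card C = 13) (hF : Nat.card F = 5)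
    (hCc : ∀ c ∈ C, c ≠ 1 → ∀ g, g * c = c * g → g ∈ C)
    (hn : C ≤ Subgroup.normalizer (F : Set G)) : False := by
  have : Fact (Nat.Prime 5) := ⟨by norm_num⟩
  have hcyc : IsCyclic F := isCyclic_of_prime_card hF
  have hA : Nat.card (MulAut F) = 4 := by
    rw [IsCyclic.card_mulAut, hF]; decide
  obtain ⟨c, hc1⟩ : ∃ c : C, c ≠ 1 := by
    have : Nontrivial C := Finite.one_lt_card_iff_nontrivial.1 (by rw [hC]; norm_num)
    exact exists_ne 1
  let f := F.normalizerMonoidHom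
  let c' : Subgroup.normalizer (F : Set G) := ⟨c, hn c.2⟩
  have h1 : f c' ∈ (⊥ : Subgroup (MulAut F)) := by
    refine mem_of_pow_mem_of_coprime ⊥ _ (a := 13) (b := 4) (by norm_num) ?_ ?_
    · rw [Subgroup.mem_bot, ← map_pow]
      have : c' ^ 13 = 1 := by
        apply Subtype.ext
        change (c : G) ^ 13 = 1
        have : c ^ 13 = 1 := hC ▸ pow_card_eq_one'
        exact_mod_cast congrArg Subtype.val this
      rw [this, map_one]
    · rw [Subgroup.mem_bot, ← hA]; exact pow_card_eq_one'
  have h2 : c' ∈ f.ker := h1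
  rw [Subgroup.normalizerMonoidHom_ker] at h2
  have h3 : (c : G) ∈ Subgroup.centralizer (F : Set G) := h2
  rw [Subgroup.mem_centralizer_iff] at h3
  have h4 : F ≤ C := fun y hy => hCc c c.2 (fun h => hc1 (Subtype.ext h)) y (h3 y hy)
  have := Subgroup.card_dvd_of_le h4
  rw [hF, hC] at this
  norm_num at this

theorem sylow_of_card {G : Type*} [Group G] [Finite G] (p k : ℕ) [Fact p.Prime]
    (P : Subgroup G) (hP : Nat.card P = p) (hG : Nat.card G = p * k) (hk : ¬ p ∣ k) :
    (∀ Q : Sylow p G, Nat.card Q.1 = p) ∧ Nat.card (Sylow p G) ≡ 1 [MOD p] ∧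
      Nat.card (Subgroup.normalizer (P : Set G)) * Nat.card (Sylow p G) = Nat.card G ∧
      ∃ Q : Sylow p G, Q.1 = P := by
  have hp : p.Prime := Fact.out
  have hm : (Nat.card G).factorization p = 1 := by
    have : k ≠ 0 := by rintro rfl; simp at hk
    rw [hG, Nat.factorization_mul hp.ne_zero this]
    simp [hp.factorization, Nat.factorization_eq_zero_of_not_dvd hk]
  have hQ : ∀ Q : Sylow p G, Nat.card Q = p := by
    intro Q
    rw [Q.card_eq_multiplicity, hm, pow_one]
  let Q := Sylow.ofCard P (by rw [hm, pow_one, hP])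
  refine ⟨hQ, card_sylow_modEq_one p G, ?_, Q, rfl⟩
  rw [Sylow.card_eq_index_normalizer Q]
  exact Subgroup.card_mul_index _

/-- No group of order 1560 has the local structure that an overgroup of the Singer normalizer
would have in `SU(3,4)`. There are 480 elements of order 13, and the number of Sylow 5-subgroups is a
multiple of 13. By Sylow's congruence `|N(P)|` is 3 or 30. If it is 3, the 1040 elements of order 3
leave too little room for the elements of order 5. If it is 30, the subgroup of order 5 of `C(P)` has
a normalizer of order 60 in which `N(P)` has index 2; the latter is normal there, hence so is `P`,
a contradiction. -/
theorem no_1560 {G : Type*} [Group G] [Finite G] (hG : Nat.card G = 1560) (C P : Subgroup G)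
    (hC : Nat.card C = 13) (hCn : Nat.card (Subgroup.normalizer (C : Set G)) = 39)
    (hCc : ∀ c ∈ C, c ≠ 1 → ∀ g, g * c = c * g → g ∈ C)
    (hP : Nat.card P = 3) (hd : Nat.card (Subgroup.normalizer (P : Set G)) ∣ 30)
    (hcent : Nat.card (Subgroup.normalizer (P : Set G)) = 30 →
      Nat.card (Subgroup.centralizer (P : Set G)) = 15 ∧
      ∀ x ∈ Subgroup.centralizer (P : Set G), ∀ y ∈ Subgroup.centralizer (P : Set G),
        x * y = y * x) : False := by
  have : Fact (Nat.Prime 5) := ⟨by norm_num⟩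
  have : Fact (Nat.Prime 3) := ⟨by norm_num⟩
  have : Fact (Nat.Prime 13) := ⟨by norm_num⟩
  obtain ⟨h13a, h13b, h13c, -⟩ := sylow_of_card 13 120 C hC (by rw [hG]) (by norm_num)
  obtain ⟨h3a, h3b, h3c, -⟩ := sylow_of_card 3 520 P hP (by rw [hG]) (by norm_num)
  rw [hG] at h13c h3c
  rw [hCn] at h13c
  have n13 : Nat.card (Sylow 13 G) = 40 := by omega
  -- a Sylow 5-subgroup normalized by `C` is impossible
  have hS5 : ¬ (∃ F : Sylow 5 G, C ≤ Subgroup.normalizer (F : Set G)) := by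
    rintro ⟨F, hF⟩
    refine five_not_normalized C F hC ?_ hCc hF
    rw [F.card_eq_multiplicity, hG]
    have : (1560 : ℕ).factorization 5 = 1 := by
      rw [show 1560 = 5 * 312 by norm_num, Nat.factorization_mul (by norm_num) (by norm_num)]
      simp [(by norm_num : Nat.Prime 5).factorization,
        Nat.factorization_eq_zero_of_not_dvd (by norm_num : ¬ 5 ∣ 312)]
    rw [this, pow_one]
  have hS5' : 13 ∣ Nat.card (Sylow 5 G) := by
    by_contra hnd
    have hpg : IsPGroup 13 C := IsPGroup.of_card (n := 1) (by rw [hC, pow_one])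
    have := Fintype.ofFinite (Sylow 5 G)
    obtain ⟨F, hF⟩ := hpg.nonempty_fixed_point_of_prime_not_dvd_card (Sylow 5 G) hnd
    refine hS5 ⟨F, fun c hc => ?_⟩
    have := hF ⟨c, hc⟩
    exact Sylow.smul_eq_iff_mem_normalizer.1 this
  obtain ⟨F0, hF0⟩ := exists_prime_orderOf_dvd_card' (G := G) 5 (by rw [hG]; norm_num)
  obtain ⟨h5a, h5b, h5c, -⟩ := sylow_of_card 5 312 (Subgroup.zpowers F0)
    (by rw [Nat.card_zpowers, hF0]) (by rw [hG]) (by norm_num)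
  have hdd : Nat.card (Subgroup.normalizer (P : Set G)) = 3 ∨
      Nat.card (Subgroup.normalizer (P : Set G)) = 30 := by
    have h1 : 3 ∣ Nat.card (Subgroup.normalizer (P : Set G)) := by
      rw [← hP]; exact Subgroup.card_dvd_of_le Subgroup.le_normalizer
    generalize Nat.card (Subgroup.normalizer (P : Set G)) = d at *
    obtain ⟨e, rfl⟩ := h1
    have : e ∣ 10 := by
      obtain ⟨f, hf⟩ := hd
      exact ⟨f, by linarith⟩
    have he : e ∈ Nat.divisors 10 := Nat.mem_divisors.2 ⟨this, by norm_num⟩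
    have h10 : Nat.divisors 10 = {1, 2, 5, 10} := by decide
    rw [h10] at he
    simp only [Finset.mem_insert, Finset.mem_singleton] at he
    unfold Nat.ModEq at h3b
    rcases he with rfl | rfl | rfl | rfl <;> omega
  rcases hdd with hd3 | hd30
  · -- 480 elements of order 13 and 1040 of order 3 leave too few elements of order 5
    rw [hd3] at h3c
    have n3 : Nat.card (Sylow 3 G) = 520 := by omega
    have e13 := card_mul_le_card_order 13 h13a
    have e3 := card_mul_le_card_order 3 h3a
    have e5 := card_mul_le_card_order 5 h5a
    rw [n13] at e13
    rw [n3] at e3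
    have := Fintype.ofFinite G
    have hcnt : ∀ p : ℕ, Nat.card {x : G // orderOf x = p} =
        (Finset.univ.filter fun x : G => orderOf x = p).card := by
      intro p
      rw [Nat.card_eq_fintype_card, Fintype.card_subtype]
    rw [hcnt] at e13 e3 e5
    have hdis : (Finset.univ.filter fun x : G => orderOf x = 13).card +
        ((Finset.univ.filter fun x : G => orderOf x = 3).card +
        (Finset.univ.filter fun x : G => orderOf x = 5).card) ≤ Fintype.card G := by
      rw [← Finset.card_union_of_disjoint, ← Finset.card_union_of_disjoint]
      · exact Finset.card_le_univ _
      · rw [Finset.disjoint_union_right]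
        constructor <;> (rw [Finset.disjoint_filter]; intro x _ h; rw [h]; norm_num)
      · rw [Finset.disjoint_filter]; intro x _ h; rw [h]; norm_num
    rw [← Nat.card_eq_fintype_card, hG] at hdis
    have h0 : 0 < Nat.card (Sylow 5 G) := Nat.card_pos
    obtain ⟨c, hc⟩ := hS5'
    omega
  · obtain ⟨hc15, hcab⟩ := hcent hd30
    set D := Subgroup.normalizer (P : Set G) with hD
    set Z := Subgroup.centralizer (P : Set G) with hZ
    have hPZ : P ≤ Z := by
      have : Fact (Nat.Prime (Nat.card P)) := ⟨by rw [hP]; norm_num⟩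
      have : IsCyclic P := isCyclic_of_prime_card rfl
      intro x hx
      rw [hZ, Subgroup.mem_centralizer_iff]
      intro y hy
      exact congrArg Subtype.val (IsCyclic.isMulCommutative.is_comm.comm (⟨y, hy⟩ : P) ⟨x, hx⟩)
    have hZD : Z ≤ D := Subgroup.centralizer_le_normalizer _
    have hDZ : D ≤ Subgroup.normalizer (Z : Set G) :=
      (Subgroup.normal_subgroupOf_iff_le_normalizer hZD).1 inferInstance
    have hZP : Z ≤ Subgroup.normalizer (P : Set G) := hZD
    have rPZ : P.relIndex Z = 5 := by
      have := card_mul_relIndex hPZ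
      rw [hP, hc15] at this; omega
    have rZD : Z.relIndex D = 2 := by
      have := card_mul_relIndex hZD
      rw [hc15, hd30] at this; omega
    have hP3 : ∀ y ∈ D, y ^ 3 = 1 → y ∈ P := by
      intro y hy h
      have : y ∈ Z := mem_of_pow_eq_one hDZ hy (k := 3) (by rw [rZD]; norm_num) h
      exact mem_of_pow_eq_one hZP this (k := 3) (by rw [rPZ]; norm_num) h
    obtain ⟨f, hf⟩ := exists_prime_orderOf_dvd_card' (G := Z) 5 (by rw [hc15]; norm_num)
    rw [← Subgroup.orderOf_coe] at hf
    set F := Subgroup.zpowers (f : G) with hFdef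
    have hFc : Nat.card F = 5 := by rw [Nat.card_zpowers, hf]
    have hFZ : F ≤ Z := by rw [hFdef, Subgroup.zpowers_le]; exact f.2
    have rFZ : F.relIndex Z = 3 := by
      have := card_mul_relIndex hFZ
      rw [hFc, hc15] at this; omega
    have pow_of_mem : ∀ (A : Subgroup G) (k : ℕ), Nat.card A = k → ∀ y ∈ A, y ^ k = 1 := by
      intro A k hk y hy
      rw [← hk]
      exact orderOf_dvd_iff_pow_eq_one.1 (Subgroup.orderOf_dvd_natCard _ hy)
    have hZF : Z ≤ Subgroup.normalizer (F : Set G) := by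
      intro z hz
      rw [Subgroup.mem_normalizer_iff]
      intro y
      constructor
      · intro hy
        rw [hcab z hz y (hFZ hy), mul_inv_cancel_right]; exact hy
      · intro hy
        have h1 := hcab z hz _ (hFZ hy)
        have : z * y * z⁻¹ = y := by
          have : z * (z * y * z⁻¹) = z * y := by rw [h1]; simp
          exact mul_left_cancel this
        rwa [this] at hy
    have hF5 : ∀ y ∈ Z, y ^ 5 = 1 → y ∈ F := fun y hy h =>
      mem_of_pow_eq_one hZF hy (k := 5) (by rw [rFZ]; norm_num) h
    have hDF : D ≤ Subgroup.normalizer (F : Set G) := by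
      have h1 : ∀ d ∈ D, ∀ y ∈ F, d * y * d⁻¹ ∈ F := by
        intro d hd y hy
        refine hF5 _ ((Subgroup.mem_normalizer_iff.1 (hDZ hd) y).1 (hFZ hy)) ?_
        rw [conj_pow, pow_of_mem F 5 hFc y hy]; simp
      intro d hd
      rw [Subgroup.mem_normalizer_iff]
      refine fun y => ⟨h1 d hd y, fun h => ?_⟩
      have := h1 _ (D.inv_mem hd) _ h
      simpa [mul_assoc] using this
    obtain ⟨-, g5b, g5c, Q, hQ⟩ := sylow_of_card 5 312 F hFc (by rw [hG]) (by norm_num)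
    have hN60 : Nat.card (Subgroup.normalizer (F : Set G)) = 60 := by
      have h1 : 30 ∣ Nat.card (Subgroup.normalizer (F : Set G)) := by
        rw [← hd30]; exact Subgroup.card_dvd_of_le hDF
      obtain ⟨e, he⟩ := h1
      rw [he, hG] at g5c
      obtain ⟨c, hc⟩ := hS5'
      rw [hc] at g5c g5b
      have hec : e * c = 4 := by linarith
      have : c ∣ 4 := ⟨e, by linarith⟩
      have hc4 : c ≤ 4 := Nat.le_of_dvd (by norm_num) this
      unfold Nat.ModEq at g5b
      interval_cases c <;> omega
    have r2 : D.relIndex (Subgroup.normalizer (F : Set G)) = 2 := by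
      have := card_mul_relIndex hDF
      rw [hd30, hN60] at this; omega
    have hnorm : (D.subgroupOf (Subgroup.normalizer (F : Set G))).Normal :=
      Subgroup.normal_of_index_eq_two r2
    have hle : Subgroup.normalizer (F : Set G) ≤ D := by
      have h1 : ∀ g ∈ Subgroup.normalizer (F : Set G), ∀ y ∈ P, g * y * g⁻¹ ∈ P := by
        intro g hg y hy
        have hyD : y ∈ D := hZD (hPZ hy)
        have := hnorm.conj_mem ⟨y, hDF hyD⟩ hyD ⟨g, hg⟩
        refine hP3 _ this ?_
        rw [conj_pow, pow_of_mem P 3 hP y hy]; simp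
      intro g hg
      rw [hD, Subgroup.mem_normalizer_iff]
      refine fun y => ⟨h1 g hg y, fun h => ?_⟩
      have := h1 _ (inv_mem hg) _ h
      simpa [mul_assoc] using this
    have := Subgroup.card_dvd_of_le hle
    rw [hd30, hN60] at this
    norm_num at this

/-! ### Involutions of finite fields of characteristic 2 -/

/-- A nontrivial involutive automorphism of a finite field of characteristic 2. -/
structure FieldInvolution (F : Type*) [Field F] where
  /-- the automorphism -/
  s : F →+* F
  invol : ∀ x, s (s x) = x
  nontriv : ∃ x, s x ≠ x

theorem char_two_add_eq {F : Type*} [Field F] [CharP F 2] {x y c : F} (h : x + y = c) :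
    y = c + x := by
  rw [← h, add_comm x, add_assoc, CharTwo.add_self_eq_zero, add_zero]

namespace FieldInvolution
variable {F : Type*} [Field F] [CharP F 2] (S : FieldInvolution F)

theorem trace_surj (c : F) (hc : S.s c = c) : ∃ x, x + S.s x = c := by
  obtain ⟨y, hy⟩ := S.nontriv
  have h0 : y + S.s y ≠ 0 := fun h => hy (CharTwo.add_eq_zero.1 h).symm
  refine ⟨y * (c / (y + S.s y)), ?_⟩
  rw [map_mul, map_div₀, map_add, S.invol, hc, add_comm (S.s y), ← add_mul, mul_div_cancel₀ _ h0]

theorem hilbert90 (u : F) (hu : u * S.s u = 1) : ∃ y : F, y ≠ 0 ∧ y = u * S.s y := by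
  by_contra hcon
  push Not at hcon
  have h : ∀ z, z + u * S.s z = 0 := by
    intro z
    by_contra h0
    apply hcon _ h0
    rw [map_add, map_mul, S.invol, mul_add, ← mul_assoc, hu, one_mul, add_comm]
  have h1 := h 1
  rw [map_one, mul_one, CharTwo.add_eq_zero] at h1
  obtain ⟨y, hy⟩ := S.nontriv
  have := h y
  rw [← h1, one_mul, CharTwo.add_eq_zero] at this
  exact hy this.symm

variable [Finite F]

theorem card_fixed_sq : Nat.card {x : F // S.s x = x} ^ 2 = Nat.card F := by
  let f : F →+ F := AddMonoidHom.id F + S.s.toAddMonoidHom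
  have hf : ∀ x, f x = x + S.s x := fun x => rfl
  have h1 : Nat.card f.ker = Nat.card {x : F // S.s x = x} := by
    refine Nat.card_congr (Equiv.subtypeEquivRight fun x => ?_)
    rw [AddMonoidHom.mem_ker, hf, CharTwo.add_eq_zero, eq_comm]
  have h2 : Nat.card f.range = Nat.card {x : F // S.s x = x} := by
    refine Nat.card_congr (Equiv.subtypeEquivRight fun x => ?_)
    constructor
    · rintro ⟨y, rfl⟩
      rw [hf, map_add, S.invol, add_comm]
    · intro h
      obtain ⟨y, hy⟩ := S.trace_surj x h
      exact ⟨y, hy⟩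
  have := f.ker.card_mul_index
  rw [AddSubgroup.index_ker, h1, h2] at this
  rw [sq, this]

theorem card_fixed {q : ℕ} (hq : Nat.card F = q ^ 2) : Nat.card {x : F // S.s x = x} = q := by
  have := S.card_fixed_sq
  rw [hq] at this
  exact Nat.pow_left_injective (n := 2) (by norm_num) this

theorem card_fixed_units {q : ℕ} (hq : Nat.card F = q ^ 2) :
    Nat.card {x : Fˣ // S.s x = x} = q - 1 := by
  have := Fintype.ofFinite F
  have h : Nat.card {x : Fˣ // S.s x = x} = Nat.card {y : {x : F // S.s x = x} // y ≠ ⟨0, map_zero _⟩} := by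
    refine Nat.card_congr ⟨fun x => ⟨⟨x.1, x.2⟩, fun h => x.1.ne_zero (congrArg Subtype.val h)⟩,
      fun y => ⟨Units.mk0 y.1.1 fun h => y.2 (Subtype.ext h), y.1.2⟩, ?_, ?_⟩
    · intro x; exact Subtype.ext (Units.ext rfl)
    · intro x; rfl
  rw [h, Nat.card_eq_fintype_card, Fintype.card_subtype_compl, Fintype.card_subtype_eq,
    ← Nat.card_eq_fintype_card, S.card_fixed hq]

theorem card_units_norm_one {q : ℕ} (hq : Nat.card F = q ^ 2) (hq1 : 1 < q) :
    Nat.card {x : Fˣ // x.1 * S.s x = 1} = q + 1 := by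
  let f : Fˣ →* Fˣ := MonoidHom.id Fˣ / Units.map (S.s : F →* F)
  have hf : ∀ x, ((f x : Fˣ) : F) = x / S.s x := fun x => by
    simp [f, Units.val_div_eq_div_val]
  have hs0 : ∀ x : Fˣ, S.s (x : F) ≠ 0 := fun x => by simp
  have h1 : Nat.card f.ker = q - 1 := by
    rw [← S.card_fixed_units hq]
    refine Nat.card_congr (Equiv.subtypeEquivRight fun x => ?_)
    rw [MonoidHom.mem_ker, Units.ext_iff, hf, Units.val_one, div_eq_one_iff_eq (hs0 x), eq_comm]
  have h2 : Nat.card f.range = Nat.card {x : Fˣ // x.1 * S.s x = 1} := by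
    refine Nat.card_congr (Equiv.subtypeEquivRight fun x => ?_)
    constructor
    · rintro ⟨y, rfl⟩
      have := hs0 y
      have := y.ne_zero
      rw [hf, map_div₀, S.invol]
      field_simp
    · intro h
      obtain ⟨y, hy0, hy⟩ := S.hilbert90 x h
      refine ⟨Units.mk0 y hy0, Units.ext ?_⟩
      rw [hf, Units.val_mk0, div_eq_iff (by simpa using hy0), ← hy]
  have := f.ker.card_mul_index
  have hFc := Nat.card_units F
  rw [Subgroup.index_ker, h1, h2, hFc, hq] at this
  obtain ⟨p, rfl⟩ : ∃ p, q = p + 2 := ⟨q - 2, by omega⟩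
  have e : (p + 2) ^ 2 - 1 = (p + 2 - 1) * (p + 2 + 1) := by
    have : (p + 2) ^ 2 = (p + 1) * (p + 3) + 1 := by ring
    rw [this]; rfl
  rw [e] at this
  exact Nat.eq_of_mul_eq_mul_left (by omega) this

theorem norm_surj {q : ℕ} (hq : Nat.card F = q ^ 2) (hq1 : 1 < q) (c : F) (hc : S.s c = c) :
    ∃ x, x * S.s x = c := by
  by_cases hc0 : c = 0
  · exact ⟨0, by simp [hc0]⟩
  let f : Fˣ →* Fˣ := MonoidHom.id Fˣ * Units.map (S.s : F →* F)
  have hf : ∀ x, ((f x : Fˣ) : F) = x * S.s x := fun x => rfl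
  have h1 : Nat.card f.ker = q + 1 := by
    rw [← S.card_units_norm_one hq hq1]
    refine Nat.card_congr (Equiv.subtypeEquivRight fun x => ?_)
    rw [MonoidHom.mem_ker, Units.ext_iff, hf, Units.val_one]
  let A : Subgroup Fˣ :=
    { carrier := {x | S.s x = x}
      one_mem' := by simp
      mul_mem' := fun {a b} ha hb => by
        change S.s ((a * b : Fˣ) : F) = _
        rw [Units.val_mul, map_mul, ha, hb]
      inv_mem' := fun {a} ha => by
        change S.s ((a⁻¹ : Fˣ) : F) = _
        rw [Units.val_inv_eq_inv_val, map_inv₀, ha] }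
  have hA : Nat.card A = q - 1 := S.card_fixed_units hq
  have hle : f.range ≤ A := by
    rintro _ ⟨y, rfl⟩
    change S.s (f y : F) = _
    rw [hf, map_mul, S.invol, mul_comm]
  have h2 : Nat.card f.range = q - 1 := by
    have := f.ker.card_mul_index
    have hFc := Nat.card_units F
    rw [Subgroup.index_ker, h1, hFc, hq] at this
    obtain ⟨p, rfl⟩ : ∃ p, q = p + 2 := ⟨q - 2, by omega⟩
    have e : (p + 2) ^ 2 - 1 = (p + 2 + 1) * (p + 2 - 1) := by
      have : (p + 2) ^ 2 = (p + 3) * (p + 1) + 1 := by ring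
      rw [this]; rfl
    rw [e] at this
    exact Nat.eq_of_mul_eq_mul_left (by omega) this
  have heq : f.range = A := Subgroup.eq_of_le_of_card_ge hle (by rw [hA, h2])
  have : Units.mk0 c hc0 ∈ f.range := by rw [heq]; exact hc
  obtain ⟨y, hy⟩ := this
  exact ⟨y, by rw [← hf, hy]; rfl⟩

theorem card_norm_eq {q : ℕ} (hq : Nat.card F = q ^ 2) (hq1 : 1 < q) (c : F) (hc : S.s c = c) :
    Nat.card {x : F // x * S.s x = c} = if c = 0 then 1 else q + 1 := by
  split_ifs with hc0
  · subst hc0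
    rw [Nat.card_eq_one_iff_exists]
    refine ⟨⟨0, by simp⟩, fun x => Subtype.ext ?_⟩
    have := x.2
    simpa using this
  · obtain ⟨y, hy⟩ := S.norm_surj hq hq1 c hc
    have hy0 : y ≠ 0 := by rintro rfl; apply hc0; rw [← hy]; simp
    have hsy0 : S.s y ≠ 0 := by simpa using hy0
    rw [← S.card_units_norm_one hq hq1]
    refine Nat.card_congr ⟨fun x => ⟨Units.mk0 (x.1 / y) ?_, ?_⟩, fun u => ⟨u.1 * y, ?_⟩, ?_, ?_⟩
    · refine div_ne_zero ?_ hy0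
      intro h
      apply hc0; rw [← x.2, h]; simp
    · change (x.1 / y) * S.s (x.1 / y) = 1
      have := x.2
      rw [map_div₀, div_mul_div_comm, this, hy, div_self hc0]
    · have := u.2
      rw [map_mul, mul_mul_mul_comm, this, hy, one_mul]
    · intro x; exact Subtype.ext (div_mul_cancel₀ _ hy0)
    · intro u; exact Subtype.ext (Units.ext (mul_div_cancel_right₀ _ hy0))

/-- Number of isotropic vectors (`c = 0`) or vectors of a given nonzero length in dimension 2. -/
theorem card_norm_two {q : ℕ} (hq : Nat.card F = q ^ 2) (hq1 : 1 < q) (c : F) (hc : S.s c = c) :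
    Nat.card {p : F × F // p.1 * S.s p.1 + p.2 * S.s p.2 = c} =
      if c = 0 then q ^ 3 + q ^ 2 - q else (q + 1) * (q ^ 2 - q) := by
  have := Fintype.ofFinite F
  have e : {p : F × F // p.1 * S.s p.1 + p.2 * S.s p.2 = c} ≃
      Σ a : F, {b : F // b * S.s b = c + a * S.s a} :=
    ⟨fun p => ⟨p.1.1, p.1.2, char_two_add_eq p.2⟩,
      fun p => ⟨(p.1, p.2.1), by
        rw [p.2.2, add_comm, add_assoc, CharTwo.add_self_eq_zero, add_zero]⟩,
      fun p => rfl, fun p => rfl⟩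
  have hfix : ∀ a : F, S.s (c + a * S.s a) = c + a * S.s a := by
    intro a
    rw [map_add, map_mul, S.invol, hc, mul_comm (S.s a)]
  have hs : ∀ a : F, Nat.card {b : F // b * S.s b = c + a * S.s a} =
      if a * S.s a = c then 1 else q + 1 := by
    intro a
    rw [S.card_norm_eq hq hq1 _ (hfix a)]
    exact if_congr (by rw [CharTwo.add_eq_zero, eq_comm]) rfl rfl
  rw [Nat.card_congr e, Nat.card_sigma, Finset.sum_congr rfl (fun a _ => hs a), Finset.sum_ite,
    Finset.sum_const, Finset.sum_const]
  have h1 : (Finset.univ.filter fun a : F => a * S.s a = c).card = if c = 0 then 1 else q + 1 := by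
    rw [← S.card_norm_eq hq hq1 c hc, Nat.card_eq_fintype_card, Fintype.card_subtype]
  have h2 := Finset.card_filter_add_card_filter_not (s := (Finset.univ : Finset F))
    (fun a : F => a * S.s a = c)
  rw [Finset.card_univ, ← Nat.card_eq_fintype_card, hq, h1] at h2
  rw [h1]
  generalize (Finset.univ.filter fun a : F => ¬ a * S.s a = c).card = z at *
  simp only [smul_eq_mul, mul_one]
  have hqq : q ≤ q ^ 2 := Nat.le_self_pow (by norm_num) q
  split_ifs at h2 ⊢ with h
  · have : (1 + z) * (q + 1) = q ^ 2 * (q + 1) := by rw [h2]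
    have e3 : q ^ 2 * (q + 1) = q ^ 3 + q ^ 2 := by ring
    rw [e3] at this
    have : 1 + z * (q + 1) + q = q ^ 3 + q ^ 2 := by rw [← this]; ring
    omega
  · have : q ^ 2 - q = z + 1 := by omega
    rw [this]; ring

theorem card_norm_three {q : ℕ} (hq : Nat.card F = q ^ 2) (hq1 : 1 < q) :
    Nat.card {p : F × F × F // p.1 * S.s p.1 + (p.2.1 * S.s p.2.1 + p.2.2 * S.s p.2.2) = 1} =
      q ^ 2 * (q ^ 3 + 1) := by
  have := Fintype.ofFinite F
  have e : {p : F × F × F // p.1 * S.s p.1 + (p.2.1 * S.s p.2.1 + p.2.2 * S.s p.2.2) = 1} ≃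
      Σ a : F, {p : F × F // p.1 * S.s p.1 + p.2 * S.s p.2 = 1 + a * S.s a} :=
    ⟨fun p => ⟨p.1.1, p.1.2, char_two_add_eq p.2⟩,
      fun p => ⟨(p.1, p.2.1), by
        rw [p.2.2, add_comm, add_assoc, CharTwo.add_self_eq_zero, add_zero]⟩,
      fun p => rfl, fun p => rfl⟩
  have hfix : ∀ a : F, S.s (1 + a * S.s a) = 1 + a * S.s a := by
    intro a
    rw [map_add, map_mul, S.invol, map_one, mul_comm (S.s a)]
  have hs : ∀ a : F, Nat.card {p : F × F // p.1 * S.s p.1 + p.2 * S.s p.2 = 1 + a * S.s a} =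
      if a * S.s a = 1 then q ^ 3 + q ^ 2 - q else (q + 1) * (q ^ 2 - q) := by
    intro a
    rw [S.card_norm_two hq hq1 _ (hfix a)]
    exact if_congr (by rw [CharTwo.add_eq_zero, eq_comm]) rfl rfl
  rw [Nat.card_congr e, Nat.card_sigma, Finset.sum_congr rfl (fun a _ => hs a), Finset.sum_ite,
    Finset.sum_const, Finset.sum_const]
  have h1 : (Finset.univ.filter fun a : F => a * S.s a = 1).card = q + 1 := by
    have := S.card_norm_eq hq hq1 1 (map_one _)
    rw [if_neg one_ne_zero] at this
    rw [← this, Nat.card_eq_fintype_card, Fintype.card_subtype]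
  have h2 := Finset.card_filter_add_card_filter_not (s := (Finset.univ : Finset F))
    (fun a : F => a * S.s a = 1)
  rw [Finset.card_univ, ← Nat.card_eq_fintype_card, hq, h1] at h2
  rw [h1]
  generalize (Finset.univ.filter fun a : F => ¬ a * S.s a = 1).card = z at *
  simp only [smul_eq_mul]
  obtain ⟨p, rfl⟩ : ∃ p, q = p + 1 := ⟨q - 1, by omega⟩
  have e1 : (p + 1) ^ 3 + (p + 1) ^ 2 - (p + 1) = (p + 1) ^ 3 + (p + 1) * p := by
    have : (p + 1) ^ 3 + (p + 1) ^ 2 = (p + 1) ^ 3 + (p + 1) * p + (p + 1) := by ring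
    omega
  have e2 : (p + 1) ^ 2 - (p + 1) = (p + 1) * p := by
    have : (p + 1) ^ 2 = (p + 1) * p + (p + 1) := by ring
    omega
  rw [e1, e2]
  zify at h2 ⊢
  have : (z : ℤ) = (p + 1) ^ 2 - (p + 1 + 1) := by linarith
  rw [this]; ring

end FieldInvolution

/-! ### The field `F_{q²}` and the matrices of `SU(3,q)` -/

theorem card_Fq2 (n : ℕ) : Nat.card (Fq2 n) = qval n ^ 2 := by
  rw [GaloisField.card 2 _ (by positivity), qval, ← pow_mul, pow_succ]

theorem star_eq_pow {n : ℕ} (x : Fq2 n) : star x = x ^ qval n := rfl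

/-- The involution `x ↦ x^q` of `F_{q²}`. -/
noncomputable def inv2 (n : ℕ) : FieldInvolution (Fq2 n) where
  s := starRingEnd (Fq2 n)
  invol x := star_star x
  nontriv := by
    by_contra hcon
    push Not at hcon
    let := Fintype.ofFinite (Fq2 n)
    obtain ⟨g, hg⟩ := IsCyclic.exists_generator (α := (Fq2 n)ˣ)
    have h1 : orderOf g = qval n ^ 2 - 1 := by
      rw [orderOf_eq_card_of_forall_mem_zpowers hg, Nat.card_units, card_Fq2]
    have h2 : g ^ (qval n - 1) = 1 := by
      have h3 : (g : Fq2 n) ^ qval n = g := hcon g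
      have h4 : qval n = (qval n - 1) + 1 := by
        have : 0 < qval n := by positivity
        omega
      rw [h4, pow_succ] at h3
      apply Units.ext
      have := mul_right_cancel₀ (b := (g : Fq2 n)) g.ne_zero (h3.trans (one_mul _).symm)
      rw [Units.val_pow_eq_pow_val, this, Units.val_one]
    have h2' := Nat.le_of_dvd (by
      have : 2 ^ 1 ≤ 2 ^ 2 ^ n := Nat.pow_le_pow_right (by norm_num) Nat.one_le_two_pow
      simp only [qval]; omega) (orderOf_dvd_of_pow_eq_one h2)
    rw [h1] at h2'
    have : 2 ≤ qval n := by
      have : 2 ^ 1 ≤ 2 ^ 2 ^ n := Nat.pow_le_pow_right (by norm_num) Nat.one_le_two_pow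
      simpa [qval] using this
    have : qval n * 2 ≤ qval n ^ 2 := by rw [sq]; exact Nat.mul_le_mul_left _ this
    omega

theorem inv2_s {n : ℕ} (x : Fq2 n) : (inv2 n).s x = star x := rfl

theorem one_lt_qval (n : ℕ) : 1 < qval n := Nat.one_lt_two_pow (by positivity)

/-- Elements of norm 1 have order dividing `q + 1`, hence prime to `3`. -/
theorem eq_one_of_cube {n : ℕ} (hn : 1 ≤ n) {x : Fq2 n} (h : x * star x = 1) (h3 : x ^ 3 = 1) :
    x = 1 := by
  rw [star_eq_pow, ← pow_succ'] at h
  have hc : Nat.Coprime (qval n + 1) 3 := by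
    rw [Nat.coprime_comm, Nat.Prime.coprime_iff_not_dvd Nat.prime_three]
    have := qval_mod_three hn
    omega
  have hx0 : x ≠ 0 := by rintro rfl; simp at h3
  have := mem_of_pow_mem_of_coprime (⊥ : Subgroup (Fq2 n)ˣ) (Units.mk0 x hx0) hc
    (Units.ext (by simpa using h)) (Units.ext (by simpa using h3))
  exact congrArg Units.val this

/-- Since `q ≡ 1` modulo 3, the primitive cube roots of unity are fixed by `x ↦ x^q`. -/
theorem exists_omega {n : ℕ} (hn : 1 ≤ n) :
    ∃ ω : Fq2 n, ω ^ 2 + ω + 1 = 0 ∧ star ω = ω ∧ ω ≠ 1 := by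
  have h3 : 3 ∣ Nat.card (Fq2 n)ˣ := by
    rw [Nat.card_units, card_Fq2]
    have h1 := qval_mod_three hn
    have h2 : qval n ^ 2 % 3 = 1 := by rw [Nat.pow_mod, h1]
    omega
  have : Fact (Nat.Prime 3) := ⟨Nat.prime_three⟩
  obtain ⟨w, hw⟩ := exists_prime_orderOf_dvd_card' (G := (Fq2 n)ˣ) 3 h3
  have hw3 : (w : Fq2 n) ^ 3 = 1 := by
    rw [← Units.val_pow_eq_pow_val, ← hw, pow_orderOf_eq_one, Units.val_one]
  have hw1 : (w : Fq2 n) ≠ 1 := by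
    intro h
    have : w = 1 := Units.ext h
    rw [this, orderOf_one] at hw
    norm_num at hw
  refine ⟨w, ?_, ?_, hw1⟩
  · have : ((w : Fq2 n) - 1) * ((w : Fq2 n) ^ 2 + w + 1) = 0 := by linear_combination hw3
    exact (mul_eq_zero.1 this).resolve_left (sub_ne_zero.2 hw1)
  · rw [star_eq_pow]
    obtain ⟨k, hk⟩ : ∃ k, qval n = 3 * k + 1 := ⟨qval n / 3, by have := qval_mod_three hn; omega⟩
    rw [hk, pow_add, pow_mul, hw3]; simp

/-- The matrix of an element of `SU(3,q)`. -/
noncomputable def mt {n : ℕ} (g : SU3 n) : Matrix (Fin 3) (Fin 3) (Fq2 n) := g.1.1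

/-- The element of `SU(3,q)` given by a unitary matrix of determinant 1. -/
noncomputable def mk3 {n : ℕ} (M : Matrix (Fin 3) (Fin 3) (Fq2 n)) (h : M * M.conjTranspose = 1)
    (hd : M.det = 1) : SU3 n :=
  ⟨⟨M, Matrix.mem_unitaryGroup_iff.2 h⟩, hd⟩

section basics
variable {n : ℕ}

theorem mt_mk3 (M : Matrix (Fin 3) (Fin 3) (Fq2 n)) (h : M * M.conjTranspose = 1)
    (hd : M.det = 1) : mt (mk3 M h hd) = M := rfl

theorem mt_injective : Function.Injective (mt (n := n)) := fun _ _ h =>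
  Subtype.ext (Subtype.ext h)

theorem mt_mul (g h : SU3 n) : mt (g * h) = mt g * mt h := rfl

theorem mt_one : mt (1 : SU3 n) = 1 := rfl

theorem mt_inv (g : SU3 n) : mt g⁻¹ = (mt g).conjTranspose := rfl

theorem mt_det (g : SU3 n) : (mt g).det = 1 := g.2

theorem mt_mul_ct (g : SU3 n) : mt g * (mt g).conjTranspose = 1 := by
  rw [← mt_inv, ← mt_mul, mul_inv_cancel, mt_one]

theorem ct_mul_mt (g : SU3 n) : (mt g).conjTranspose * mt g = 1 := by
  rw [← mt_inv, ← mt_mul, inv_mul_cancel, mt_one]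

theorem row_orth (g : SU3 n) (i k : Fin 3) :
    mt g i 0 * star (mt g k 0) + mt g i 1 * star (mt g k 1) + mt g i 2 * star (mt g k 2) =
      if i = k then 1 else 0 := by
  have := congrFun (congrFun (mt_mul_ct g) i) k
  rw [Matrix.mul_apply, Fin.sum_univ_three, Matrix.one_apply] at this
  exact this

theorem col_orth (g : SU3 n) (i k : Fin 3) :
    star (mt g 0 i) * mt g 0 k + star (mt g 1 i) * mt g 1 k + star (mt g 2 i) * mt g 2 k =
      if i = k then 1 else 0 := by
  have := congrFun (congrFun (ct_mul_mt g) i) k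
  rw [Matrix.mul_apply, Fin.sum_univ_three, Matrix.one_apply] at this
  exact this

theorem ct_eq_adjugate (g : SU3 n) : (mt g).conjTranspose = (mt g).adjugate := by
  have h := Matrix.mul_adjugate (mt g)
  rw [mt_det, one_smul] at h
  calc (mt g).conjTranspose = (mt g).conjTranspose * (mt g * (mt g).adjugate) := by
        rw [h, mul_one]
    _ = (mt g).adjugate := by rw [← mul_assoc, ct_mul_mt, one_mul]

noncomputable instance : Finite (SU3 n) := by
  have : Finite (Matrix (Fin 3) (Fin 3) (Fq2 n)) := inferInstanceAs (Finite (Fin 3 → Fin 3 → Fq2 n))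
  exact Finite.of_injective mt mt_injective

theorem two_eq_zero' : (2 : Fq2 n) = 0 := CharTwo.two_eq_zero

theorem neg_eq' (x : Fq2 n) : -x = x := CharTwo.neg_eq x

/-- Permutation matrix: `pm π` sends `e_j` to `e_{π j}`. -/
noncomputable def pm (n : ℕ) (π : Equiv.Perm (Fin 3)) : SU3 n :=
  mk3 ((1 : Matrix (Fin 3) (Fin 3) (Fq2 n)).submatrix π.symm id)
    (by
      rw [Matrix.conjTranspose_submatrix, Matrix.conjTranspose_one]
      ext i j
      simp [Matrix.mul_apply, Matrix.one_apply])
    (by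
      rw [Matrix.det_permute, Matrix.det_one, mul_one]
      rcases Int.units_eq_one_or (Equiv.Perm.sign π.symm) with h | h <;> rw [h] <;> simp [neg_eq'])

theorem pm_apply (π : Equiv.Perm (Fin 3)) (i j : Fin 3) :
    mt (pm n π) i j = if i = π j then 1 else 0 := by
  simp only [pm, mt_mk3, Matrix.submatrix_apply, Matrix.one_apply, id, Equiv.symm_apply_eq]

theorem pm_mul_apply (π : Equiv.Perm (Fin 3)) (g : SU3 n) (i j : Fin 3) :
    mt (pm n π * g) i j = mt g (π.symm i) j := by
  rw [mt_mul, Matrix.mul_apply]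
  simp only [pm_apply, ite_mul, one_mul, zero_mul, ← Equiv.symm_apply_eq]
  simp

theorem pm_mul (π ρ : Equiv.Perm (Fin 3)) : pm n (π * ρ) = pm n π * pm n ρ := by
  apply mt_injective
  ext i j
  rw [pm_mul_apply, pm_apply, pm_apply]
  simp only [Equiv.symm_apply_eq, Equiv.Perm.mul_apply]
  congr

theorem pm_one : pm n 1 = 1 := by
  apply mt_injective; ext i j; rw [pm_apply, mt_one, Matrix.one_apply]; rfl

theorem pm_inv (π : Equiv.Perm (Fin 3)) : pm n π⁻¹ = (pm n π)⁻¹ := by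
  rw [eq_inv_iff_mul_eq_one, ← pm_mul, inv_mul_cancel, pm_one]

theorem mul_pm_apply (π : Equiv.Perm (Fin 3)) (g : SU3 n) (i j : Fin 3) :
    mt (g * pm n π) i j = mt g i (π j) := by
  rw [mt_mul, Matrix.mul_apply]
  simp [pm_apply]

theorem conj_pm_apply (π : Equiv.Perm (Fin 3)) (g : SU3 n) (i j : Fin 3) :
    mt ((pm n π)⁻¹ * g * pm n π) i j = mt g (π i) (π j) := by
  rw [mul_pm_apply, ← pm_inv, pm_mul_apply]
  rfl

end basics

/-! ### The diagonal torus and the stabilizer of the triangle -/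

section torus
variable {n : ℕ}

/-- The group of elements of norm `1` of `F_{q²}`. -/
noncomputable def normOne (n : ℕ) : Subgroup (Fq2 n)ˣ where
  carrier := {x | (x : Fq2 n) * star (x : Fq2 n) = 1}
  one_mem' := by simp
  mul_mem' := by
    intro a b ha hb
    show (a : Fq2 n) * b * star ((a : Fq2 n) * b) = 1
    change (a : Fq2 n) * star (a : Fq2 n) = 1 at ha
    change (b : Fq2 n) * star (b : Fq2 n) = 1 at hb
    rw [star_mul]
    linear_combination (b * star (b : Fq2 n)) * ha + hb
  inv_mem' := by
    intro a ha
    show ((a⁻¹ : (Fq2 n)ˣ) : Fq2 n) * star ((a⁻¹ : (Fq2 n)ˣ) : Fq2 n) = 1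
    change (a : Fq2 n) * star (a : Fq2 n) = 1 at ha
    rw [Units.val_inv_eq_inv_val, star_inv₀, ← mul_inv, ha, inv_one]

theorem mem_normOne {x : (Fq2 n)ˣ} : x ∈ normOne n ↔ (x : Fq2 n) * star (x : Fq2 n) = 1 := Iff.rfl

theorem card_normOne : Nat.card (normOne n) = qval n + 1 :=
  (inv2 n).card_units_norm_one (card_Fq2 n) (one_lt_qval n)

theorem exists_norm_one_prime {r : ℕ} (hr : r.Prime) (hd : r ∣ qval n + 1) :
    ∃ z : Fq2 n, z * star z = 1 ∧ z ^ r = 1 ∧ z ≠ 1 := by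
  have : Fact r.Prime := ⟨hr⟩
  obtain ⟨w, hw⟩ := exists_prime_orderOf_dvd_card' (G := normOne n) r (by rwa [card_normOne])
  refine ⟨w.1.1, mem_normOne.1 w.2, ?_, ?_⟩
  · have := congrArg (fun u : normOne n => u.1.1) (hw ▸ pow_orderOf_eq_one w)
    simpa using this
  · intro h
    have : w = 1 := Subtype.ext (Units.ext h)
    rw [this, orderOf_one] at hw
    exact hr.one_lt.ne hw

theorem exists_norm_one_ne : ∃ z : Fq2 n, z * star z = 1 ∧ z ≠ 1 := by
  obtain ⟨r, hr, hd⟩ := Nat.exists_prime_and_dvd (n := qval n + 1) (by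
    have := one_lt_qval n; omega)
  obtain ⟨z, h1, _, h2⟩ := exists_norm_one_prime hr hd
  exact ⟨z, h1, h2⟩

theorem sq_ne_one {x : Fq2 n} (h : x ≠ 1) : x ^ 2 ≠ 1 := by
  intro h2
  apply h
  have : (x - 1) ^ 2 = 0 := by linear_combination h2 + (1 - x) * two_eq_zero' (n := n)
  exact sub_eq_zero.1 (pow_eq_zero_iff (two_ne_zero) |>.1 this)

theorem ne_inv_self {z : Fq2 n} (h : z * star z = 1) (h1 : z ≠ 1) : z ≠ star z := by
  intro h2
  rw [← h2, ← sq] at h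
  exact sq_ne_one h1 h

/-- The diagonal subgroup of `SU(3,q)`. -/
noncomputable def T (n : ℕ) : Subgroup (SU3 n) where
  carrier := {g | ∀ i j, i ≠ j → mt g i j = 0}
  one_mem' := by
    intro i j h
    rw [mt_one, Matrix.one_apply_ne h]
  mul_mem' := by
    intro a b ha hb i j h
    rw [mt_mul, Matrix.mul_apply]
    refine Finset.sum_eq_zero fun k _ => ?_
    by_cases hk : i = k
    · subst hk; rw [hb _ _ h, mul_zero]
    · rw [ha _ _ hk, zero_mul]
  inv_mem' := by
    intro a ha i j h
    rw [mt_inv, Matrix.conjTranspose_apply, ha _ _ h.symm, star_zero]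

theorem mem_T {g : SU3 n} : g ∈ T n ↔ ∀ i j, i ≠ j → mt g i j = 0 := Iff.rfl

theorem mt_T {g : SU3 n} (h : g ∈ T n) : mt g = Matrix.diagonal fun i => mt g i i := by
  ext i j
  by_cases hij : i = j
  · subst hij; simp
  · rw [Matrix.diagonal_apply_ne _ hij, h _ _ hij]

theorem T_ext {g h : SU3 n} (hg : g ∈ T n) (hh : h ∈ T n) (H : ∀ i, mt g i i = mt h i i) :
    g = h := by
  apply mt_injective
  rw [mt_T hg, mt_T hh]
  congr 1
  exact funext H

theorem mul_T_apply {g t : SU3 n} (ht : t ∈ T n) (i j : Fin 3) :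
    mt (g * t) i j = mt g i j * mt t j j := by
  rw [mt_mul, mt_T ht, Matrix.mul_diagonal, Matrix.diagonal_apply_eq]

theorem T_mul_apply {g t : SU3 n} (ht : t ∈ T n) (i j : Fin 3) :
    mt (t * g) i j = mt t i i * mt g i j := by
  rw [mt_mul, mt_T ht, Matrix.diagonal_mul, Matrix.diagonal_apply_eq]

theorem T_norm {t : SU3 n} (ht : t ∈ T n) (i : Fin 3) : mt t i i * star (mt t i i) = 1 := by
  have h := row_orth t i i
  have h' := mem_T.1 ht
  fin_cases i <;> simpa [h'] using h

theorem T_ne_zero {t : SU3 n} (ht : t ∈ T n) (i : Fin 3) : mt t i i ≠ 0 := by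
  intro h; have := T_norm ht i; rw [h] at this; simp at this

theorem T_det {t : SU3 n} (ht : t ∈ T n) : mt t 0 0 * mt t 1 1 * mt t 2 2 = 1 := by
  have h := mt_det t
  rw [mt_T ht, Matrix.det_diagonal, Fin.prod_univ_three] at h
  exact h

/-- The diagonal element with entries `a, b, (ab)⁻¹`. -/
noncomputable def dg (a b : Fq2 n) (ha : a * star a = 1) (hb : b * star b = 1) : SU3 n :=
  mk3 (Matrix.diagonal ![a, b, star (a * b)])
    (by
      rw [Matrix.diagonal_conjTranspose, Matrix.diagonal_mul_diagonal, ← Matrix.diagonal_one]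
      congr 1
      funext i
      fin_cases i
      · exact ha
      · exact hb
      · show star (a * b) * star (star (a * b)) = 1
        rw [star_star, star_mul]
        linear_combination (b * star b) * ha + hb)
    (by
      rw [Matrix.det_diagonal, Fin.prod_univ_three]
      show a * b * star (a * b) = 1
      rw [star_mul]
      linear_combination (b * star b) * ha + hb)

section
variable {a b : Fq2 n} (ha : a * star a = 1) (hb : b * star b = 1)

theorem dg_mem : dg a b ha hb ∈ T n := by
  intro i j h
  exact Matrix.diagonal_apply_ne _ h

theorem dg_apply (i : Fin 3) : mt (dg a b ha hb) i i = ![a, b, star (a * b)] i :=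
  Matrix.diagonal_apply_eq _ _
end

theorem T_two {t : SU3 n} (ht : t ∈ T n) : mt t 2 2 = star (mt t 0 0 * mt t 1 1) := by
  have h := T_det ht
  have h0 := T_norm ht 0
  have h1 := T_norm ht 1
  rw [star_mul]
  linear_combination (star (mt t 0 0) * star (mt t 1 1)) * h - (mt t 1 1 * star (mt t 1 1) * mt t 2 2) * h0 - mt t 2 2 * h1

theorem card_T : Nat.card (T n) = (qval n + 1) ^ 2 := by
  rw [← card_normOne, sq, ← Nat.card_prod]
  refine Nat.card_congr
    { toFun := fun t => (⟨Units.mk0 _ (T_ne_zero t.2 0), T_norm t.2 0⟩,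
        ⟨Units.mk0 _ (T_ne_zero t.2 1), T_norm t.2 1⟩)
      invFun := fun p => ⟨dg p.1.1.1 p.2.1.1 p.1.2 p.2.2, dg_mem _ _⟩
      left_inv := ?_
      right_inv := ?_ }
  · intro t
    refine Subtype.ext (T_ext (dg_mem (T_norm t.2 0) (T_norm t.2 1)) t.2 fun i => ?_)
    refine (dg_apply (T_norm t.2 0) (T_norm t.2 1) i).trans ?_
    fin_cases i
    · rfl
    · rfl
    · exact (T_two t.2).symm
  · intro p
    refine Prod.ext (Subtype.ext (Units.ext ?_)) (Subtype.ext (Units.ext ?_))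
    · exact dg_apply p.1.2 p.2.2 0
    · exact dg_apply p.1.2 p.2.2 1

theorem T_comm {s t : SU3 n} (hs : s ∈ T n) (ht : t ∈ T n) : s * t = t * s := by
  refine T_ext (mul_mem hs ht) (mul_mem ht hs) fun i => ?_
  rw [mul_T_apply ht, mul_T_apply hs, mul_comm]

theorem pm_conj_mem_T (π : Equiv.Perm (Fin 3)) {t : SU3 n} (ht : t ∈ T n) :
    (pm n π)⁻¹ * t * pm n π ∈ T n := by
  intro i j h
  rw [conj_pm_apply]
  exact ht _ _ (fun h' => h (π.injective h'))

/-- The regular diagonal elements `diag(z, z⁻¹, 1)`. -/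
theorem regular {z : Fq2 n} (h : z * star z = 1) (h1 : z ≠ 1) :
    Function.Injective fun i => mt (dg z (star z) h (by rw [star_star, mul_comm, h])) i i := by
  have h2 := ne_inv_self h h1
  have h3 : star z ≠ 1 := fun h3 => h1 (by rw [← star_star z, h3, star_one])
  intro i j hij
  simp only [dg_apply, h, star_one] at hij
  fin_cases i <;> fin_cases j <;> simp_all [eq_comm]

theorem mem_T_of_comm {g t : SU3 n} (ht : t ∈ T n) (hi : Function.Injective fun i => mt t i i)
    (h : g * t = t * g) : g ∈ T n := by
  intro i j hij
  have h1 := congrFun (congrFun (congrArg mt h) i) j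
  rw [mul_T_apply ht, T_mul_apply ht] at h1
  by_contra h0
  exact hij (hi (mul_right_cancel₀ h0 ((h1.symm).trans (mul_comm _ _))))

theorem pm_mul_T_apply (π : Equiv.Perm (Fin 3)) {t : SU3 n} (ht : t ∈ T n) (i j : Fin 3) :
    mt (pm n π * t) i j = if i = π j then mt t j j else 0 := by
  rw [mul_T_apply ht, pm_apply]; split_ifs <;> simp

/-- The stabilizer of the coordinate triangle. -/
noncomputable abbrev Mon (n : ℕ) : Subgroup (SU3 n) := Subgroup.normalizer (T n : Set (SU3 n))

theorem T_le_Mon : T n ≤ Mon n := Subgroup.le_normalizer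

theorem pm_mem_Mon (π : Equiv.Perm (Fin 3)) : pm n π ∈ Mon n := by
  rw [Subgroup.mem_normalizer_iff]
  intro t
  constructor
  · intro ht
    have := pm_conj_mem_T (n := n) π⁻¹ ht
    rwa [pm_inv, inv_inv] at this
  · intro ht
    have := pm_conj_mem_T (n := n) π ht
    simpa [mul_assoc] using this

theorem row_ne (g : SU3 n) (i : Fin 3) : ∃ j, mt g i j ≠ 0 := by
  by_contra! h
  have := row_orth g i i
  simp [h] at this

/-- A unitary matrix with only one nonzero entry in each row is monomial. -/
theorem exists_pm_of_rows {g : SU3 n} (h : ∀ i j k, mt g i j ≠ 0 → mt g i k ≠ 0 → j = k) :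
    ∃ π t, t ∈ T n ∧ g = pm n π * t := by
  choose p hp using row_ne g
  have hp0 : ∀ i j, j ≠ p i → mt g i j = 0 := fun i j hj => by
    by_contra h0; exact hj (h i _ _ h0 (hp i))
  have hinj : Function.Injective p := by
    intro i k hik
    by_contra hne
    have h1 := congrFun (congrFun (mt_mul_ct g) i) k
    rw [Matrix.mul_apply, Matrix.one_apply_ne hne, Finset.sum_eq_single (p i)] at h1
    · rw [Matrix.conjTranspose_apply] at h1
      rcases mul_eq_zero.1 h1 with h1 | h1
      · exact hp i h1
      · rw [hik, star_eq_zero] at h1; exact hp k h1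
    · intro j _ hj; rw [hp0 i j hj, zero_mul]
    · simp
  let ρ : Equiv.Perm (Fin 3) := Equiv.ofBijective p (Finite.injective_iff_bijective.1 hinj)
  refine ⟨ρ⁻¹, pm n ρ * g, ?_, by rw [pm_inv, inv_mul_cancel_left]⟩
  intro i j hij
  rw [pm_mul_apply]
  apply hp0
  intro hj
  apply hij
  rw [hj]
  exact (Equiv.apply_symm_apply ρ i).symm

theorem pm_mul_T_mem (π : Equiv.Perm (Fin 3)) {t : SU3 n} (ht : t ∈ T n) : pm n π * t ∈ Mon n :=
  mul_mem (pm_mem_Mon π) (T_le_Mon ht)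

theorem mem_Mon_of_rows {g : SU3 n} (h : ∀ i j k, mt g i j ≠ 0 → mt g i k ≠ 0 → j = k) :
    g ∈ Mon n := by
  obtain ⟨π, t, ht, rfl⟩ := exists_pm_of_rows h
  exact pm_mul_T_mem π ht

theorem mem_Mon {g : SU3 n} : g ∈ Mon n ↔ ∃ π t, t ∈ T n ∧ g = pm n π * t := by
  constructor
  · intro h
    obtain ⟨z, hz, hz1⟩ := exists_norm_one_ne (n := n)
    have hz' : star z * star (star z) = 1 := by rw [star_star, mul_comm, hz]
    have ht : dg z (star z) hz hz' ∈ T n := dg_mem _ _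
    have hi := regular hz hz1
    have hs := (Subgroup.mem_normalizer_iff.1 h _).1 ht
    apply exists_pm_of_rows
    have key : ∀ i j, mt g i j * mt (dg z (star z) hz hz') j j =
        mt (g * dg z (star z) hz hz' * g⁻¹) i i * mt g i j := by
      intro i j
      rw [← mul_T_apply ht, ← T_mul_apply hs, inv_mul_cancel_right]
    intro i j k hj hk
    apply hi
    have h1 := mul_left_cancel₀ hj ((key i j).trans (mul_comm _ _))
    have h2 := mul_left_cancel₀ hk ((key i k).trans (mul_comm _ _))
    exact h1.trans h2.symm
  · rintro ⟨π, t, ht, rfl⟩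
    exact pm_mul_T_mem π ht

theorem pm_mul_T_inj {π ρ : Equiv.Perm (Fin 3)} {s t : SU3 n} (hs : s ∈ T n) (ht : t ∈ T n)
    (h : pm n π * s = pm n ρ * t) : π = ρ ∧ s = t := by
  have : π = ρ := by
    ext1 j
    by_contra hne
    have h1 := congrFun (congrFun (congrArg mt h) (π j)) j
    rw [pm_mul_T_apply π hs, pm_mul_T_apply ρ ht, if_pos rfl, if_neg hne] at h1
    exact T_ne_zero hs j h1
  subst this
  exact ⟨rfl, mul_left_cancel h⟩

theorem card_Mon : Nat.card (Mon n) = 6 * (qval n + 1) ^ 2 := by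
  have h6 : Nat.card (Equiv.Perm (Fin 3)) = 6 := by
    rw [Nat.card_perm, Nat.card_fin]; rfl
  rw [← h6, ← card_T, ← Nat.card_prod]
  symm
  refine Nat.card_eq_of_bijective
    (fun p : Equiv.Perm (Fin 3) × T n => (⟨pm n p.1 * p.2.1, pm_mul_T_mem _ p.2.2⟩ : Mon n))
    ⟨?_, ?_⟩
  · rintro ⟨π, s⟩ ⟨ρ, t⟩ h
    obtain ⟨h1, h2⟩ := pm_mul_T_inj s.2 t.2 (congrArg Subtype.val h)
    exact Prod.ext h1 (Subtype.ext h2)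
  · rintro ⟨g, hg⟩
    obtain ⟨π, t, ht, rfl⟩ := mem_Mon.1 hg
    exact ⟨(π, ⟨t, ht⟩), rfl⟩

theorem pm_T_mul (π ρ : Equiv.Perm (Fin 3)) {s t : SU3 n} (hs : s ∈ T n) (ht : t ∈ T n) :
    ∃ u ∈ T n, (pm n π * s) * (pm n ρ * t) = pm n (π * ρ) * u :=
  ⟨((pm n ρ)⁻¹ * s * pm n ρ) * t, mul_mem (pm_conj_mem_T ρ hs) ht, by rw [pm_mul]; group⟩

theorem cube_eq {A : Type*} [Monoid A] (x : A) : x ^ 3 = x * x * x := by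
  rw [pow_succ, sq]

theorem mt_pow (g : SU3 n) : ∀ k : ℕ, mt (g ^ k) = mt g ^ k
  | 0 => by rw [pow_zero, pow_zero, mt_one]
  | k + 1 => by rw [pow_succ g k, mt_mul, mt_pow g k, pow_succ (mt g) k]

theorem pm_T_cube (π : Equiv.Perm (Fin 3)) {t : SU3 n} (ht : t ∈ T n) :
    ∃ u ∈ T n, (pm n π * t) ^ 3 = pm n (π ^ 3) * u := by
  obtain ⟨u, hu, h⟩ := pm_T_mul π π ht ht
  obtain ⟨v, hv, h'⟩ := pm_T_mul (π * π) π hu ht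
  exact ⟨v, hv, by rw [cube_eq, h, h', cube_eq]⟩

theorem T_cube {t : SU3 n} (hn : 1 ≤ n) (ht : t ∈ T n) (h : t ^ 3 = 1) : t = 1 := by
  refine T_ext ht (one_mem _) fun i => ?_
  have h1 := congrFun (congrFun (congrArg mt h) i) i
  rw [pow_succ, sq, mul_T_apply ht, mul_T_apply ht, mt_one, Matrix.one_apply_eq] at h1
  rw [mt_one, Matrix.one_apply_eq]
  exact eq_one_of_cube hn (T_norm ht i) (by rw [← h1]; ring)

/-- The elements of order `3` of `Mon n` are the products of a `3`-cycle with a diagonal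
element: the cube of such a product is a scalar matrix, hence trivial. -/
theorem orderOf_pm_T (hn : 1 ≤ n) (π : Equiv.Perm (Fin 3)) {t : SU3 n} (ht : t ∈ T n) :
    orderOf (pm n π * t) = 3 ↔ π ^ 3 = 1 ∧ π ≠ 1 := by
  have : Fact (Nat.Prime 3) := ⟨Nat.prime_three⟩
  have hc : ∀ k, (if k then (1:ℕ) else 0) = 1 → k := by intro k h; by_contra h0; simp [h0] at h
  obtain ⟨u, hu, hcube⟩ := pm_T_cube π ht
  constructor
  · intro h
    have h3 : (pm n π * t) ^ 3 = 1 := by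
      have := pow_orderOf_eq_one (pm n π * t)
      rwa [h] at this
    refine ⟨?_, ?_⟩
    · refine (pm_mul_T_inj hu (one_mem _) (?_ : _ = pm n 1 * 1)).1
      rw [← hcube, h3, pm_one, mul_one]
    · rintro rfl
      rw [pm_one, one_mul] at h3 h
      rw [T_cube hn ht h3, orderOf_one] at h
      norm_num at h
  · rintro ⟨h3, h1⟩
    rw [h3, pm_one, one_mul] at hcube
    apply orderOf_eq_prime
    · have hcomm : (pm n π * t) * u = u * (pm n π * t) := by
        rw [← hcube, ← pow_succ', ← pow_succ]
      have hinv : ∀ j, mt u (π j) (π j) = mt u j j := by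
        intro j
        have := congrFun (congrFun (congrArg mt hcomm) (π j)) j
        rw [mul_T_apply hu, T_mul_apply hu, pm_mul_T_apply π ht, if_pos rfl, mul_comm] at this
        exact (mul_right_cancel₀ (T_ne_zero ht j) this).symm
      have hall : ∀ j, mt u j j = mt u 0 0 := by
        have hk : ∀ π : Equiv.Perm (Fin 3), π ^ 3 = 1 → π ≠ 1 → ∀ j, j = 0 ∨ j = π 0 ∨ j = π (π 0) := by
          decide
        intro j
        rcases hk π h3 h1 j with h | h | h <;> rw [h]
        · exact hinv 0
        · rw [hinv, hinv]
      have hdet := T_det hu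
      rw [hall 1, hall 2] at hdet
      have h0 := eq_one_of_cube hn (T_norm hu 0) (by rw [← hdet]; ring)
      rw [hcube]
      refine T_ext hu (one_mem _) fun i => ?_
      rw [hall, h0, mt_one, Matrix.one_apply_eq]
    · intro h
      exact h1 (pm_mul_T_inj ht (one_mem _) (h.trans (by rw [pm_one, mul_one] : _ = pm n 1 * 1))).1

theorem card_order_three_Mon (hn : 1 ≤ n) :
    Nat.card {ν : SU3 n // ν ∈ Mon n ∧ orderOf ν = 3} = 2 * (qval n + 1) ^ 2 := by
  have h2 : Nat.card {π : Equiv.Perm (Fin 3) // π ^ 3 = 1 ∧ π ≠ 1} = 2 := by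
    have : Fintype.card {π : Equiv.Perm (Fin 3) // π ^ 3 = 1 ∧ π ≠ 1} = 2 := by decide
    rw [← this, ← Nat.card_eq_fintype_card]
  refine Eq.trans ?_ (congrArg₂ (· * ·) h2 (card_T (n := n)))
  rw [← Nat.card_prod]
  symm
  refine Nat.card_eq_of_bijective
    (fun p : {π : Equiv.Perm (Fin 3) // π ^ 3 = 1 ∧ π ≠ 1} × T n =>
      (⟨pm n p.1.1 * p.2.1, pm_mul_T_mem _ p.2.2, (orderOf_pm_T hn _ p.2.2).2 p.1.2⟩ :
        {ν : SU3 n // ν ∈ Mon n ∧ orderOf ν = 3})) ⟨?_, ?_⟩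
  · rintro ⟨π, s⟩ ⟨ρ, t⟩ h
    obtain ⟨h1, h2⟩ := pm_mul_T_inj s.2 t.2 (congrArg Subtype.val h)
    exact Prod.ext (Subtype.ext h1) (Subtype.ext h2)
  · rintro ⟨g, hg, h3⟩
    obtain ⟨π, t, ht, rfl⟩ := mem_Mon.1 hg
    exact ⟨(⟨π, (orderOf_pm_T hn π ht).1 h3⟩, ⟨t, ht⟩), rfl⟩

/-- For each prime `r` dividing `q + 1` the torus contains a regular element of order `r`. -/
theorem exists_regular_prime {r : ℕ} (hr : r.Prime) (hd : r ∣ Nat.card (T n)) :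
    ∃ x ∈ T n, x ≠ 1 ∧ x ^ r = 1 ∧ ∀ g, g * x = x * g → g ∈ T n := by
  rw [card_T] at hd
  obtain ⟨z, h1, h2, h3⟩ := exists_norm_one_prime hr (hr.dvd_of_dvd_pow hd)
  have h1' : star z * star (star z) = 1 := by rw [star_star, mul_comm, h1]
  refine ⟨dg z (star z) h1 h1', dg_mem _ _, ?_, ?_, fun g hg => mem_T_of_comm (dg_mem _ _) (regular h1 h3) hg⟩
  · intro h
    have := congrArg (fun g => mt g 0 0) h
    simp only [dg_apply, mt_one, Matrix.one_apply_eq] at this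
    exact h3 this
  · apply mt_injective
    rw [mt_pow, mt_one]
    show (Matrix.diagonal ![z, star z, star (z * star z)]) ^ r = 1
    rw [Matrix.diagonal_pow, ← Matrix.diagonal_one]
    congr 1
    funext i
    fin_cases i
    · exact h2
    · show (star z) ^ r = 1
      rw [← star_pow, h2, star_one]
    · show (star (z * star z)) ^ r = 1
      rw [h1, star_one, one_pow]

end torus

/-! ### The stabilizer of an axis, transitivity on unit vectors, the order of `SU(3,q)` -/

section
open scoped Matrix

section block
variable {n : ℕ}

/-- The stabilizer of the first coordinate axis: the matrices that are block diagonal with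
blocks of sizes `1` and `2`. -/
noncomputable def L (n : ℕ) : Subgroup (SU3 n) where
  carrier := {g | mt g 0 1 = 0 ∧ mt g 0 2 = 0 ∧ mt g 1 0 = 0 ∧ mt g 2 0 = 0}
  one_mem' := by simp [mt_one]
  mul_mem' := by
    rintro a b ⟨h1, h2, h3, h4⟩ ⟨k1, k2, k3, k4⟩
    refine ⟨?_, ?_, ?_, ?_⟩ <;> rw [mt_mul, Matrix.mul_apply, Fin.sum_univ_three] <;> simp [*]
  inv_mem' := by
    rintro a ⟨h1, h2, h3, h4⟩
    refine ⟨?_, ?_, ?_, ?_⟩ <;> rw [mt_inv, Matrix.conjTranspose_apply] <;> simp [*]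

theorem mem_L {g : SU3 n} :
    g ∈ L n ↔ mt g 0 1 = 0 ∧ mt g 0 2 = 0 ∧ mt g 1 0 = 0 ∧ mt g 2 0 = 0 := Iff.rfl

theorem T_le_L : T n ≤ L n := fun _ h =>
  ⟨h _ _ (by decide), h _ _ (by decide), h _ _ (by decide), h _ _ (by decide)⟩

/-- The block diagonal element with blocks `u` and `[[a, b], [ūb̄, ūā]]`. -/
noncomputable def blk (u a b : Fq2 n) (hu : u * star u = 1) (hab : a * star a + b * star b = 1) :
    SU3 n :=
  mk3 !![u, 0, 0; 0, a, b; 0, star u * star b, star u * star a]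
    (by
      ext i j
      rw [Matrix.mul_apply, Fin.sum_univ_three]
      fin_cases i <;> fin_cases j <;> simp
      · exact hu
      · exact hab
      · linear_combination (a * b * u) * two_eq_zero' (n := n)
      · linear_combination (star u * star b * star a) * two_eq_zero' (n := n)
      · linear_combination hu + (u * star u) * hab)
    (by
      rw [Matrix.det_fin_three]
      simp
      linear_combination hu + (u * star u) * hab - (u * star u * b * star b) * two_eq_zero' (n := n))

section
variable {u a b : Fq2 n} (hu : u * star u = 1) (hab : a * star a + b * star b = 1)

theorem mt_blk : mt (blk u a b hu hab) =
    !![u, 0, 0; 0, a, b; 0, star u * star b, star u * star a] := rfl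

theorem blk_mem : blk u a b hu hab ∈ L n := by
  rw [mem_L, mt_blk]; simp
end

theorem L_norm {g : SU3 n} (hg : g ∈ L n) : mt g 0 0 * star (mt g 0 0) = 1 := by
  obtain ⟨h1, h2, h3, h4⟩ := hg
  have := row_orth g 0 0
  simpa [h1, h2] using this

theorem L_norm2 {g : SU3 n} (hg : g ∈ L n) :
    mt g 1 1 * star (mt g 1 1) + mt g 1 2 * star (mt g 1 2) = 1 := by
  obtain ⟨h1, h2, h3, h4⟩ := hg
  have := row_orth g 1 1
  simpa [h3] using this

theorem eq_blk {g : SU3 n} (hg : g ∈ L n) :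
    g = blk (mt g 0 0) (mt g 1 1) (mt g 1 2) (L_norm hg) (L_norm2 hg) := by
  have hn := L_norm hg
  obtain ⟨h1, h2, h3, h4⟩ := hg
  have hadj := ct_eq_adjugate g
  rw [Matrix.adjugate_fin_three] at hadj
  have e11 := congrFun (congrFun hadj 1) 1
  have e21 := congrFun (congrFun hadj 2) 1
  simp [h1, h2, neg_eq'] at e11 e21
  apply mt_injective
  rw [mt_blk]
  ext i j
  fin_cases i <;> fin_cases j <;> simp [h1, h2, h3, h4]
  · rw [e21]; linear_combination (-mt g 2 1) * hn
  · rw [e11]; linear_combination (-mt g 2 2) * hn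

/-- The number of unit vectors in the Hermitian plane, which is also the order of `SU(2,q)`. -/
theorem card_unit_two : Nat.card {p : Fq2 n × Fq2 n // p.1 * star p.1 + p.2 * star p.2 = 1} =
    (qval n + 1) * (qval n ^ 2 - qval n) := by
  have := (inv2 n).card_norm_two (card_Fq2 n) (one_lt_qval n) 1 (map_one _)
  rw [if_neg one_ne_zero] at this
  exact this

theorem card_L : Nat.card (L n) = (qval n + 1) * ((qval n + 1) * (qval n ^ 2 - qval n)) := by
  rw [← card_unit_two, ← card_normOne, ← Nat.card_prod]
  refine Nat.card_congr
    { toFun := fun g => (⟨Units.mk0 (mt g.1 0 0) (fun h => by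
          have := L_norm g.2; rw [h, zero_mul] at this; exact zero_ne_one this), L_norm g.2⟩,
          ⟨(mt g.1 1 1, mt g.1 1 2), L_norm2 g.2⟩)
      invFun := fun p => ⟨blk p.1.1.1 p.2.1.1 p.2.1.2 p.1.2 p.2.2, blk_mem _ _⟩
      left_inv := fun g => Subtype.ext (eq_blk g.2).symm
      right_inv := fun p => by
        refine Prod.ext (Subtype.ext (Units.ext ?_)) (Subtype.ext (Prod.ext ?_ ?_)) <;> rfl }

/-- The stabilizer of the first basis vector. -/
noncomputable def L1 (n : ℕ) : Subgroup (SU3 n) where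
  carrier := {g | mt g 0 0 = 1 ∧ g ∈ L n}
  one_mem' := ⟨by simp [mt_one], one_mem _⟩
  mul_mem' := by
    rintro a b ⟨h, ha⟩ ⟨k, hb⟩
    refine ⟨?_, mul_mem ha hb⟩
    obtain ⟨h1, h2, h3, h4⟩ := ha
    rw [mt_mul, Matrix.mul_apply, Fin.sum_univ_three]; simp [*]
  inv_mem' := by
    rintro a ⟨h, ha⟩
    exact ⟨by rw [mt_inv, Matrix.conjTranspose_apply, h, star_one], inv_mem ha⟩

theorem mem_L1 {g : SU3 n} : g ∈ L1 n ↔ mt g 0 0 = 1 ∧ g ∈ L n := Iff.rfl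

theorem card_L1 : Nat.card (L1 n) = (qval n + 1) * (qval n ^ 2 - qval n) := by
  rw [← card_unit_two]
  have h11 : (1 : Fq2 n) * star (1 : Fq2 n) = 1 := by simp
  refine Nat.card_congr
    { toFun := fun g => ⟨(mt g.1 1 1, mt g.1 1 2), L_norm2 g.2.2⟩
      invFun := fun p => ⟨blk 1 p.1.1 p.1.2 h11 p.2, rfl, blk_mem _ _⟩
      left_inv := fun g => Subtype.ext (mt_injective (by
        have h := congrArg mt (eq_blk g.2.2)
        rw [mt_blk] at h
        have h0 := g.2.1
        rw [mt_blk, h, h0]))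
      right_inv := fun p => rfl }

theorem mem_L1_of_col {g : SU3 n} (h : mt g *ᵥ ![1, 0, 0] = ![1, 0, 0]) : g ∈ L1 n := by
  have h0 : mt g 0 0 = 1 := by
    simpa [Matrix.mulVec, dotProduct, Fin.sum_univ_three] using congrFun h 0
  have h1 : mt g 1 0 = 0 := by
    simpa [Matrix.mulVec, dotProduct, Fin.sum_univ_three] using congrFun h 1
  have h2 : mt g 2 0 = 0 := by
    simpa [Matrix.mulVec, dotProduct, Fin.sum_univ_three] using congrFun h 2
  have h3 := col_orth g 0 1
  have h4 := col_orth g 0 2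
  simp [h0, h1, h2] at h3 h4
  exact ⟨h0, h3, h4, h1, h2⟩

/-- Unit vectors. -/
def IsUnitVec (v : Fin 3 → Fq2 n) : Prop := v 0 * star (v 0) + v 1 * star (v 1) + v 2 * star (v 2) = 1

theorem isUnitVec_iff {v : Fin 3 → Fq2 n} : IsUnitVec v ↔ v ⬝ᵥ star v = 1 := by
  rw [IsUnitVec, dotProduct, Fin.sum_univ_three]; rfl

theorem isUnitVec_mulVec {v : Fin 3 → Fq2 n} (g : SU3 n) (h : IsUnitVec v) :
    IsUnitVec (mt g *ᵥ v) := by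
  rw [isUnitVec_iff] at h ⊢
  rw [Matrix.star_mulVec, dotProduct_comm, ← Matrix.dotProduct_mulVec, Matrix.mulVec_mulVec,
    ct_mul_mt, Matrix.one_mulVec, dotProduct_comm, h]

section trans
variable (H : Subgroup (SU3 n))

/-- `w` lies in the `H`-orbit of `v`. -/
def Orb (v w : Fin 3 → Fq2 n) : Prop := ∃ h ∈ H, mt h *ᵥ v = w

variable {H}

theorem Orb.trans {u v w : Fin 3 → Fq2 n} (h1 : Orb H u v) (h2 : Orb H v w) : Orb H u w := by
  obtain ⟨g, hg, rfl⟩ := h1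
  obtain ⟨h, hh, rfl⟩ := h2
  exact ⟨h * g, mul_mem hh hg, by rw [mt_mul, Matrix.mulVec_mulVec]⟩

theorem Orb.unit {v w : Fin 3 → Fq2 n} (h1 : Orb H v w) (hv : IsUnitVec v) : IsUnitVec w := by
  obtain ⟨g, hg, rfl⟩ := h1
  exact isUnitVec_mulVec g hv

theorem orb_perm (hP : ∀ π, pm n π ∈ H) (v : Fin 3 → Fq2 n) (π : Equiv.Perm (Fin 3)) :
    Orb H v (v ∘ π) := by
  refine ⟨pm n π⁻¹, hP _, ?_⟩
  funext i
  have : ∀ j, (i = π.symm j) ↔ (j = π i) := fun j => by rw [Equiv.eq_symm_apply, eq_comm]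
  simp [Matrix.mulVec, dotProduct, pm_apply, this]

theorem orb_blk (hL : L n ≤ H) (v : Fin 3 → Fq2 n) {a b : Fq2 n}
    (hab : a * star a + b * star b = 1) :
    Orb H v ![v 0, a * v 1 + b * v 2, star b * v 1 + star a * v 2] := by
  have h11 : (1 : Fq2 n) * star (1 : Fq2 n) = 1 := by simp
  refine ⟨blk 1 a b h11 hab, hL (blk_mem _ _), ?_⟩
  funext i
  rw [mt_blk]
  fin_cases i <;> simp [Matrix.mulVec, dotProduct, Fin.sum_univ_three]

theorem orb_two (hL : L n ≤ H) (v : Fin 3 → Fq2 n) {x : Fq2 n} (hx : x ≠ 0)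
    (h : v 1 * star (v 1) + v 2 * star (v 2) = x * star x) : Orb H v ![v 0, x, 0] := by
  have hx' : star x ≠ 0 := by rwa [Ne, star_eq_zero]
  have := orb_blk (H := H) hL v (a := star (v 1) / star x) (b := star (v 2) / star x) (by
    rw [star_div₀, star_div₀, star_star, star_star, star_star]
    field_simp
    linear_combination h)
  convert this using 1
  funext i
  fin_cases i
  · rfl
  · show x = star (v 1) / star x * v 1 + star (v 2) / star x * v 2
    field_simp
    linear_combination -h
  · show 0 = star (star (v 2) / star x) * v 1 + star (star (v 1) / star x) * v 2
    rw [star_div₀, star_div₀, star_star, star_star, star_star]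
    field_simp
    linear_combination (-v 2 * v 1) * two_eq_zero' (n := n)

/-- Two moves in coordinate planes: the last two coordinates are replaced by `(x, 0)` with `x ≠ 0`,
after which the vector has only two nonzero coordinates. -/
theorem orb_a (hL : L n ≤ H) (hP : ∀ π, pm n π ∈ H) (v : Fin 3 → Fq2 n) (hv : IsUnitVec v)
    (h : v 0 * star (v 0) ≠ 1) : Orb H v ![1, 0, 0] := by
  have hv' : v 0 * star (v 0) + v 1 * star (v 1) + v 2 * star (v 2) = 1 := hv
  obtain ⟨x, hx⟩ := (inv2 n).norm_surj (card_Fq2 n) (one_lt_qval n)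
    (v 1 * star (v 1) + v 2 * star (v 2)) (by simp only [inv2_s, star_add, star_mul', star_star]; ring)
  rw [inv2_s] at hx
  have hx0 : x ≠ 0 := by
    rintro rfl
    apply h
    linear_combination hv' + hx
  have h1 := orb_two hL v hx0 hx.symm
  have h2 := h1.trans (orb_perm hP _ (Equiv.swap 0 2))
  have h3 := h2.trans (orb_two hL _ one_ne_zero (by
    simp [Equiv.swap_apply_def, hx]
    linear_combination hv'))
  have h4 := h3.trans (orb_perm hP _ (Equiv.swap 0 1))
  convert h4 using 1
  funext i
  fin_cases i <;> simp [Equiv.swap_apply_def]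

theorem orb_b (hL : L n ≤ H) (hP : ∀ π, pm n π ∈ H) (v : Fin 3 → Fq2 n) (hv : IsUnitVec v)
    (i : Fin 3) (h : v i * star (v i) ≠ 1) : Orb H v ![1, 0, 0] := by
  have h1 := orb_perm hP v (Equiv.swap 0 i)
  exact h1.trans (orb_a hL hP _ (h1.unit hv) (by simpa using h))

/-- If some coordinate does not have norm 1, `orb_b` applies. If all do, a block matrix with entries
of norms `ω` and `1 + ω`, where `ω ∈ F_q` is a primitive cube root of unity, leads to a vector whose
second coordinate does not have norm 1. -/
theorem orb_all (hn : 1 ≤ n) (hL : L n ≤ H) (hP : ∀ π, pm n π ∈ H) (v : Fin 3 → Fq2 n)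
    (hv : IsUnitVec v) : Orb H v ![1, 0, 0] := by
  by_cases hall : ∀ i, v i * star (v i) = 1
  · obtain ⟨ω, hω, hs, hω1⟩ := exists_omega hn
    obtain ⟨a, ha⟩ := (inv2 n).norm_surj (card_Fq2 n) (one_lt_qval n) ω hs
    obtain ⟨b, hb⟩ := (inv2 n).norm_surj (card_Fq2 n) (one_lt_qval n) (1 + ω)
      (by rw [inv2_s, star_add, star_one, hs])
    rw [inv2_s] at ha hb
    have hω0 : ω ≠ 0 := by rintro rfl; simp at hω
    have ha0 : a ≠ 0 := by rintro rfl; exact hω0 (by simpa using ha.symm)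
    have hb0 : b ≠ 0 := by
      rintro rfl
      apply hω1
      linear_combination -hb - two_eq_zero' (n := n)
    have h1 := hall 1
    have h2 := hall 2
    have h10 : v 1 ≠ 0 := by intro h; simp [h] at h1
    have h20 : v 2 ≠ 0 := by intro h; simp [h] at h2
    have main : ∀ z : Fq2 n, z * star z = 1 →
        z * (a * star b * v 1 * star (v 2)) + star (z * (a * star b * v 1 * star (v 2))) ≠ 0 →
        Orb H v ![1, 0, 0] := by
      intro z hz hne
      have hab : (z * a) * star (z * a) + b * star b = 1 := by
        rw [star_mul']
        linear_combination (a * star a) * hz + ha + hb + ω * two_eq_zero' (n := n)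
      have hO := orb_blk hL v hab
      refine hO.trans (orb_b hL hP _ (hO.unit hv) 1 ?_)
      intro h
      apply hne
      simp only [Matrix.cons_val_one, Matrix.cons_val_zero, star_add, star_mul', star_star] at h ⊢
      rw [star_mul'] at hab
      linear_combination h - hab + (-(z * star z * a * star a)) * h1 - b * star b * h2
    set w := a * star b * v 1 * star (v 2) with hw
    have hw0 : w ≠ 0 := by
      rw [hw]
      simp [ha0, hb0, h10, h20]
    -- if the trace of `w` vanishes, `w` is replaced by `z * w` for some `z ≠ 1` of norm 1
    by_cases hT : w + star w = 0
    · obtain ⟨z, hz, hz1⟩ := exists_norm_one_ne (n := n)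
      refine main z hz ?_
      have hw' : star w = w := by
        linear_combination hT - w * two_eq_zero' (n := n)
      rw [star_mul', hw', ← add_mul]
      refine mul_ne_zero ?_ hw0
      intro h
      exact ne_inv_self hz hz1 (by linear_combination h - star z * two_eq_zero' (n := n))
    · exact main 1 (by simp) (by simpa using hT)
  · push Not at hall
    obtain ⟨i, hi⟩ := hall
    exact orb_b hL hP v hv i hi

theorem isUnitVec_e0 : IsUnitVec (n := n) ![1, 0, 0] := by simp [IsUnitVec]

theorem exists_to (hn : 1 ≤ n) (hL : L n ≤ H) (hP : ∀ π, pm n π ∈ H) (v : Fin 3 → Fq2 n)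
    (hv : IsUnitVec v) : ∃ h ∈ H, mt h *ᵥ ![1, 0, 0] = v := by
  obtain ⟨h, hh, he⟩ := orb_all hn hL hP v hv
  refine ⟨h⁻¹, inv_mem hh, ?_⟩
  rw [← he, Matrix.mulVec_mulVec, ← mt_mul, inv_mul_cancel, mt_one, Matrix.one_mulVec]

/-- A subgroup containing the stabilizer of an axis and the permutation matrices is transitive
on unit vectors and contains the stabilizer of one of them, so it is everything. -/
theorem eq_top_of_L_le (hn : 1 ≤ n) (hL : L n ≤ H) (hP : ∀ π, pm n π ∈ H) : H = ⊤ := by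
  rw [eq_top_iff]
  intro g _
  obtain ⟨h, hh, he⟩ := exists_to hn hL hP _ (isUnitVec_mulVec g isUnitVec_e0)
  have : h⁻¹ * g ∈ L1 n := by
    apply mem_L1_of_col
    rw [mt_mul, ← Matrix.mulVec_mulVec, ← he, Matrix.mulVec_mulVec, ← mt_mul, inv_mul_cancel,
      mt_one, Matrix.one_mulVec]
  have h2 := mul_mem hh (hL this.2)
  rwa [mul_inv_cancel_left] at h2
end trans

/-- Orbit-stabilizer theorem for the action on the unit vectors; the stabilizer is `L1 n`. -/
theorem card_SU3 (hn : 1 ≤ n) : Nat.card (SU3 n) =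
    (qval n + 1) * (qval n ^ 2 - qval n) * (qval n ^ 2 * (qval n ^ 3 + 1)) := by
  rw [← (L1 n).card_mul_index, card_L1]
  congr 1
  have h3 := (inv2 n).card_norm_three (card_Fq2 n) (one_lt_qval n)
  rw [← h3, Subgroup.index]
  refine Nat.card_eq_of_bijective (Quotient.lift (s := QuotientGroup.leftRel (L1 n))
    (fun g : SU3 n => (⟨(mt g 0 0, mt g 1 0, mt g 2 0), ?_⟩ : {p : Fq2 n × Fq2 n × Fq2 n //
      p.1 * (inv2 n).s p.1 + (p.2.1 * (inv2 n).s p.2.1 + p.2.2 * (inv2 n).s p.2.2) = 1})) ?_)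
    ⟨?_, ?_⟩
  · have := col_orth g 0 0
    rw [if_pos rfl] at this
    simp only [inv2_s]
    linear_combination this
  · intro a b hab
    have h : a⁻¹ * b ∈ L1 n := QuotientGroup.leftRel_apply.1 hab
    have hb : ∀ i, mt b i 0 = mt a i 0 := by
      intro i
      rw [show b = a * (a⁻¹ * b) by group, mt_mul, Matrix.mul_apply, Fin.sum_univ_three]
      obtain ⟨h0, _, _, h1, h2⟩ := h
      rw [h0, h1, h2]; ring
    simp only [hb]
  · intro x y
    refine Quotient.inductionOn₂ x y fun a b hab => ?_
    apply Quotient.sound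
    apply QuotientGroup.leftRel_apply.2
    apply mem_L1_of_col
    have hcol : mt b *ᵥ ![1, 0, 0] = mt a *ᵥ ![1, 0, 0] := by
      have h := congrArg Subtype.val hab
      simp only [Quotient.lift_mk, Prod.mk.injEq] at h
      funext i
      fin_cases i <;> simp [Matrix.mulVec, dotProduct, Fin.sum_univ_three, h]
    rw [mt_mul, ← Matrix.mulVec_mulVec, hcol, Matrix.mulVec_mulVec, ← mt_mul, inv_mul_cancel,
      mt_one, Matrix.one_mulVec]
  · rintro ⟨⟨x, y, z⟩, h⟩
    simp only [inv2_s] at h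
    obtain ⟨g, -, hg⟩ := exists_to (H := ⊤) hn le_top (fun _ => trivial) ![x, y, z]
      (show x * star x + y * star y + z * star z = 1 by linear_combination h)
    refine ⟨Quotient.mk _ g, Subtype.ext ?_⟩
    have e0 := congrFun hg 0
    have e1 := congrFun hg 1
    have e2 := congrFun hg 2
    simp [Matrix.mulVec, dotProduct, Fin.sum_univ_three] at e0 e1 e2
    simp [e0, e1, e2]

end block

end

/-! ### Maximality of the triangle stabilizer -/

section
open scoped Matrix

section maximal
variable {n : ℕ}

theorem pow_card_of_mem {G : Type*} [Group G] {X : Subgroup G} {x : G} (h : x ∈ X) :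
    x ^ Nat.card X = 1 :=
  orderOf_dvd_iff_pow_eq_one.1 (Subgroup.orderOf_dvd_natCard X h)

/-- The normal Hall subgroup `X` of `N(X)` consists of the elements of order dividing `|X|`, so it
is characteristic there. -/
theorem normalizer_eq_self {G : Type*} [Group G] [Finite G] {X : Subgroup G}
    (h : (X.relIndex (Subgroup.normalizer (X : Set G))).Coprime (Nat.card X)) :
    Subgroup.normalizer ((Subgroup.normalizer (X : Set G) : Subgroup G) : Set G) =
      Subgroup.normalizer (X : Set G) := by
  refine le_antisymm (fun g hg => ?_) Subgroup.le_normalizer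
  rw [← cj_eq_iff]
  refine Subgroup.eq_of_le_of_card_ge (fun y hy => ?_) (by rw [card_cj])
  have h1 : g⁻¹ * y * g ∈ X := mem_cj.1 hy
  refine mem_of_pow_eq_one le_rfl ?_ h ?_
  · have := (Subgroup.mem_normalizer_iff.1 hg _).1 (Subgroup.le_normalizer h1)
    simpa [mul_assoc] using this
  · have h2 : (g⁻¹ * y * g) ^ Nat.card X = 1 := pow_card_of_mem h1
    have h3 : g⁻¹ * y * g = g⁻¹ * y * (g⁻¹)⁻¹ := by rw [inv_inv]
    rw [h3, conj_pow] at h2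
    simpa [mul_assoc, inv_mul_eq_one, eq_comm] using h2

theorem coprime_six (hn : 1 ≤ n) : Nat.Coprime 6 ((qval n + 1) ^ 2) := by
  apply Nat.Coprime.pow_right
  have h3 := qval_mod_three hn
  have h4 := four_dvd_qval hn
  rw [show 6 = 2 * 3 by norm_num]
  apply Nat.Coprime.mul_left
  · rw [Nat.Prime.coprime_iff_not_dvd Nat.prime_two]; omega
  · rw [Nat.Prime.coprime_iff_not_dvd Nat.prime_three]; omega

theorem relIndex_T : (T n).relIndex (Mon n) = 6 := by
  have h := card_mul_relIndex (T_le_Mon (n := n))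
  rw [card_Mon, card_T, mul_comm] at h
  exact Nat.eq_of_mul_eq_mul_right (by positivity) h

theorem normalizer_Mon (hn : 1 ≤ n) : Subgroup.normalizer (Mon n : Set (SU3 n)) = Mon n :=
  normalizer_eq_self (by rw [relIndex_T, card_T]; exact coprime_six hn)

/-- `T n` consists of the elements of `Mon n` of order dividing `|T n|`. -/
theorem mem_T_of_conj (hn : 1 ≤ n) {x y g : SU3 n} (hx : x ∈ T n) (hy : y ∈ Mon n)
    (h : g * y = x * g) : y ∈ T n := by
  refine mem_of_pow_eq_one (k := Nat.card (T n)) (le_refl (Mon n)) hy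
    (by rw [relIndex_T, card_T]; exact coprime_six hn) ?_
  have h2 : x ^ Nat.card (T n) = 1 := pow_card_of_mem hx
  have h3 : x = g * y * g⁻¹ := by rw [h]; group
  rw [h3, conj_pow] at h2
  simpa [mul_assoc, mul_eq_one_iff_eq_inv] using h2

/-- Each nonzero entry of an intertwining matrix matches an eigenvalue of `y` with one of `x`. -/
theorem intertwine {x y g : SU3 n} (hx : x ∈ T n) (hy : y ∈ T n) (h : g * y = x * g)
    {i j : Fin 3} (h0 : mt g i j ≠ 0) : mt y j j = mt x i i := by
  have := congrFun (congrFun (congrArg mt h) i) j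
  rw [mul_T_apply hy, T_mul_apply hx, mul_comm] at this
  exact mul_right_cancel₀ h0 this

theorem mem_Mon_of_L (hn : 1 ≤ n) {x y g : SU3 n} (hg : g ∈ L n) (hx : x ∈ T n) (hy : y ∈ Mon n)
    (h : g * y = x * g) (h12 : mt x 1 1 ≠ mt x 2 2) : g ∈ Mon n := by
  have hyT := mem_T_of_conj hn hx hy h
  have key := fun i j => intertwine (i := i) (j := j) hx hyT h
  obtain ⟨h1, h2, h3, h4⟩ := hg
  have r1 := row_ne g 1
  have r2 := row_ne g 2
  simp only [Fin.exists_fin_succ] at r1 r2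
  apply mem_Mon_of_rows
  have k11 := key 1 1
  have k12 := key 1 2
  have k21 := key 2 1
  have k22 := key 2 2
  intro i j k hj hk
  fin_cases i <;> fin_cases j <;> fin_cases k <;> first | rfl | (exfalso; simp_all; done) | skip
  all_goals
    exfalso
    simp only [Fin.isValue, Fin.reduceFinMk] at hj hk
    rcases r1 with r1 | r1 | r1 | r1
    all_goals simp_all

theorem comm_of_eq {x g : SU3 n} (hg : g ∈ L n) (hx : x ∈ T n) (h : mt x 1 1 = mt x 2 2) :
    g * x = x * g := by
  obtain ⟨h1, h2, h3, h4⟩ := hg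
  apply mt_injective
  ext i j
  rw [mul_T_apply hx, T_mul_apply hx]
  fin_cases i <;> fin_cases j <;> simp [*, mul_comm]

/-- The diagonal matrices that are scalar on the last two coordinates are central in `L n`; there are
`q + 1` of them. -/
theorem card_A0 : Nat.card {x : SU3 n // x ∈ T n ∧ mt x 1 1 = mt x 2 2} = qval n + 1 := by
  rw [← card_normOne]
  have hs : ∀ {a : Fq2 n}, a * star a = 1 → star (a * a) * star (star (a * a)) = 1 := by
    intro a ha
    rw [star_star, star_mul]
    linear_combination (a * star a) * ha + ha
  refine Nat.card_congr
    { toFun := fun x => ⟨Units.mk0 (mt x.1 1 1) (T_ne_zero x.2.1 1), T_norm x.2.1 1⟩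
      invFun := fun a => ⟨dg (star (a.1.1 * a.1.1)) a.1.1 (hs a.2) a.2, dg_mem _ _, ?_⟩
      left_inv := ?_
      right_inv := ?_ }
  · refine (dg_apply (hs (mem_normOne.1 a.2)) (mem_normOne.1 a.2) 1).trans
      (Eq.trans ?_ (dg_apply (hs (mem_normOne.1 a.2)) (mem_normOne.1 a.2) 2).symm)
    show a.1.1 = star (star (a.1.1 * a.1.1) * a.1.1)
    have := mem_normOne.1 a.2
    rw [star_mul, star_star]
    linear_combination (-a.1.1) * this
  · intro x
    have hT := x.2.1
    have hn := T_norm hT 1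
    refine Subtype.ext (T_ext (dg_mem (hs hn) hn) hT fun i => ?_)
    have hd := T_det hT
    have e := x.2.2
    rw [← e] at hd
    have h0 : star (mt x.1 1 1 * mt x.1 1 1) = mt x.1 0 0 := by
      rw [star_mul]
      linear_combination (-(star (mt x.1 1 1) * star (mt x.1 1 1))) * hd +
        (mt x.1 0 0 * (mt x.1 1 1 * star (mt x.1 1 1)) + mt x.1 0 0) * hn
    refine (dg_apply (hs hn) hn i).trans ?_
    fin_cases i
    · exact h0
    · rfl
    · show star (star (mt x.1 1 1 * mt x.1 1 1) * mt x.1 1 1) = mt x.1 2 2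
      rw [h0, T_two hT]
  · intro a
    refine Subtype.ext (Units.ext ?_)
    exact dg_apply (hs (mem_normOne.1 a.2)) (mem_normOne.1 a.2) 1

/-- The torus meets few of its conjugates under elements of `L`. -/
theorem card_fix_L (hn : 1 ≤ n) {g : SU3 n} (hg : g ∈ L n) (hgM : g ∉ Mon n ⊓ L n) :
    Nat.card {x : SU3 n // x ∈ T n ∧ g⁻¹ * x * g ∈ Mon n ⊓ L n} * (qval n + 1) =
      Nat.card (T n) := by
  rw [card_T, sq]
  congr 1
  rw [← card_A0]
  refine Nat.card_congr (Equiv.subtypeEquivRight fun x => and_congr_right fun hx => ?_)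
  constructor
  · rintro ⟨h, -⟩
    by_contra hne
    exact hgM ⟨mem_Mon_of_L hn hg hx h (by group) hne, hg⟩
  · intro h
    have : g⁻¹ * x * g = x := by rw [mul_assoc, ← comm_of_eq hg hx h]; group
    rw [this]
    exact ⟨T_le_Mon hx, T_le_L hx⟩

/-- The indices of `Mon n ⊓ L n` in `H ⊓ L n` and of `H ⊓ L n` in `L n` are both `1` modulo `q + 1`,
and their product is less than `(q + 1)²`; hence one of them is 1. -/
theorem le_or_le (hn : 1 ≤ n) {H : Subgroup (SU3 n)} (hM : Mon n ≤ H) :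
    H ⊓ L n ≤ Mon n ∨ L n ≤ H := by
  have hle : Mon n ⊓ L n ≤ H ⊓ L n := inf_le_inf_right _ hM
  have ha : (Mon n ⊓ L n).relIndex (H ⊓ L n) ≡ 1 [MOD qval n + 1] :=
    relIndex_modEq_one (T n) _ _ (le_inf T_le_Mon T_le_L) hle _
      fun g hg hg' => card_fix_L hn hg.2 hg'
  have hab : (Mon n ⊓ L n).relIndex (L n) ≡ 1 [MOD qval n + 1] :=
    relIndex_modEq_one (T n) _ _ (le_inf T_le_Mon T_le_L) inf_le_right _
      fun g hg hg' => card_fix_L hn hg hg'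
  have hmul := Subgroup.relIndex_mul_relIndex _ _ _ hle (inf_le_right : H ⊓ L n ≤ L n)
  have hcard := card_mul_relIndex (inf_le_right : Mon n ⊓ L n ≤ L n)
  have hT : Nat.card (T n) ≤ Nat.card (Mon n ⊓ L n : Subgroup (SU3 n)) :=
    Nat.card_le_card_of_injective _ (Subgroup.inclusion_injective (le_inf T_le_Mon T_le_L))
  rw [card_L] at hcard
  rw [card_T] at hT
  set a := (Mon n ⊓ L n).relIndex (H ⊓ L n)
  set b := (H ⊓ L n).relIndex (L n) with hb'
  have hb : b ≡ 1 [MOD qval n + 1] := by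
    rw [← hmul] at hab
    have := (ha.mul_right b).symm.trans hab
    rwa [one_mul] at this
  by_cases ha1 : a = 1
  · left
    exact (Subgroup.relIndex_eq_one.1 ha1).trans inf_le_left
  by_cases hb1 : b = 1
  · right
    exact (Subgroup.relIndex_eq_one.1 hb1).trans inf_le_left
  exfalso
  rw [← hmul] at hcard
  have hq1 := one_lt_qval n
  have hpos : 0 < a * b := by
    rcases Nat.eq_zero_or_pos (a * b) with h | h
    · rw [h, mul_zero] at hcard
      have : 0 < (qval n + 1) * ((qval n + 1) * (qval n ^ 2 - qval n)) := by
        have : 0 < qval n ^ 2 - qval n := Nat.sub_pos_of_lt (by nlinarith)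
        positivity
      omega
    · exact h
  have big : ∀ c : ℕ, c ≡ 1 [MOD qval n + 1] → c ≠ 1 → 0 < c → qval n + 1 < c := by
    intro c hc h1 h0
    have hc' := (Nat.modEq_iff_dvd' h0).1 hc.symm
    have := Nat.le_of_dvd (by omega) hc'
    omega
  have h1 := big a ha ha1 (Nat.pos_of_mul_pos_right hpos)
  have h2 := big b hb hb1 (Nat.pos_of_mul_pos_left hpos)
  have h3 : (qval n + 1) ^ 2 * (a * b) ≤ (qval n + 1) ^ 2 * (qval n ^ 2 - qval n) := by
    calc _ ≤ _ := Nat.mul_le_mul_right _ hT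
      _ = _ := by rw [hcard]; ring
  have h4 := Nat.le_of_mul_le_mul_left h3 (by positivity)
  have h5 : (qval n + 1) * (qval n + 1) ≤ a * b := Nat.mul_le_mul h1.le h2.le
  have h6 : qval n ^ 2 - qval n ≤ qval n ^ 2 := Nat.sub_le _ _
  nlinarith

/-- If the intersection with `L` is monomial, centralizers of nontrivial diagonal elements are
monomial. -/
theorem mem_Mon_of_comm (hn : 1 ≤ n) {H : Subgroup (SU3 n)} (hM : Mon n ≤ H)
    (hL : H ⊓ L n ≤ Mon n) {g x : SU3 n} (hg : g ∈ H) (hx : x ∈ T n) (hx1 : x ≠ 1)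
    (h : g * x = x * g) : g ∈ Mon n := by
  by_cases hi : Function.Injective fun i => mt x i i
  · exact T_le_Mon (mem_T_of_comm hx hi h)
  · rw [Function.not_injective_iff] at hi
    obtain ⟨j, k, hjk, hne⟩ := hi
    obtain ⟨π, h1, h2⟩ : ∃ π : Equiv.Perm (Fin 3), π 1 = j ∧ π 2 = k := by
      have : ∀ j k : Fin 3, j ≠ k → ∃ π : Equiv.Perm (Fin 3), π 1 = j ∧ π 2 = k := by decide
      exact this j k hne
    have hx'T := pm_conj_mem_T π hx
    have hpH : pm n π ∈ H := hM (pm_mem_Mon π)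
    set x' := (pm n π)⁻¹ * x * pm n π with hx'
    set g' := (pm n π)⁻¹ * g * pm n π with hg'
    have hg'H : g' ∈ H := mul_mem (mul_mem (inv_mem hpH) hg) hpH
    have hcomm : g' * x' = x' * g' := by
      rw [hx', hg']
      calc _ = (pm n π)⁻¹ * (g * x) * pm n π := by group
        _ = _ := by rw [h]; group
    have e12 : mt x' 1 1 = mt x' 2 2 := by
      rw [hx', conj_pm_apply, conj_pm_apply, h1, h2]; exact hjk
    have e01 : mt x' 0 0 ≠ mt x' 1 1 := by
      intro e
      have hd := T_det hx'T
      rw [← e12, e] at hd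
      have h1 := eq_one_of_cube hn (T_norm hx'T 1) (by rw [← hd]; ring)
      have : x' = 1 := by
        refine T_ext hx'T (one_mem _) fun i => ?_
        rw [mt_one, Matrix.one_apply_eq]
        fin_cases i
        · exact e.trans h1
        · exact h1
        · exact e12.symm.trans h1
      apply hx1
      rw [hx'] at this
      have h2 : x = pm n π * ((pm n π)⁻¹ * x * pm n π) * (pm n π)⁻¹ := by group
      rw [h2, this]; group
    have key := fun i j => intertwine (i := i) (j := j) hx'T hx'T hcomm
    have hg'L : g' ∈ L n := by
      refine ⟨?_, ?_, ?_, ?_⟩ <;> by_contra h0 <;> have := key _ _ h0 <;> simp_all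
    have hg'M := hL ⟨hg'H, hg'L⟩
    have := mul_mem (mul_mem (pm_mem_Mon π) hg'M) (inv_mem (pm_mem_Mon π))
    rw [hg'] at this
    convert this using 1
    group

/-- For `g ∈ H` outside `Mon n`, no nontrivial element of the torus has its conjugate by `g` in
`Mon n`, so `T n` has only regular orbits on the cosets of `Mon n` in `H` other than the base
coset. -/
theorem relIndex_Mon_modEq (hn : 1 ≤ n) {H : Subgroup (SU3 n)} (hM : Mon n ≤ H)
    (hL : H ⊓ L n ≤ Mon n) : (Mon n).relIndex H ≡ 1 [MOD (qval n + 1) ^ 2] := by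
  refine relIndex_modEq_one (T n) _ _ T_le_Mon hM _ fun g hg hgM => ?_
  rw [card_T]
  have : Nat.card {x : SU3 n // x ∈ T n ∧ g⁻¹ * x * g ∈ Mon n} = 1 := by
    rw [Nat.card_eq_one_iff_unique]
    refine ⟨⟨?_⟩, ⟨⟨1, one_mem _, by simp⟩⟩⟩
    have key : ∀ x : SU3 n, x ∈ T n → g⁻¹ * x * g ∈ Mon n → x = 1 := by
      intro x hx hy
      by_contra hx1
      have hyT := mem_T_of_conj hn hx hy (g := g) (by group)
      apply hgM
      refine cj_eq_iff.1 (Subgroup.eq_of_le_of_card_ge (fun y hy' => ?_) (by rw [card_cj]))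
      have ht : g⁻¹ * y * g ∈ T n := mem_cj.1 hy'
      have hyH : y ∈ H := by
        have := mul_mem (mul_mem hg (hM (T_le_Mon ht))) (inv_mem hg)
        convert this using 1
        group
      have hc : y * x = x * y := by
        have := T_comm ht hyT
        calc y * x = g * ((g⁻¹ * y * g) * (g⁻¹ * x * g)) * g⁻¹ := by group
          _ = x * y := by rw [this]; group
      have hyM := mem_Mon_of_comm hn hM hL hyH hx hx1 hc
      exact mem_T_of_conj hn (g := g⁻¹) ht hyM (by group)
    rintro ⟨x, hx, hx'⟩ ⟨y, hy, hy'⟩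
    exact Subtype.ext ((key x hx hx').trans (key y hy hy').symm)
  rw [this, one_mul]

/-- The transposition matrix of the last two coordinates. -/
noncomputable abbrev tr (n : ℕ) : SU3 n := pm n (Equiv.swap 1 2)

theorem tr_mat : mt (tr n) = !![1, 0, 0; 0, 0, 1; 0, 1, 0] := by
  ext i j
  rw [pm_apply]
  fin_cases i <;> fin_cases j <;> rfl

theorem tr_comm {s : SU3 n} (h : s * tr n = tr n * s) :
    mt s 0 2 = mt s 0 1 ∧ mt s 2 0 = mt s 1 0 ∧ mt s 2 1 = mt s 1 2 ∧ mt s 2 2 = mt s 1 1 := by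
  have h' : (tr n)⁻¹ * s * tr n = s := by rw [mul_assoc, h]; group
  have key : ∀ i j, mt s (Equiv.swap 1 2 i) (Equiv.swap 1 2 j) = mt s i j := by
    intro i j; rw [← conj_pm_apply, h']
  exact ⟨key 0 1, key 1 0, key 1 2, key 1 1⟩

theorem tr_comm_sum {s : SU3 n} (h : s * tr n = tr n * s) (h0 : mt s 0 0 = 1) :
    mt s 1 2 = 1 + mt s 1 1 ∧ mt s 1 0 = star (mt s 0 1) := by
  obtain ⟨h1, h2, h3, h4⟩ := tr_comm h
  have hd := mt_det s
  rw [Matrix.det_fin_three, h1, h2, h3, h4, h0] at hd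
  have hs : mt s 1 1 + mt s 1 2 = 1 := by
    by_contra hne
    apply sq_ne_one hne
    linear_combination hd + (mt s 1 1 * mt s 1 2 + mt s 1 2 ^ 2 + mt s 1 1 * mt s 0 1 * mt s 1 0 - mt s 1 2 * mt s 0 1 * mt s 1 0) * two_eq_zero' (n := n)
  have hs2 : mt s 1 2 = 1 + mt s 1 1 := by
    linear_combination hs - mt s 1 1 * two_eq_zero' (n := n)
  refine ⟨hs2, ?_⟩
  have := row_orth s 1 0
  simp [h0, h1] at this
  linear_combination this - star (mt s 0 1) * hs - star (mt s 0 1) * two_eq_zero' (n := n)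

/-- The square of such an element fixes the first axis, hence is monomial, and the entries of
`s * s` are `1 + N` and `N` up to order, where `N` is the norm of the entry `s₀₁`. -/
theorem tr_norm {H : Subgroup (SU3 n)} (hL : H ⊓ L n ≤ Mon n) {s : SU3 n}
    (hs : s ∈ H) (h : s * tr n = tr n * s) (h0 : mt s 0 0 = 1) :
    mt s 0 1 * star (mt s 0 1) = 0 ∨ mt s 0 1 * star (mt s 0 1) = 1 := by
  obtain ⟨h1, h2, h3, h4⟩ := tr_comm h
  obtain ⟨h5, h6⟩ := tr_comm_sum h h0
  have e : ∀ i j, mt (s * s) i j = mt s i 0 * mt s 0 j + mt s i 1 * mt s 1 j + mt s i 2 * mt s 2 j := by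
    intro i j; rw [mt_mul, Matrix.mul_apply, Fin.sum_univ_three]
  have h2' := two_eq_zero' (n := n)
  have hsL : s * s ∈ L n := by
    refine ⟨?_, ?_, ?_, ?_⟩ <;> rw [e] <;> simp only [h0, h1, h2, h3, h4, h5, h6]
    · linear_combination (mt s 0 1 + mt s 0 1 * mt s 1 1) * h2'
    · linear_combination (mt s 0 1 + mt s 0 1 * mt s 1 1) * h2'
    · linear_combination (star (mt s 0 1) + star (mt s 0 1) * mt s 1 1) * h2'
    · linear_combination (star (mt s 0 1) + star (mt s 0 1) * mt s 1 1) * h2'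
  obtain ⟨π, t, ht, hpt⟩ := mem_Mon.1 (hL ⟨mul_mem hs hs, hsL⟩)
  have e11 := e 1 1
  have e12 := e 1 2
  rw [hpt, pm_mul_T_apply π ht] at e11 e12
  simp only [h3, h4, h5, h6, h1] at e11 e12
  by_cases hp : (1 : Fin 3) = π 1
  · left
    have hp2 : (1 : Fin 3) ≠ π 2 := fun h => by
      have := π.injective (hp.symm.trans h); exact absurd this (by decide)
    rw [if_neg hp2] at e12
    linear_combination -e12 - (1 + mt s 1 1) * mt s 1 1 * h2'
  · right
    rw [if_neg hp] at e11
    linear_combination -e11 + (- 1 - mt s 1 1 - mt s 1 1 ^ 2) * h2'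

/-- The centralizer of the transposition `tr n` in `H` contains no elements with `s⁴ = 1` besides 1
and `tr n`. Otherwise `tr_norm` gives the entry `s₀₁` norm 1, while for `a = diag(z⁻², z, z)`, which
commutes with `tr n`, the corresponding entry of `a s a⁻¹ s` has norm `ζ + ζ⁻¹` with `ζ = z⁻³`,
which is neither 0 nor 1. -/
theorem no_commuting (hn : 1 ≤ n) {H : Subgroup (SU3 n)} (hM : Mon n ≤ H)
    (hL : H ⊓ L n ≤ Mon n) {s : SU3 n} (hsH : s ∈ H) (hst : s * tr n = tr n * s)
    (hs4 : s ^ 4 = 1) (h1' : s ≠ 1) (htr : s ≠ tr n) : False := by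
  obtain ⟨h1, h2, h3, h4'⟩ := tr_comm hst
  have h22 := two_eq_zero' (n := n)
  have e : ∀ (a b : SU3 n) i j, mt (a * b) i j =
      mt a i 0 * mt b 0 j + mt a i 1 * mt b 1 j + mt a i 2 * mt b 2 j := by
    intro a b i j; rw [mt_mul, Matrix.mul_apply, Fin.sum_univ_three]
  -- the upper left entry of `s⁴` is the fourth power of that of `s`, as `s₀₁ = s₀₂` and `s₁₀ = s₂₀`
  have h0 : mt s 0 0 = 1 := by
    have hz : mt (s * s * (s * s)) 0 0 = 1 := by
      rw [show s * s * (s * s) = s ^ 4 by rw [← sq, ← sq, ← pow_mul], hs4, mt_one, Matrix.one_apply_eq]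
    simp only [e, h1, h2, h3, h4'] at hz
    by_contra hne
    apply sq_ne_one (sq_ne_one hne)
    linear_combination hz - (2 * mt s 0 0 ^ 2 * mt s 0 1 * mt s 1 0 + 2 * mt s 0 1 ^ 2 * mt s 1 0 ^ 2 + (mt s 0 0 + mt s 1 1 + mt s 1 2) ^ 2 * mt s 0 1 * mt s 1 0) * h22
  obtain ⟨h5, h6⟩ := tr_comm_sum hst h0
  have hb0 : mt s 0 1 ≠ 0 := by
    intro hb
    have hsL : s ∈ L n := ⟨hb, h1.trans hb, by rw [h6, hb, star_zero], by rw [h2, h6, hb, star_zero]⟩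
    obtain ⟨π, t, ht, hpt⟩ := mem_Mon.1 (hL ⟨hsH, hsL⟩)
    have e11 := pm_mul_T_apply π ht 1 1
    have e12 := pm_mul_T_apply π ht 1 2
    rw [← hpt] at e11 e12
    have hcase : mt s 1 1 = 0 ∨ mt s 1 1 = 1 := by
      by_cases hp : (1 : Fin 3) = π 1
      · right
        have hp2 : (1 : Fin 3) ≠ π 2 := fun h => by
          have := π.injective (hp.symm.trans h); exact absurd this (by decide)
        rw [if_neg hp2, h5] at e12
        linear_combination e12 - h22
      · left; rw [if_neg hp] at e11; exact e11
    have hs' : mt s = !![1, 0, 0; 0, mt s 1 1, 1 + mt s 1 1; 0, 1 + mt s 1 1, mt s 1 1] := by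
      refine (Matrix.eta_fin_three (mt s)).trans ?_
      rw [h0, h1, h2, h3, h4', h6, h5, hb, star_zero]
    rcases hcase with hc | hc
    · refine htr (mt_injective ?_)
      rw [hs', hc, tr_mat, add_zero]
    · refine h1' (mt_injective ?_)
      rw [mt_one, hs', hc, Matrix.one_fin_three,
        show (1 : Fq2 n) + 1 = 0 by linear_combination h22]
  have hN := (tr_norm hL hsH hst h0).resolve_left (mul_ne_zero hb0 (by rwa [Ne, star_eq_zero]))
  obtain ⟨z, hz, hz1⟩ := exists_norm_one_ne (n := n)
  have hzz : star (z * z) * star (star (z * z)) = 1 := by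
    rw [star_star, star_mul]
    linear_combination (z * star z) * hz + hz
  set a := dg (star (z * z)) z hzz hz with ha
  have haT : a ∈ T n := dg_mem _ _
  have a0 : mt a 0 0 = star (z * z) := dg_apply _ _ 0
  have a1 : mt a 1 1 = z := dg_apply _ _ 1
  have a2 : mt a 2 2 = z := by
    rw [T_two haT, a0, a1, star_mul, star_star]
    linear_combination z * hz
  have haH : a ∈ H := hM (T_le_Mon haT)
  have hatr : a * tr n = tr n * a := by
    have hpc := pm_conj_mem_T (Equiv.swap 1 2) haT
    have : (tr n)⁻¹ * a * tr n = a := by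
      refine T_ext hpc haT fun i => ?_
      rw [conj_pm_apply]
      fin_cases i
      · rfl
      · exact a2.trans a1.symm
      · exact a1.trans a2.symm
    calc a * tr n = tr n * ((tr n)⁻¹ * a * tr n) := by group
      _ = tr n * a := by rw [this]
  -- `a` commutes with `tr n`, so `tr_norm` applies to `u` as well
  set u := a * s * a⁻¹ * s with hu
  have huH : u ∈ H := mul_mem (mul_mem (mul_mem haH hsH) (inv_mem haH)) hsH
  have c1 : Commute s (tr n) := hst
  have c2 : Commute a (tr n) := hatr
  have hutr : u * tr n = tr n * u := ((c2.mul_left c1).mul_left c2.inv_left).mul_left c1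
  have ent : ∀ i j, mt (a * s * a⁻¹) i j = mt a i i * mt s i j * star (mt a j j) := by
    intro i j
    rw [mul_T_apply (inv_mem haT), T_mul_apply haT, mt_inv, Matrix.conjTranspose_apply]
  have hζ : star z ^ 3 * star (star z ^ 3) = 1 := by
    rw [star_pow, star_star, ← mul_pow, mul_comm, hz, one_pow]
  have u0 : mt u 0 0 = 1 := by
    rw [hu, e, ent, ent, ent, h1, h2, a0, a1, a2, h0]
    linear_combination hzz + (star (z * z) * mt s 0 1 * star z * mt s 1 0) * h22
  have u1 : mt u 0 1 = mt s 0 1 * (1 + star z ^ 3) := by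
    rw [hu, e, ent, ent, ent, h1, h3, h5, a0, a1, a2, h0]
    simp only [star_mul, star_star] at hzz ⊢
    linear_combination mt s 0 1 * hzz + (mt s 0 1 * star z ^ 3 * mt s 1 1) * h22
  have hζ1 : star z ^ 3 ≠ 1 := by
    intro h
    have h' := eq_one_of_cube hn (x := star z) (by rw [star_star, mul_comm, hz]) h
    apply hz1
    rw [← star_star z, h', star_one]
  have hU := tr_norm hL huH hutr u0
  rw [u1] at hU
  set ζ := star z ^ 3
  have hU' : (mt s 0 1 * (1 + ζ)) * star (mt s 0 1 * (1 + ζ)) = ζ + star ζ := by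
    rw [star_mul', star_add, star_one]
    linear_combination (1 + ζ) * (1 + star ζ) * hN + hζ + h22
  rw [hU'] at hU
  rcases hU with hU | hU
  · exact ne_inv_self hζ hζ1 (by linear_combination hU - star ζ * h22)
  · apply hζ1
    apply eq_one_of_cube hn hζ
    have : ζ ^ 2 + 1 = ζ := by linear_combination ζ * hU - hζ
    linear_combination (ζ + 1) * this - h22


/-- If 4 divided `|H|`, the transposition would lie in a subgroup of order 4, which is abelian. -/
theorem four_not_dvd (hn : 1 ≤ n) {H : Subgroup (SU3 n)} (hM : Mon n ≤ H)
    (hL : H ⊓ L n ≤ Mon n) : ¬ 4 ∣ Nat.card H := by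
  intro h4
  have : Fact (Nat.Prime 2) := ⟨Nat.prime_two⟩
  have htH : tr n ∈ H := hM (pm_mem_Mon _)
  have ho : orderOf (⟨tr n, htH⟩ : H) = 2 := by
    apply orderOf_eq_prime
    · apply Subtype.ext
      show tr n ^ 2 = 1
      rw [sq, ← pm_mul, Equiv.swap_mul_self, pm_one]
    · intro h
      have := congrFun (congrFun (congrArg mt (congrArg Subtype.val h)) 1) 1
      rw [Subgroup.coe_one, mt_one, pm_apply] at this
      simp at this
  obtain ⟨K, hK, htK⟩ := Sylow.exists_subgroup_card_pow_succ (p := 2) (n := 1) (G := H) h4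
    (H := Subgroup.zpowers ⟨tr n, htH⟩) (by rw [Nat.card_zpowers, ho, pow_one])
  have hlt : Subgroup.zpowers (⟨tr n, htH⟩ : H) < K := by
    refine lt_of_le_of_ne htK fun h => ?_
    rw [← h, Nat.card_zpowers, ho] at hK
    norm_num at hK
  obtain ⟨s, hsK, hsz⟩ := SetLike.exists_of_lt hlt
  have hcomm := (IsPGroup.isMulCommutative_of_card_eq_prime_sq (p := 2) (G := K) hK).is_comm.comm
  have hst : s.1 * tr n = tr n * s.1 := by
    have := hcomm ⟨s, hsK⟩ ⟨⟨tr n, htH⟩, htK (Subgroup.mem_zpowers _)⟩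
    exact congrArg (fun x : K => x.1.1) this
  have hs4 : s.1 ^ 4 = 1 := by
    have := pow_card_eq_one' (x := (⟨s, hsK⟩ : K))
    rw [hK] at this
    exact congrArg (fun x : K => x.1.1) this
  refine no_commuting hn hM hL s.2 hst hs4 ?_ ?_
  · intro h
    exact hsz ((Subtype.ext h : s = 1) ▸ one_mem _)
  · intro h
    exact hsz ((Subtype.ext h : s = ⟨tr n, htH⟩) ▸ Subgroup.mem_zpowers _)

/-- An overgroup containing `L n` is everything by transitivity on unit vectors. In any other overgroup
`Mon n` has index `1 + b (q+1)²`; this index is odd by `four_not_dvd`, so it divides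
`(q-1)(q²-q+1)/3`, and `b = 0` by `arith_triangle`. -/
theorem isCoatom_Mon (hn : 1 ≤ n) : IsCoatom (Mon n) := by
  have h4 := four_le_qval hn
  refine ⟨fun h => ?_, fun H hlt => ?_⟩
  · have hc := card_Mon (n := n)
    rw [h, Subgroup.card_top, card_SU3 hn] at hc
    set q := qval n
    have : 6 * (q + 1) ^ 2 < (q + 1) * (q ^ 2 - q) * (q ^ 2 * (q ^ 3 + 1)) := by
      have h1 : 1 ≤ q ^ 2 - q := by
        have : q * 2 ≤ q ^ 2 := by rw [pow_two]; exact Nat.mul_le_mul_left q (by omega)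
        omega
      have h2 : 6 * (q + 1) < q ^ 2 * (q ^ 3 + 1) := by
        have : 16 ≤ q ^ 2 := by nlinarith
        have : 64 ≤ q ^ 3 := by nlinarith
        nlinarith
      calc 6 * (q + 1) ^ 2 = (q + 1) * 1 * (6 * (q + 1)) := by ring
        _ < (q + 1) * 1 * (q ^ 2 * (q ^ 3 + 1)) := by gcongr
        _ ≤ _ := by gcongr
    omega
  · rcases le_or_le hn hlt.le with hL | hL
    · exfalso
      have hmod := relIndex_Mon_modEq hn hlt.le hL
      have hodd := four_not_dvd hn hlt.le hL
      have hH := card_mul_relIndex hlt.le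
      have hG := H.card_mul_index
      rw [card_SU3 hn, ← hH, card_Mon] at hG
      rw [← hH, card_Mon] at hodd
      have hpos : 0 < (Mon n).relIndex H := Nat.pos_of_ne_zero fun h0 =>
        (Nat.card_pos (α := H)).ne' (by rw [← hH, h0, mul_zero])
      obtain ⟨b, hb⟩ := (Nat.modEq_iff_dvd' hpos).1 hmod.symm
      have hb' : (Mon n).relIndex H = 1 + b * (qval n + 1) ^ 2 := by
        rw [mul_comm b]; omega
      have hb0 : b = 0 := by
        have hqd := four_dvd_qval hn
        rw [hb'] at hG hodd
        set q := qval n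
        obtain ⟨p, hp⟩ : ∃ p, q = 1 + p := ⟨q - 1, by omega⟩
        have e1 : q ^ 2 - q = q * (q - 1) := by rw [Nat.mul_sub, mul_one, sq]
        have e2 : q ^ 3 + 1 = (q + 1) * (q ^ 2 - q + 1) := by
          rw [e1, hp, Nat.add_sub_cancel_left]; ring
        have key : 2 * (3 * (1 + b * (q + 1) ^ 2) * H.index) =
            q ^ 3 * ((q - 1) * (q ^ 2 - q + 1)) := by
          apply Nat.eq_of_mul_eq_mul_left (show 0 < (q + 1) ^ 2 by positivity)
          calc _ = 6 * (q + 1) ^ 2 * (1 + b * (q + 1) ^ 2) * H.index := by ring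
            _ = _ := hG
            _ = (q + 1) * (q * (q - 1)) * (q ^ 2 * ((q + 1) * (q ^ 2 - q + 1))) := by
              rw [← e2, ← e1]
            _ = _ := by ring
        have hpow : q = 2 ^ (2 ^ n) := rfl
        have hodd' : (3 * (1 + b * (q + 1) ^ 2)) % 2 = 1 := by
          rcases Nat.even_or_odd (3 * (1 + b * (q + 1) ^ 2)) with he | ho
          · exfalso
            obtain ⟨k, hk⟩ := he
            apply hodd
            exact ⟨(q + 1) ^ 2 * k, by linear_combination 2 * (q + 1) ^ 2 * hk⟩
          · exact Nat.odd_iff.1 ho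
        have hcop : (q ^ 3).Coprime (3 * (1 + b * (q + 1) ^ 2)) := by
          rw [hpow]
          refine Nat.Coprime.pow_left _ (Nat.Coprime.pow_left _ ?_)
          exact (Nat.coprime_two_left).2 (Nat.odd_iff.2 hodd')
        have hd : q ^ 3 ∣ 2 * H.index := by
          apply hcop.dvd_of_dvd_mul_left
          exact ⟨(q - 1) * (q ^ 2 - q + 1), by rw [← key]; ring⟩
        obtain ⟨c, hc⟩ := hd
        refine arith_triangle q b c h4 (qval_mod_three hn) ?_
        apply Nat.eq_of_mul_eq_mul_left (show 0 < q ^ 3 by positivity)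
        rw [← key]
        calc _ = 3 * (1 + b * (q + 1) ^ 2) * (q ^ 3 * c) := by ring
          _ = _ := by rw [← hc]; ring
      rw [hb0, zero_mul, add_zero] at hb'
      exact hlt.not_ge (Subgroup.relIndex_eq_one.1 hb')
    · refine eq_top_of_L_le hn hL fun π => hlt.le (pm_mem_Mon π)

end maximal

end

/-! ### Self-centralizing abelian subgroups -/

section frobenius
variable {G : Type*} [Group G] [Finite G] {C : Subgroup G}

theorem pow_div_prime {y : G} {r : ℕ} (hr : r.Prime) (hd : r ∣ orderOf y) :
    orderOf (y ^ (orderOf y / r)) = r := by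
  have h0 := orderOf_pos y
  rw [orderOf_pow_of_dvd (Nat.div_pos (Nat.le_of_dvd h0 hd) hr.pos).ne' (Nat.div_dvd_of_dvd hd)]
  exact Nat.div_div_self hd h0.ne'

/-- If `C` contains the centralizers of its nontrivial elements, then the elements of prime order
dividing `|C|` of the normalizer of `C` lie in `C`, because they fix a nontrivial point of `C`. -/
theorem mem_of_prime_pow (hC : ∀ c ∈ C, c ≠ 1 → ∀ g, g * c = c * g → g ∈ C) {y : G}
    (hy : y ∈ Subgroup.normalizer (C : Set G)) {r : ℕ} (hr : r.Prime) (hrC : r ∣ Nat.card C)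
    (ho : orderOf y = r) : y ∈ C := by
  have : Fact r.Prime := ⟨hr⟩
  set Z : Subgroup (Subgroup.normalizer (C : Set G)) := Subgroup.zpowers ⟨y, hy⟩
  have hZ : IsPGroup r Z := by
    refine IsPGroup.of_card (n := 1) ?_
    rw [Nat.card_zpowers, pow_one, ← ho]
    exact (Subgroup.orderOf_mk y hy)
  let : MulAction Z C := MulAction.compHom C (C.normalizerMonoidHom.comp Z.subtype)
  have hs : ∀ (z : Z) (c : C), ((z • c : C) : G) = z.1.1 * c * z.1.1⁻¹ := fun z c => rfl
  obtain ⟨c, hc, h1⟩ := hZ.exists_fixed_point_of_prime_dvd_card_of_fixed_point C hrC (a := 1)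
    (fun z => by apply Subtype.ext; rw [hs]; simp)
  refine hC c c.2 (fun h => h1 (Subtype.ext h.symm)) y ?_
  have := congrArg Subtype.val (hc ⟨⟨y, hy⟩, Subgroup.mem_zpowers _⟩)
  rw [hs] at this
  exact mul_inv_eq_iff_eq_mul.1 this

theorem mem_of_pow_card (hC : ∀ c ∈ C, c ≠ 1 → ∀ g, g * c = c * g → g ∈ C) {y : G}
    (hy : y ∈ Subgroup.normalizer (C : Set G)) (hm : y ^ Nat.card C = 1) : y ∈ C := by
  by_cases h1 : y = 1
  · rw [h1]; exact one_mem _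
  obtain ⟨r, hr, hd⟩ := Nat.exists_prime_and_dvd (fun h => h1 (orderOf_eq_one_iff.1 h))
  have ho := pow_div_prime hr hd
  refine hC _ (mem_of_prime_pow hC (pow_mem hy _) hr
    (hd.trans (orderOf_dvd_of_pow_eq_one hm)) ho) ?_ y ?_
  · intro h
    rw [h, orderOf_one] at ho
    exact hr.one_lt.ne ho
  · rw [← pow_succ, ← pow_succ']

/-- The normalizer `N` of a self-centralizing subgroup `C` has index `1` modulo `|C|` in every
subgroup containing it. -/
theorem relIndex_normalizer_modEq (hcomm : ∀ x ∈ C, ∀ y ∈ C, x * y = y * x)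
    (hC : ∀ c ∈ C, c ≠ 1 → ∀ g, g * c = c * g → g ∈ C) {J : Subgroup G}
    (hJ : Subgroup.normalizer (C : Set G) ≤ J) :
    (Subgroup.normalizer (C : Set G)).relIndex J ≡ 1 [MOD Nat.card C] := by
  refine relIndex_modEq_one C _ J Subgroup.le_normalizer hJ _ fun g _ hg => ?_
  have : Nat.card {x : G // x ∈ C ∧ g⁻¹ * x * g ∈ Subgroup.normalizer (C : Set G)} = 1 := by
    rw [Nat.card_eq_one_iff_exists]
    refine ⟨⟨1, one_mem _, by simp⟩, ?_⟩
    rintro ⟨x, hx, hxN⟩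
    apply Subtype.ext
    by_contra hx1
    change x ≠ 1 at hx1
    apply hg
    have hxm : x ^ Nat.card C = 1 := by
      have := pow_card_eq_one' (x := (⟨x, hx⟩ : C))
      exact congrArg Subtype.val this
    have hxC : g⁻¹ * x * g ∈ C := by
      refine mem_of_pow_card hC hxN ?_
      have := conj_pow (a := g⁻¹) (b := x) (i := Nat.card C)
      rw [inv_inv] at this
      rw [this, hxm]; simp
    have h1 : g⁻¹ * x * g ≠ 1 := by
      intro h
      apply hx1
      calc x = g * (g⁻¹ * x * g) * g⁻¹ := by group
        _ = 1 := by rw [h]; group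
    rw [← cj_eq_iff]
    refine (Subgroup.eq_of_le_of_card_ge ?_ ?_)
    · intro y hy
      rw [mem_cj] at hy
      refine hC x hx hx1 y ?_
      have := hcomm _ hy _ hxC
      calc y * x = g * ((g⁻¹ * y * g) * (g⁻¹ * x * g)) * g⁻¹ := by group
        _ = g * ((g⁻¹ * x * g) * (g⁻¹ * y * g)) * g⁻¹ := by rw [this]
        _ = x * y := by group
    · rw [card_cj]
  rw [this, one_mul]

/-- The quotient `N(C) / C` acts on `C`, freely on the nontrivial elements. -/
theorem relIndex_lt_card (hC : ∀ c ∈ C, c ≠ 1 → ∀ g, g * c = c * g → g ∈ C)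
    (h1 : 1 < Nat.card C) :
    C.relIndex (Subgroup.normalizer (C : Set G)) < Nat.card C := by
  obtain ⟨c, hc⟩ : ∃ c : C, c ≠ 1 := by
    have := (Finite.one_lt_card_iff_nontrivial (α := C)).1 h1
    exact exists_ne 1
  have hc1 : c.1 ≠ 1 := fun h => hc (Subtype.ext h)
  set N := Subgroup.normalizer (C : Set G)
  have hmem : ∀ g : N, g.1 * c * g.1⁻¹ ∈ C := fun g => (Subgroup.mem_normalizer_iff.1 g.2 _).1 c.2
  -- distinct cosets conjugate `c` to distinct nontrivial elements
  let f : N ⧸ C.subgroupOf N → {x : C // x ≠ 1} := fun w =>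
    ⟨⟨w.out.1 * c * w.out.1⁻¹, hmem _⟩, fun h => hc1 (conj_eq_one_iff.1 (congrArg Subtype.val h))⟩
  have hf : Function.Injective f := by
    intro v w h
    have h' : v.out.1 * c * v.out.1⁻¹ = w.out.1 * c * w.out.1⁻¹ :=
      congrArg (fun x : {x : C // x ≠ 1} => x.1.1) h
    rw [← QuotientGroup.out_eq' v, ← QuotientGroup.out_eq' w, QuotientGroup.eq,
      Subgroup.mem_subgroupOf]
    refine hC c c.2 hc1 _ ?_
    show v.out.1⁻¹ * w.out.1 * c = c * (v.out.1⁻¹ * w.out.1)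
    calc v.out.1⁻¹ * w.out.1 * c = v.out.1⁻¹ * (w.out.1 * c * w.out.1⁻¹) * w.out.1 := by group
      _ = v.out.1⁻¹ * (v.out.1 * c * v.out.1⁻¹) * w.out.1 := by rw [h']
      _ = c * (v.out.1⁻¹ * w.out.1) := by group
  have := Nat.card_le_card_of_injective f hf
  refine lt_of_le_of_lt this ?_
  exact Finite.card_subtype_lt (p := fun x : C => x ≠ 1) (x := 1) (by simp)

end frobenius

/-! ### Irreducibility of elements of prime order dividing `q² - q + 1` -/

section
open scoped Matrix

section singer
variable {n : ℕ}

/-- The matrix `X` leaves no proper nonzero subspace invariant. -/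
def Irr (X : Matrix (Fin 3) (Fin 3) (Fq2 n)) : Prop :=
  ∀ W : Submodule (Fq2 n) (Fin 3 → Fq2 n), (∀ w ∈ W, X *ᵥ w ∈ W) → W = ⊥ ∨ W = ⊤

theorem prime_ne_three (hn : 1 ≤ n) {r : ℕ} (hd : r ∣ qval n ^ 2 - qval n + 1) : r ≠ 3 := by
  rintro rfl
  have h3 := qval_mod_three hn
  have e : (qval n ^ 2 - qval n + 1) = qval n * (qval n - 1) + 1 := by
    rw [Nat.mul_sub, mul_one, sq]
  obtain ⟨k, hk⟩ : ∃ k, qval n - 1 = 3 * k := ⟨(qval n - 1) / 3, by omega⟩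
  rw [e, hk] at hd
  have : 3 ∣ 1 := (Nat.dvd_add_right (Dvd.intro (qval n * k) (by ring))).1 hd
  omega

theorem root_mod {r : ℕ} (hd : r ∣ qval n ^ 2 - qval n + 1) :
    ((qval n : ℕ) : ZMod r) ^ 2 - (qval n : ℕ) + 1 = 0 := by
  have h := (ZMod.natCast_eq_zero_iff _ r).2 hd
  rw [← h]
  have hle : qval n ≤ qval n ^ 2 := Nat.le_self_pow (by norm_num) _
  push_cast [Nat.cast_sub hle]
  ring

/-- The order of `q²` modulo `r` is 3. -/
theorem eq_zero_or_three (hn : 1 ≤ n) {r : ℕ} (hr : r.Prime)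
    (hd : r ∣ qval n ^ 2 - qval n + 1) {d : ℕ} (hd3 : d ≤ 3)
    (h : (qval n ^ 2) ^ d ≡ 1 [MOD r]) : d = 0 ∨ d = 3 := by
  have : Fact r.Prime := ⟨hr⟩
  have h0 := root_mod hd
  have h' := (ZMod.natCast_eq_natCast_iff _ _ _).2 h
  rw [Nat.cast_pow, Nat.cast_pow, Nat.cast_one] at h'
  set a : ZMod r := ((qval n : ℕ) : ZMod r)
  have h3 : (3 : ZMod r) ≠ 0 := by
    intro h3
    have : ((3 : ℕ) : ZMod r) = 0 := by exact_mod_cast h3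
    rw [ZMod.natCast_eq_zero_iff, Nat.prime_dvd_prime_iff_eq hr Nat.prime_three] at this
    exact prime_ne_three hn hd this
  interval_cases d
  · left; rfl
  · exfalso; apply h3; linear_combination (a + 2) * h0 - (a + 1) * h'
  · exfalso; apply h3; linear_combination h0 + (a - 2) * (h' - a * (a + 1) * h0)
  · right; rfl

theorem card_submodule (W : Submodule (Fq2 n) (Fin 3 → Fq2 n)) :
    Nat.card W = (qval n ^ 2) ^ Module.finrank (Fq2 n) W := by
  rw [Module.natCard_eq_pow_finrank (K := Fq2 n), card_Fq2]

/-- The orbits of `x` on `W` have length 1 or `r`. -/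
theorem card_modEq_fixed {x : SU3 n} {r : ℕ} (hr : r.Prime) (ho : orderOf x = r)
    (W : Submodule (Fq2 n) (Fin 3 → Fq2 n)) (hW : ∀ w ∈ W, mt x *ᵥ w ∈ W) :
    Nat.card W ≡ Nat.card {w : W // mt x *ᵥ w.1 = w.1} [MOD r] := by
  have : Fact r.Prime := ⟨hr⟩
  let f : Function.End W := fun w => ⟨mt x *ᵥ w.1, hW _ w.2⟩
  have hk : ∀ (k : ℕ) (w : W), ((f ^ k : Function.End W) w).1 = mt (x ^ k) *ᵥ w.1 := by
    intro k
    induction k with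
    | zero =>
      intro w
      refine Eq.trans ?_ (Matrix.one_mulVec w.1).symm
      rfl
    | succ k ih =>
      intro w
      have e : f ^ (k + 1) = f ^ k * f := pow_succ f k
      have e' : x ^ (k + 1) = x ^ k * x := pow_succ x k
      rw [e, e', mt_mul, ← Matrix.mulVec_mulVec]
      exact ih (f w)
  have hf : f ^ r ^ 1 = 1 := by
    funext w
    apply Subtype.ext
    rw [hk, pow_one, ← ho, pow_orderOf_eq_one, mt_one, Matrix.one_mulVec]
    rfl
  let := Fintype.ofFinite W
  have := Equiv.Perm.card_fixedPoints_modEq hf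
  rw [← Nat.card_eq_fintype_card, ← Nat.card_eq_fintype_card] at this
  refine this.trans ?_
  have e : Nat.card (Function.fixedPoints f) = Nat.card {w : W // mt x *ᵥ w.1 = w.1} :=
    Nat.card_congr (Equiv.subtypeEquivRight fun w => Subtype.ext_iff)
  rw [e]

/-- By `card_modEq_fixed` and `eq_zero_or_three`, `x ≠ 1` has no nonzero fixed vector. So the number of
elements `(q ^ 2) ^ d` of an invariant subspace is `1` modulo `r`, and its dimension `d` is 0 or 3. -/
theorem irr_of_prime (hn : 1 ≤ n) {x : SU3 n} {r : ℕ} (hr : r.Prime)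
    (hd : r ∣ qval n ^ 2 - qval n + 1) (ho : orderOf x = r) : Irr (mt x) := by
  have hV : Module.finrank (Fq2 n) (Fin 3 → Fq2 n) = 3 := by simp
  have : Fact r.Prime := ⟨hr⟩
  have h6 : (qval n ^ 2) ^ 3 ≡ 1 [MOD r] := by
    rw [← ZMod.natCast_eq_natCast_iff]
    push_cast
    have h0 := root_mod hd
    push_cast at h0
    set a : ZMod r := (2 : ZMod r) ^ 2 ^ n
    linear_combination (a ^ 3 - 1) * (a + 1) * h0
  -- the fixed space of `x`
  let F : Submodule (Fq2 n) (Fin 3 → Fq2 n) := LinearMap.eqLocus (mt x).mulVecLin LinearMap.id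
  have hF : ∀ w, w ∈ F ↔ mt x *ᵥ w = w := fun w => Iff.rfl
  have hFle : Module.finrank (Fq2 n) F ≤ 3 := (Submodule.finrank_le F).trans hV.le
  have hF0 : Module.finrank (Fq2 n) F = 0 := by
    have h1 := card_modEq_fixed hr ho ⊤ (fun _ _ => trivial)
    have h2 : Nat.card {w : (⊤ : Submodule (Fq2 n) (Fin 3 → Fq2 n)) // mt x *ᵥ w.1 = w.1} =
        Nat.card F :=
      Nat.card_congr ⟨fun w => ⟨w.1.1, w.2⟩, fun w => ⟨⟨w.1, trivial⟩, w.2⟩, fun _ => rfl,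
        fun _ => rfl⟩
    rw [h2, card_submodule, card_submodule, finrank_top, hV] at h1
    refine (eq_zero_or_three hn hr hd hFle (h1.symm.trans h6)).resolve_right fun h3 => ?_
    have htop : F = ⊤ := Submodule.eq_top_of_finrank_eq (h3.trans hV.symm)
    have hx : x = 1 := by
      apply mt_injective
      rw [mt_one]
      apply Matrix.ext_of_mulVec_single
      intro i
      rw [Matrix.one_mulVec]
      exact (hF _).1 (htop ▸ Submodule.mem_top)
    rw [hx, orderOf_one] at ho
    exact hr.one_lt.ne ho
  have hFbot : F = ⊥ := Submodule.finrank_eq_zero.1 hF0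
  intro W hW
  have h1 := card_modEq_fixed hr ho W hW
  have h2 : Nat.card {w : W // mt x *ᵥ w.1 = w.1} = 1 := by
    rw [Nat.card_eq_one_iff_exists]
    refine ⟨⟨0, by simp⟩, fun w => ?_⟩
    have : w.1.1 ∈ F := w.2
    rw [hFbot, Submodule.mem_bot] at this
    exact Subtype.ext (Subtype.ext this)
  rw [h2, card_submodule] at h1
  rcases eq_zero_or_three hn hr hd ((Submodule.finrank_le W).trans hV.le) h1 with h | h
  · left; exact Submodule.finrank_eq_zero.1 h
  · right; exact Submodule.eq_top_of_finrank_eq (h.trans hV.symm)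

end singer

end

/-! ### The Singer torus -/

section
open scoped Matrix

section singer
variable {n : ℕ}

/-- A finite domain of characteristic 2 with `Q²` elements and a nontrivial involution `s` is a field
with `Q + 1` elements of norm `1`. -/
theorem ring_norm_one {R : Type*} [Ring R] [Finite R] [IsDomain R] (h2 : (2 : R) = 0) (s : R → R)
    (hadd : ∀ x y, s (x + y) = s x + s y) (hmul : ∀ x y, s (x * y) = s y * s x) (h1 : s 1 = 1)
    (hinv : ∀ x, s (s x) = x) (hnt : ∃ x, s x ≠ x) {Q : ℕ} (hQ : Nat.card R = Q ^ 2)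
    (hQ1 : 1 < Q) :
    (∀ x y : R, x * y = y * x) ∧ Nat.card {x : R // x * s x = 1} = Q + 1 := by
  have hf := Finite.isDomain_to_isField R
  refine ⟨hf.mul_comm, ?_⟩
  let := hf.toField
  have : CharP R 2 := CharTwo.of_one_ne_zero_of_two_eq_zero one_ne_zero h2
  have h0 : s 0 = 0 := by simpa using hadd 0 0
  let S : FieldInvolution R :=
    { s := { toFun := s, map_one' := h1, map_zero' := h0, map_add' := hadd,
             map_mul' := fun x y => (hmul x y).trans (hf.mul_comm _ _) }
      invol := hinv
      nontriv := hnt }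
  have := S.card_norm_eq hQ hQ1 1 S.s.map_one
  rw [if_neg one_ne_zero] at this
  exact this

/-- The algebra of matrices commuting with `X`. -/
noncomputable abbrev Zc (X : Matrix (Fin 3) (Fin 3) (Fq2 n)) :
    Subalgebra (Fq2 n) (Matrix (Fin 3) (Fin 3) (Fq2 n)) :=
  Subalgebra.centralizer (Fq2 n) {X}

theorem mem_Zc {X Y : Matrix (Fin 3) (Fin 3) (Fq2 n)} : Y ∈ Zc X ↔ X * Y = Y * X := by
  simp [Subalgebra.mem_centralizer_iff]

/-- Schur's lemma: nonzero elements of the commuting algebra are injective. -/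
theorem Zc_injective {X : Matrix (Fin 3) (Fin 3) (Fq2 n)} (hX : Irr X) {Y} (hY : Y ∈ Zc X)
    (h0 : Y ≠ 0) {v : Fin 3 → Fq2 n} (hv : Y *ᵥ v = 0) : v = 0 := by
  have h := hX (LinearMap.ker Y.mulVecLin) (fun w hw => by
    rw [LinearMap.mem_ker, Matrix.mulVecLin_apply] at hw ⊢
    rw [Matrix.mulVec_mulVec, ← mem_Zc.1 hY, ← Matrix.mulVec_mulVec, hw, Matrix.mulVec_zero])
  rcases h with h | h
  · have : v ∈ LinearMap.ker Y.mulVecLin := hv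
    rwa [h, Submodule.mem_bot] at this
  · exfalso
    apply h0
    apply Matrix.ext_of_mulVec_single
    intro i
    have : Pi.single i 1 ∈ LinearMap.ker Y.mulVecLin := h ▸ Submodule.mem_top
    rw [Matrix.zero_mulVec]
    exact this

/-- Evaluation at the first basis vector is a bijection from the commuting algebra to `F_{q²}³`:
injective by Schur's lemma, surjective by irreducibility. -/
theorem card_Zc {X : Matrix (Fin 3) (Fin 3) (Fq2 n)} (hX : Irr X) :
    Nat.card (Zc X) = (qval n ^ 3) ^ 2 := by
  let v : Fin 3 → Fq2 n := Pi.single 0 1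
  have hv : v ≠ 0 := fun h => by
    have := congrFun h 0
    simp [v] at this
  let f : Zc X →ₗ[Fq2 n] (Fin 3 → Fq2 n) :=
    { toFun := fun Y => Y.1 *ᵥ v
      map_add' := fun Y Y' => Matrix.add_mulVec _ _ _
      map_smul' := fun c Y => Matrix.smul_mulVec _ _ _ }
  have hf : ∀ Y, f Y = Y.1 *ᵥ v := fun _ => rfl
  have hinj : Function.Injective f := by
    rw [← LinearMap.ker_eq_bot, LinearMap.ker_eq_bot']
    intro Y hY
    by_contra h
    exact hv (Zc_injective hX Y.2 (fun h' => h (Subtype.ext h')) hY)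
  have hsurj : LinearMap.range f = ⊤ := by
    refine (hX _ ?_).resolve_left fun h => ?_
    · rintro _ ⟨Y, rfl⟩
      refine ⟨⟨X, mem_Zc.2 rfl⟩ * Y, ?_⟩
      rw [hf, hf, Matrix.mulVec_mulVec]
      rfl
    · have : f 1 ∈ LinearMap.range f := ⟨1, rfl⟩
      rw [h, Submodule.mem_bot, hf] at this
      apply hv
      simpa using this
  rw [Nat.card_eq_of_bijective f ⟨hinj, LinearMap.range_eq_top.1 hsurj⟩, Nat.card_fun, card_Fq2]
  simp; ring

theorem Zc_star {x : SU3 n} {Y} (hY : Y ∈ Zc (mt x)) : Yᴴ ∈ Zc (mt x) := by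
  rw [mem_Zc] at hY ⊢
  have h := congrArg Matrix.conjTranspose hY
  rw [Matrix.conjTranspose_mul, Matrix.conjTranspose_mul] at h
  calc mt x * Yᴴ = mt x * (Yᴴ * (mt x)ᴴ) * mt x := by
        rw [mul_assoc, mul_assoc, ct_mul_mt, mul_one]
    _ = mt x * ((mt x)ᴴ * Yᴴ) * mt x := by rw [h]
    _ = Yᴴ * mt x := by rw [← mul_assoc, mt_mul_ct, one_mul]

/-- The commuting algebra is a finite domain, hence a field, with `q⁶` elements; conjugate
transposition is a nontrivial involution of it and `Y * Yᴴ` is the associated norm. -/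
theorem Zc_comm_card {x : SU3 n} (hX : Irr (mt x)) :
    (∀ Y ∈ Zc (mt x), ∀ Y' ∈ Zc (mt x), Y * Y' = Y' * Y) ∧
      Nat.card {Y : Matrix (Fin 3) (Fin 3) (Fq2 n) // Y ∈ Zc (mt x) ∧ Y * Yᴴ = 1} =
        qval n ^ 3 + 1 := by
  have hfin : Finite (Matrix (Fin 3) (Fin 3) (Fq2 n)) :=
    inferInstanceAs (Finite (Fin 3 → Fin 3 → Fq2 n))
  have hnt : Nontrivial (Zc (mt x)) := by
    refine ⟨0, 1, fun h => ?_⟩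
    have := congrArg Subtype.val h
    exact zero_ne_one this
  have : NoZeroDivisors (Zc (mt x)) := by
    refine ⟨fun {Y Y'} h => ?_⟩
    by_contra! hne
    apply hne.2
    apply Subtype.ext
    apply Matrix.ext_of_mulVec_single
    intro i
    rw [ZeroMemClass.coe_zero, Matrix.zero_mulVec]
    refine Zc_injective hX Y.2 (fun h' => hne.1 (Subtype.ext h')) ?_
    have h' : Y.1 * Y'.1 = 0 := congrArg Subtype.val h
    rw [Matrix.mulVec_mulVec, h', Matrix.zero_mulVec]
  have : IsDomain (Zc (mt x)) := NoZeroDivisors.to_isDomain _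
  have h2 : (2 : Zc (mt x)) = 0 := by
    have : algebraMap (Fq2 n) (Zc (mt x)) 2 = 2 := map_ofNat _ 2
    rw [← this, two_eq_zero', map_zero]
  obtain ⟨h1, h3⟩ := ring_norm_one h2 (fun Y : Zc (mt x) => (⟨Y.1ᴴ, Zc_star Y.2⟩ : Zc (mt x)))
    (fun Y Y' => Subtype.ext (Matrix.conjTranspose_add _ _))
    (fun Y Y' => Subtype.ext (Matrix.conjTranspose_mul _ _))
    (Subtype.ext Matrix.conjTranspose_one)
    (fun Y => Subtype.ext (Matrix.conjTranspose_conjTranspose _))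
    (by
      obtain ⟨z, hz⟩ := (inv2 n).nontriv
      refine ⟨algebraMap _ _ z, fun h => hz ?_⟩
      have := congrFun (congrFun (congrArg Subtype.val h) 0) 0
      have e : (algebraMap (Fq2 n) (Matrix (Fin 3) (Fin 3) (Fq2 n)) z) 0 0 = z := by
        simp [Matrix.algebraMap_matrix_apply]
      have h' : star ((algebraMap (Fq2 n) (Matrix (Fin 3) (Fin 3) (Fq2 n)) z) 0 0) =
        (algebraMap (Fq2 n) (Matrix (Fin 3) (Fin 3) (Fq2 n)) z) 0 0 := this
      rwa [e] at h')
    (card_Zc hX) (Nat.one_lt_pow (by norm_num) (one_lt_qval n))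
  refine ⟨fun Y hY Y' hY' => congrArg Subtype.val (h1 ⟨Y, hY⟩ ⟨Y', hY'⟩), ?_⟩
  rw [← h3]
  exact Nat.card_congr ⟨fun Y => ⟨⟨Y.1, Y.2.1⟩, Subtype.ext Y.2.2⟩,
    fun Y => ⟨Y.1.1, Y.1.2, congrArg Subtype.val Y.2⟩, fun _ => rfl, fun _ => rfl⟩

theorem exists_cube_root (hn : 1 ≤ n) {d : Fq2 n} (hd : d * star d = 1) :
    ∃ z : Fq2 n, z * star z = 1 ∧ z ^ 3 = d := by
  have hc : (Nat.card (normOne n)).Coprime 3 := by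
    rw [card_normOne, Nat.coprime_comm, Nat.Prime.coprime_iff_not_dvd Nat.prime_three]
    have := qval_mod_three hn
    omega
  have hd0 : d ≠ 0 := by rintro rfl; simp at hd
  obtain ⟨z, hz⟩ := (powCoprime hc).surjective ⟨Units.mk0 d hd0, hd⟩
  refine ⟨z.1.1, mem_normOne.1 z.2, ?_⟩
  have := congrArg (fun u : normOne n => u.1.1) hz
  simpa using this

theorem eq_of_cube_eq (hn : 1 ≤ n) {z w : Fq2 n} (hz : z * star z = 1) (hw : w * star w = 1)
    (h : z ^ 3 = w ^ 3) : z = w := by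
  have h1 : z * star w = 1 := by
    refine eq_one_of_cube hn ?_ ?_
    · rw [star_mul, star_star]
      linear_combination hz + z * star z * hw
    · rw [mul_pow, h, ← mul_pow, hw, one_pow]
  calc z = z * star w * w := by rw [mul_assoc, mul_comm (star w), hw, mul_one]
    _ = w := by rw [h1, one_mul]

theorem det_norm {Y : Matrix (Fin 3) (Fin 3) (Fq2 n)} (hY : Y * Yᴴ = 1) :
    Y.det * star Y.det = 1 := by
  rw [← Matrix.det_conjTranspose, ← Matrix.det_mul, hY, Matrix.det_one]

/-- The unitary matrices commuting with `x` are the products of scalars of norm 1 with the centralizer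
of `x` in `SU(3,q)`, uniquely, because cubing is bijective on the elements of norm 1. -/
theorem card_centralizer_singer (hn : 1 ≤ n) {x : SU3 n} (hX : Irr (mt x)) :
    Nat.card (Subgroup.centralizer ({x} : Set (SU3 n))) = qval n ^ 2 - qval n + 1 := by
  have hmem : ∀ g : SU3 n, g ∈ Subgroup.centralizer ({x} : Set (SU3 n)) ↔ mt g ∈ Zc (mt x) := by
    intro g
    rw [Subgroup.mem_centralizer_singleton_iff, mem_Zc, ← mt_mul, ← mt_mul]
    exact ⟨fun h => congrArg mt h.symm, fun h => (mt_injective h).symm⟩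
  have key : Nat.card (normOne n × Subgroup.centralizer ({x} : Set (SU3 n))) =
      qval n ^ 3 + 1 := by
    rw [← (Zc_comm_card hX).2]
    have hu : ∀ (z : Fq2 n), z * star z = 1 → ∀ g ∈ Subgroup.centralizer ({x} : Set (SU3 n)),
        z • mt g ∈ Zc (mt x) ∧ (z • mt g) * (z • mt g)ᴴ = 1 := by
      intro z hz g hg
      refine ⟨Subalgebra.smul_mem _ ((hmem g).1 hg) z, ?_⟩
      rw [Matrix.conjTranspose_smul, Matrix.smul_mul, Matrix.mul_smul, mt_mul_ct, smul_smul, hz,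
        one_smul]
    refine Nat.card_eq_of_bijective
      (fun p => ⟨p.1.1.1 • mt p.2.1, hu _ (mem_normOne.1 p.1.2) _ p.2.2⟩) ⟨?_, ?_⟩
    · rintro ⟨z, g⟩ ⟨z', g'⟩ h
      have h' : z.1.1 • mt g.1 = z'.1.1 • mt g'.1 := congrArg Subtype.val h
      have hdet := congrArg Matrix.det h'
      rw [Matrix.det_smul, Matrix.det_smul, mt_det, mt_det, mul_one, mul_one,
        Fintype.card_fin] at hdet
      have hz : z.1.1 = z'.1.1 :=
        eq_of_cube_eq hn (mem_normOne.1 z.2) (mem_normOne.1 z'.2) hdet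
      refine Prod.ext (Subtype.ext (Units.ext hz)) (Subtype.ext (mt_injective ?_))
      rw [← hz] at h'
      exact smul_right_injective _ z.1.ne_zero h'
    · rintro ⟨Y, hY, hY1⟩
      obtain ⟨z, hz, hz3⟩ := exists_cube_root hn (det_norm hY1)
      have hz' : star z * star (star z) = 1 := by rw [star_star, mul_comm, hz]
      have h1 : (star z • Y) * (star z • Y)ᴴ = 1 := by
        rw [Matrix.conjTranspose_smul, Matrix.smul_mul, Matrix.mul_smul, hY1, smul_smul, hz',
          one_smul]
      have h2 : (star z • Y).det = 1 := by
        rw [Matrix.det_smul, Fintype.card_fin, ← hz3, ← mul_pow, mul_comm, hz, one_pow]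
      have hz0 : z ≠ 0 := by rintro rfl; simp at hz
      refine ⟨⟨⟨Units.mk0 z hz0, hz⟩, ⟨mk3 _ h1 h2, (hmem _).2 ?_⟩⟩, ?_⟩
      · rw [mt_mk3]
        exact Subalgebra.smul_mem _ hY _
      · apply Subtype.ext
        show z • (star z • Y) = Y
        rw [smul_smul, hz, one_smul]
  rw [Nat.card_prod, card_normOne] at key
  apply Nat.eq_of_mul_eq_mul_left (show 0 < qval n + 1 by omega)
  rw [key]
  set q := qval n
  have hle : q ≤ q ^ 2 := Nat.le_self_pow (by norm_num) q
  zify [hle]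
  ring

theorem centralizer_singer_comm {x : SU3 n} (hX : Irr (mt x)) :
    ∀ g ∈ Subgroup.centralizer ({x} : Set (SU3 n)),
      ∀ h ∈ Subgroup.centralizer ({x} : Set (SU3 n)), g * h = h * g := by
  intro g hg h hh
  rw [Subgroup.mem_centralizer_singleton_iff] at hg hh
  apply mt_injective
  exact (Zc_comm_card hX).1 (mt g) (mem_Zc.2 (congrArg mt hg.symm)) (mt h)
    (mem_Zc.2 (congrArg mt hh.symm))

/-- The Singer subgroup `C`, the centralizer of an element of prime order dividing `q² - q + 1`:
it is abelian of order `q² - q + 1` and contains the centralizers of its nontrivial elements. -/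
theorem exists_singer (hn : 1 ≤ n) : ∃ C : Subgroup (SU3 n),
    Nat.card C = qval n ^ 2 - qval n + 1 ∧ (∀ g ∈ C, ∀ h ∈ C, g * h = h * g) ∧
    ∀ c ∈ C, c ≠ 1 → ∀ g, g * c = c * g → g ∈ C := by
  have h4 := four_le_qval hn
  have hle : qval n < qval n ^ 2 := by nlinarith
  obtain ⟨r, hr, hd⟩ := Nat.exists_prime_and_dvd (show qval n ^ 2 - qval n + 1 ≠ 1 by omega)
  have : Fact r.Prime := ⟨hr⟩
  have e2 : qval n ^ 3 + 1 = (qval n + 1) * (qval n ^ 2 - qval n + 1) := by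
    have hle' := hle.le
    zify [hle']; ring
  have hdG : r ∣ Nat.card (SU3 n) := by
    rw [card_SU3 hn, e2]
    exact hd.trans (Dvd.intro_left ((qval n + 1) * (qval n ^ 2 - qval n) * qval n ^ 2 * (qval n + 1))
      (by ring))
  obtain ⟨x, hx⟩ := exists_prime_orderOf_dvd_card' r hdG
  have hirr := irr_of_prime hn hr hd hx
  refine ⟨Subgroup.centralizer {x}, card_centralizer_singer hn hirr,
    centralizer_singer_comm hirr, ?_⟩
  intro c hc hc1 g hg
  obtain ⟨s, hs, hds⟩ := Nat.exists_prime_and_dvd (fun h => hc1 (orderOf_eq_one_iff.1 h))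
  set y := c ^ (orderOf c / s) with hy
  have ho : orderOf y = s := pow_div_prime hs hds
  have hdm : s ∣ qval n ^ 2 - qval n + 1 := by
    rw [← card_centralizer_singer hn hirr]
    exact hds.trans (Subgroup.orderOf_dvd_natCard _ hc)
  have hirr' := irr_of_prime hn hs hdm ho
  -- the centralizers of `x` and of the power `y` of `c` have the same order
  have heq : Subgroup.centralizer ({x} : Set (SU3 n)) = Subgroup.centralizer {y} := by
    refine Subgroup.eq_of_le_of_card_ge ?_ ?_
    · intro h hh
      rw [Subgroup.mem_centralizer_singleton_iff]
      exact centralizer_singer_comm hirr _ hh _ (pow_mem hc _)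
    · rw [card_centralizer_singer hn hirr, card_centralizer_singer hn hirr']
  rw [heq, Subgroup.mem_centralizer_singleton_iff]
  exact (show Commute g c from hg).pow_right _

end singer

end

/-! ### Elements of order 3 -/

section
open scoped Matrix

section three
variable {n : ℕ}

/-- The permutation matrix of the 3-cycle `0 ↦ 1 ↦ 2 ↦ 0`. -/
noncomputable def sg (n : ℕ) : SU3 n := pm n (finRotate 3)

/-- The centralizer of the 3-cycle consists of the circulant matrices. -/
theorem mem_centralizer_sg {g : SU3 n} :
    g ∈ Subgroup.centralizer ({sg n} : Set (SU3 n)) ↔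
      mt g = !![mt g 0 0, mt g 2 0, mt g 1 0; mt g 1 0, mt g 0 0, mt g 2 0;
        mt g 2 0, mt g 1 0, mt g 0 0] := by
  rw [Subgroup.mem_centralizer_singleton_iff]
  have h : g * sg n = sg n * g ↔ (sg n)⁻¹ * g * sg n = g := by
    rw [mul_assoc, inv_mul_eq_iff_eq_mul]
  have r0 : (finRotate 3) 0 = 1 := rfl
  have r1 : (finRotate 3) 1 = 2 := rfl
  have r2 : (finRotate 3) 2 = 0 := rfl
  rw [h]
  constructor
  · intro h
    have key : ∀ i j, mt g (finRotate 3 i) (finRotate 3 j) = mt g i j := by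
      intro i j
      rw [← conj_pm_apply]
      exact congrFun (congrFun (congrArg mt h) i) j
    have k00 := key 0 0
    have k11 := key 1 1
    have k01 := key 0 1
    have k12 := key 1 2
    have k20 := key 2 0
    have k02 := key 0 2
    have k10 := key 1 0
    have k21 := key 2 1
    simp only [r0, r1, r2] at *
    refine (Matrix.eta_fin_three (mt g)).trans ?_
    rw [k00] at k11
    rw [k11, k00, k01, k20, k10, ← k02]
  · intro h
    apply mt_injective
    ext i j
    refine (conj_pm_apply _ _ _ _).trans ?_
    rw [h]
    fin_cases i <;> fin_cases j <;> simp

/-- An eigenvalue of a circulant matrix, as a linear form in the entries. -/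
noncomputable def lam (o : Fq2 n) (g : SU3 n) : Fq2 n :=
  mt g 0 0 + o * mt g 1 0 + o ^ 2 * mt g 2 0

theorem lam_mul {o : Fq2 n} (ho : o ^ 2 + o + 1 = 0) {g h : SU3 n}
    (hg : g ∈ Subgroup.centralizer ({sg n} : Set (SU3 n))) :
    lam o (g * h) = lam o g * lam o h := by
  rw [mem_centralizer_sg] at hg
  have e : ∀ i, mt (g * h) i 0 = mt g i 0 * mt h 0 0 + mt g i 1 * mt h 1 0 + mt g i 2 * mt h 2 0 := by
    intro i; rw [mt_mul, Matrix.mul_apply, Fin.sum_univ_three]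
  have g01 := congrFun (congrFun hg 0) 1
  have g02 := congrFun (congrFun hg 0) 2
  have g11 := congrFun (congrFun hg 1) 1
  have g12 := congrFun (congrFun hg 1) 2
  have g21 := congrFun (congrFun hg 2) 1
  have g22 := congrFun (congrFun hg 2) 2
  simp at g01 g02 g11 g12 g21 g22
  rw [lam, lam, lam, e, e, e, g01, g02, g11, g12, g21, g22]
  generalize mt g 0 0 = a
  generalize mt g 1 0 = b
  generalize mt g 2 0 = c
  generalize mt h 0 0 = a'
  generalize mt h 1 0 = b'
  generalize mt h 2 0 = c'
  grind

theorem lam_star {o : Fq2 n} (ho : o ^ 2 + o + 1 = 0) (hs : star o = o) {g : SU3 n}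
    (hg : g ∈ Subgroup.centralizer ({sg n} : Set (SU3 n))) :
    lam o g * star (lam (o ^ 2) g) = 1 := by
  rw [mem_centralizer_sg] at hg
  have h1 := col_orth g 0 0
  have h2 := col_orth g 0 1
  have h3 := col_orth g 1 0
  have g01 := congrFun (congrFun hg 0) 1
  have g11 := congrFun (congrFun hg 1) 1
  have g21 := congrFun (congrFun hg 2) 1
  simp at g01 g11 g21
  rw [g01, g11, g21] at h2 h3
  simp only [lam, star_add, star_mul', star_pow, hs]
  rw [if_pos rfl] at h1
  rw [if_neg (by decide)] at h2 h3
  generalize mt g 0 0 = a at *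
  generalize mt g 1 0 = b at *
  generalize mt g 2 0 = c at *
  generalize star a = a' at *
  generalize star b = b' at *
  generalize star c = c' at *
  grind

theorem lam_det {o : Fq2 n} (ho : o ^ 2 + o + 1 = 0) {g : SU3 n}
    (hg : g ∈ Subgroup.centralizer ({sg n} : Set (SU3 n))) :
    lam 1 g * lam o g * lam (o ^ 2) g = 1 := by
  rw [mem_centralizer_sg] at hg
  have hd := mt_det g
  rw [hg, Matrix.det_fin_three] at hd
  simp only [lam]
  simp at hd
  generalize mt g 0 0 = a at *
  generalize mt g 1 0 = b at *
  generalize mt g 2 0 = c at *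
  grind

/-- The eigenvalue `lam o` determines the eigenvalue `lam (o ^ 2)` by unitarity and then `lam 1` by the
determinant, and the three eigenvalues determine the entries. -/
theorem lam_injective {o : Fq2 n} (ho : o ^ 2 + o + 1 = 0) (hs : star o = o) {g h : SU3 n}
    (hg : g ∈ Subgroup.centralizer ({sg n} : Set (SU3 n)))
    (hh : h ∈ Subgroup.centralizer ({sg n} : Set (SU3 n))) (he : lam o g = lam o h) : g = h := by
  have h2 := two_eq_zero' (n := n)
  have g1 := lam_star ho hs hg
  have h1 := lam_star ho hs hh
  have gd := lam_det ho hg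
  have hd := lam_det ho hh
  have e2 : lam (o ^ 2) g = lam (o ^ 2) h := by
    apply star_injective
    rw [← he] at h1
    exact mul_left_cancel₀ (left_ne_zero_of_mul_eq_one h1) (g1.trans h1.symm)
  have e0 : lam 1 g = lam 1 h := by
    rw [← he, ← e2] at hd
    rw [mul_assoc] at gd hd
    exact mul_right_cancel₀ (right_ne_zero_of_mul_eq_one gd) (gd.trans hd.symm)
  clear g1 h1 gd hd
  simp only [lam] at he e2 e0
  rw [mem_centralizer_sg] at hg hh
  have k0 : mt g 0 0 = mt h 0 0 := by grind
  have k1 : mt g 1 0 = mt h 1 0 := by grind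
  have k2 : mt g 2 0 = mt h 2 0 := by grind
  apply mt_injective
  rw [hg, hh, k0, k1, k2]

/-- A circulant matrix is unitary as soon as its first row has norm 1 and is orthogonal to the
other two. -/
theorem circ_unitary {a b c : Fq2 n} (k1 : a * star a + b * star b + c * star c = 1)
    (k2 : a * star c + b * star a + c * star b = 0)
    (k3 : c * star a + a * star b + b * star c = 0) :
    !![a, c, b; b, a, c; c, b, a] * (!![a, c, b; b, a, c; c, b, a])ᴴ = 1 := by
  have e : (!![a, c, b; b, a, c; c, b, a])ᴴ = !![star a, star b, star c; star c, star a, star b;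
      star b, star c, star a] := by
    ext i j
    rw [Matrix.conjTranspose_apply]
    fin_cases i <;> fin_cases j <;> rfl
  rw [e]
  generalize star a = a' at *
  generalize star b = b' at *
  generalize star c = c' at *
  rw [Matrix.one_fin_three, Matrix.mul_fin_three]
  have l1 : a * a' + c * c' + b * b' = 1 := by linear_combination k1
  have l2 : a * b' + c * a' + b * c' = 0 := by linear_combination k3
  have l3 : a * c' + c * b' + b * a' = 0 := by linear_combination k2
  have l4 : b * a' + a * c' + c * b' = 0 := by linear_combination k2
  have l5 : b * b' + a * a' + c * c' = 1 := by linear_combination k1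
  have l6 : b * c' + a * b' + c * a' = 0 := by linear_combination k3
  have l7 : c * a' + b * c' + a * b' = 0 := by linear_combination k3
  have l8 : c * b' + b * a' + a * c' = 0 := by linear_combination k2
  have l9 : c * c' + b * b' + a * a' = 1 := by linear_combination k1
  rw [l1, l2, l3, l4, l5, l6, l7, l8, l9]

set_option maxHeartbeats 1000000 in
/-- Every `u ≠ 0` is an eigenvalue of a unitary circulant matrix of determinant 1. -/
theorem lam_surjective {o : Fq2 n} (ho : o ^ 2 + o + 1 = 0) (hs : star o = o) {u : Fq2 n}
    (hu : u ≠ 0) :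
    ∃ g ∈ Subgroup.centralizer ({sg n} : Set (SU3 n)), lam o g = u := by
  have h2 := two_eq_zero' (n := n)
  set w := u⁻¹ with hw
  have huw : u * w = 1 := mul_inv_cancel₀ hu
  have huw' : star u * star w = 1 := by rw [← star_mul', huw, star_one]
  -- the inverse Fourier transform of the eigenvalues `star u * u⁻¹`, `u`, `star u⁻¹`
  obtain ⟨a, ha⟩ : ∃ a, a = star u * w + u + star w := ⟨_, rfl⟩
  obtain ⟨b, hb⟩ : ∃ b, b = star u * w + o ^ 2 * u + o * star w := ⟨_, rfl⟩
  obtain ⟨c, hc⟩ : ∃ c, c = star u * w + o * u + o ^ 2 * star w := ⟨_, rfl⟩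
  have ha' : star a = u * star w + star u + w := by
    rw [ha]; simp only [star_add, star_mul', star_star]
  have hb' : star b = u * star w + o ^ 2 * star u + o * w := by
    rw [hb]; simp only [star_add, star_mul', star_star, star_pow, hs]
  have hc' : star c = u * star w + o * star u + o ^ 2 * w := by
    rw [hc]; simp only [star_add, star_mul', star_star, star_pow, hs]
  clear_value w
  have k1 : a * star a + b * star b + c * star c = 1 := by
    generalize star a = a' at *
    generalize star b = b' at *
    generalize star c = c' at *
    generalize star u = u' at *
    generalize star w = w' at *
    clear hw hu
    grind
  have k2 : a * star c + b * star a + c * star b = 0 := by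
    generalize star a = a' at *
    generalize star b = b' at *
    generalize star c = c' at *
    generalize star u = u' at *
    generalize star w = w' at *
    clear hw hu k1
    grind
  have k3 : c * star a + a * star b + b * star c = 0 := by
    have := congrArg star k2
    simp only [star_add, star_mul', star_star, star_zero] at this
    linear_combination this
  have k4 : a ^ 3 + b ^ 3 + c ^ 3 - 3 * a * b * c = 1 := by
    clear ha' hb' hc' k1 k2 k3
    generalize star u = u' at *
    generalize star w = w' at *
    clear hw hu
    grind
  have hU := circ_unitary k1 k2 k3
  have hD : (!![a, c, b; b, a, c; c, b, a]).det = 1 := by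
    rw [Matrix.det_fin_three]
    simp
    linear_combination k4
  refine ⟨mk3 _ hU hD, ?_, ?_⟩
  · rw [mem_centralizer_sg, mt_mk3]
    simp
  · rw [lam, mt_mk3]
    simp
    rw [ha, hb, hc]
    generalize star u = u'
    generalize star w = w'
    clear * - ho h2
    grind

/-- The centralizer of the 3-cycle is in bijection with the multiplicative group of `F_{q²}` by
`lam o`. -/
theorem card_centralizer_sg (hn : 1 ≤ n) :
    Nat.card (Subgroup.centralizer ({sg n} : Set (SU3 n))) = qval n ^ 2 - 1 := by
  obtain ⟨o, ho, hs, -⟩ := exists_omega hn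
  rw [← card_Fq2, ← Nat.card_units]
  refine Nat.card_eq_of_bijective
    (fun g => Units.mk0 (lam o g.1) (left_ne_zero_of_mul_eq_one (lam_star ho hs g.2))) ⟨?_, ?_⟩
  · intro g h e
    exact Subtype.ext (lam_injective ho hs g.2 h.2 (congrArg Units.val e))
  · intro u
    obtain ⟨g, hg, h⟩ := lam_surjective ho hs u.ne_zero
    exact ⟨⟨g, hg⟩, Units.ext h⟩

theorem centralizer_sg_comm (hn : 1 ≤ n) :
    ∀ g ∈ Subgroup.centralizer ({sg n} : Set (SU3 n)),
      ∀ h ∈ Subgroup.centralizer ({sg n} : Set (SU3 n)), g * h = h * g := by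
  obtain ⟨o, ho, hs, -⟩ := exists_omega hn
  intro g hg h hh
  refine lam_injective ho hs (mul_mem hg hh) (mul_mem hh hg) ?_
  rw [lam_mul ho hg, lam_mul ho hh, mul_comm]

theorem sg_mem : sg n ∈ Subgroup.centralizer ({sg n} : Set (SU3 n)) :=
  Subgroup.mem_centralizer_singleton_iff.2 rfl

theorem lam_sg (o : Fq2 n) : lam o (sg n) = o := by
  rw [lam, sg, pm_apply, pm_apply, pm_apply, if_neg (by decide), if_pos (by decide),
    if_neg (by decide)]
  ring

theorem lam_one (o : Fq2 n) : lam o (1 : SU3 n) = 1 := by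
  rw [lam, mt_one]; simp

/-- For an element of order 3 of the centralizer, `lam o` is a primitive cube root of unity. -/
theorem eq_sg_of_order_three (hn : 1 ≤ n) {g : SU3 n}
    (hg : g ∈ Subgroup.centralizer ({sg n} : Set (SU3 n))) (h : orderOf g = 3) :
    g = sg n ∨ g = sg n * sg n := by
  obtain ⟨o, ho, hs, -⟩ := exists_omega hn
  have h3 : g * (g * g) = 1 := by
    have h1 := pow_orderOf_eq_one g
    rw [h] at h1
    exact (pow_three g).symm.trans h1
  have h3' : lam o g * (lam o g * lam o g) = 1 := by
    rw [← lam_mul ho hg, ← lam_mul ho hg, h3, lam_one]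
  have hz : (lam o g - 1) * ((lam o g - o) * (lam o g - o ^ 2)) = 0 := by
    generalize lam o g = l at *
    grind
  rcases mul_eq_zero.1 hz with h1 | h1
  · exfalso
    have : g = 1 := lam_injective ho hs hg (one_mem _) (by rw [lam_one]; exact sub_eq_zero.1 h1)
    rw [this, orderOf_one] at h
    norm_num at h
  · rcases mul_eq_zero.1 h1 with h1 | h1
    · left
      exact lam_injective ho hs hg sg_mem (by rw [lam_sg]; exact sub_eq_zero.1 h1)
    · right
      refine lam_injective ho hs hg (mul_mem sg_mem sg_mem) ?_
      rw [lam_mul ho sg_mem, lam_sg, ← sq]; exact sub_eq_zero.1 h1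

theorem orderOf_sg (hn : 1 ≤ n) : orderOf (sg n) = 3 := by
  have := (orderOf_pm_T hn (finRotate 3) (one_mem (T n))).2 (by decide)
  rwa [mul_one] at this

theorem sg_sq_conj : sg n * sg n = (pm n (Equiv.swap 0 1))⁻¹ * sg n * pm n (Equiv.swap 0 1) := by
  rw [sg, ← pm_inv, ← pm_mul, ← pm_mul, ← pm_mul]
  congr 1
  decide

/-- The centralizer of the 3-cycle has index prime to 3, so it contains a conjugate of every element of
order 3. Its only elements of order 3 are the 3-cycle and its square, which are conjugate by a
transposition. -/
theorem conj_sg (hn : 1 ≤ n) {τ : SU3 n} (hτ : orderOf τ = 3) : ∃ g, τ = g⁻¹ * sg n * g := by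
  have : Fact (Nat.Prime 3) := ⟨Nat.prime_three⟩
  have hidx : ¬ 3 ∣ (Subgroup.centralizer ({sg n} : Set (SU3 n))).index := by
    have h := (Subgroup.centralizer ({sg n} : Set (SU3 n))).card_mul_index
    rw [card_SU3 hn, card_centralizer_sg hn] at h
    have h4 := four_le_qval hn
    have h3 := qval_mod_three hn
    have e : (Subgroup.centralizer ({sg n} : Set (SU3 n))).index =
        qval n ^ 3 * (qval n ^ 3 + 1) := by
      have hpos : 0 < qval n ^ 2 - 1 := by
        have : 4 ^ 2 ≤ qval n ^ 2 := Nat.pow_le_pow_left h4 2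
        omega
      apply Nat.eq_of_mul_eq_mul_left hpos
      rw [h]
      have h1 : qval n ≤ qval n ^ 2 := Nat.le_self_pow (by norm_num) _
      have h2 : 1 ≤ qval n ^ 2 := by omega
      set q := qval n
      zify [h1, h2]
      ring
    rw [e, Nat.dvd_iff_mod_eq_zero, Nat.mul_mod, Nat.add_mod, Nat.pow_mod, h3]
    norm_num
  obtain ⟨g, hg⟩ := exists_cj_le (Subgroup.centralizer ({sg n} : Set (SU3 n)))
    (Subgroup.zpowers τ) 3 (IsPGroup.of_card (n := 1) (by rw [Nat.card_zpowers, hτ, pow_one])) hidx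
  have hm := mem_cj.1 (hg (Subgroup.mem_zpowers τ))
  have ho : orderOf (g⁻¹ * τ * g) = 3 := by
    refine Eq.trans ?_ hτ
    have := orderOf_injective (MulAut.conj g⁻¹).toMonoidHom (MulAut.conj g⁻¹).injective τ
    simpa using this
  have ht : ∀ x, g⁻¹ * τ * g = x → τ = g * x * g⁻¹ := by
    rintro x rfl; group
  rcases eq_sg_of_order_three hn hm ho with h | h
  · exact ⟨g⁻¹, by rw [inv_inv]; exact ht _ h⟩
  · refine ⟨pm n (Equiv.swap 0 1) * g⁻¹, ?_⟩
    rw [ht _ h, sg_sq_conj]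
    group

/-- The elements of order 3 form one conjugacy class. -/
theorem orderOf_three_iff (hn : 1 ≤ n) {σ : SU3 n} (hσ : orderOf σ = 3) (τ : SU3 n) :
    orderOf τ = 3 ↔ ∃ g, τ = g⁻¹ * σ * g := by
  constructor
  · intro hτ
    obtain ⟨g, hg⟩ := conj_sg hn hσ
    obtain ⟨h, hh⟩ := conj_sg hn hτ
    refine ⟨g⁻¹ * h, ?_⟩
    rw [hg, hh]
    group
  · rintro ⟨g, rfl⟩
    refine Eq.trans ?_ hσ
    have := orderOf_injective (MulAut.conj g⁻¹).toMonoidHom (MulAut.conj g⁻¹).injective σ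
    simpa using this

theorem centralizer_three (hn : 1 ≤ n) {σ : SU3 n} (hσ : orderOf σ = 3) :
    Nat.card (Subgroup.centralizer ({σ} : Set (SU3 n))) = qval n ^ 2 - 1 ∧
    ∀ x ∈ Subgroup.centralizer ({σ} : Set (SU3 n)),
      ∀ y ∈ Subgroup.centralizer ({σ} : Set (SU3 n)), x * y = y * x := by
  obtain ⟨g, hg⟩ := conj_sg hn hσ
  have e : Subgroup.centralizer ({σ} : Set (SU3 n)) =
      cj g⁻¹ (Subgroup.centralizer ({sg n} : Set (SU3 n))) := by
    ext x
    rw [mem_cj, Subgroup.mem_centralizer_singleton_iff, Subgroup.mem_centralizer_singleton_iff, hg,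
      inv_inv]
    constructor
    · intro h
      calc g * x * g⁻¹ * sg n = g * (x * (g⁻¹ * sg n * g)) * g⁻¹ := by group
        _ = g * (g⁻¹ * sg n * g * x) * g⁻¹ := by rw [h]
        _ = _ := by group
    · intro h
      calc x * (g⁻¹ * sg n * g) = g⁻¹ * (g * x * g⁻¹ * sg n) * g := by group
        _ = g⁻¹ * (sg n * (g * x * g⁻¹)) * g := by rw [h]
        _ = _ := by group
  rw [e]
  refine ⟨by rw [card_cj, card_centralizer_sg hn], fun x hx y hy => ?_⟩
  rw [mem_cj] at hx hy
  have := centralizer_sg_comm hn _ hx _ hy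
  calc x * y = g⁻¹ * ((g⁻¹)⁻¹ * x * g⁻¹ * ((g⁻¹)⁻¹ * y * g⁻¹)) * g := by group
    _ = g⁻¹ * ((g⁻¹)⁻¹ * y * g⁻¹ * ((g⁻¹)⁻¹ * x * g⁻¹)) * g := by rw [this]
    _ = y * x := by group

end three

end

/-! ### The normalizer of the Singer torus -/

section singerNormalizer
variable {n : ℕ}

/-- `C` is an abelian subgroup of order `q² - q + 1` containing the centralizers of its nontrivial
elements (a Singer torus). -/
structure IsSinger (C : Subgroup (SU3 n)) : Prop where
  card : Nat.card C = qval n ^ 2 - qval n + 1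
  comm : ∀ g ∈ C, ∀ h ∈ C, g * h = h * g
  cent : ∀ c ∈ C, c ≠ 1 → ∀ g, g * c = c * g → g ∈ C

theorem thirteen_le (hn : 1 ≤ n) : 13 ≤ qval n ^ 2 - qval n + 1 := by
  have h4 := four_le_qval hn
  have : qval n * 4 ≤ qval n ^ 2 := by rw [sq]; exact Nat.mul_le_mul_left _ h4
  omega

theorem card_SU3' (hn : 1 ≤ n) : Nat.card (SU3 n) =
    (qval n ^ 2 - qval n + 1) * (qval n ^ 3 * (qval n + 1) ^ 2 * (qval n - 1)) := by
  rw [card_SU3 hn]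
  have h4 := four_le_qval hn
  generalize qval n = q at *
  obtain ⟨p, rfl⟩ : ∃ p, q = p + 1 := ⟨q - 1, by omega⟩
  have e : (p + 1) ^ 2 - (p + 1) = p ^ 2 + p := by
    have : (p + 1) ^ 2 = p ^ 2 + p + (p + 1) := by ring
    omega
  rw [e, Nat.add_sub_cancel]
  ring

/-- The index of the Singer torus is 3 modulo `q² - q + 1`. -/
theorem m_dvd (q : ℕ) (hq : 1 ≤ q) :
    ((q : ℤ) ^ 2 - q + 1) ∣ ((q ^ 3 * (q + 1) ^ 2 * (q - 1) : ℕ) : ℤ) - 3 := by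
  refine ⟨q ^ 4 + 2 * q ^ 3 - 3 * q - 3, ?_⟩
  push_cast [Nat.cast_sub hq]
  ring

variable {C : Subgroup (SU3 n)}

theorem IsSinger.index_eq (hn : 1 ≤ n) (hC : IsSinger C) :
    C.index = qval n ^ 3 * (qval n + 1) ^ 2 * (qval n - 1) := by
  have h := C.card_mul_index
  rw [hC.card, card_SU3' hn] at h
  exact Nat.eq_of_mul_eq_mul_left (by have := thirteen_le hn; omega) h

/-- The index `e` of `C` in `N(C)` is less than `m = q² - q + 1`, and `N(C)` has index `1` modulo `m`
in the whole group. Since the index of `C` is 3 modulo `m`, `e = 3`. -/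
theorem IsSinger.relIndex (hn : 1 ≤ n) (hC : IsSinger C) :
    C.relIndex (Subgroup.normalizer (C : Set (SU3 n))) = 3 := by
  have h13 := thirteen_le hn
  have hlt := relIndex_lt_card hC.cent (by rw [hC.card]; omega)
  have h1 := relIndex_normalizer_modEq hC.comm hC.cent (J := ⊤) le_top
  rw [Subgroup.relIndex_top_right] at h1
  have h2 := Subgroup.relIndex_mul_index (Subgroup.le_normalizer (H := C))
  rw [hC.index_eq hn] at h2
  rw [hC.card] at hlt h1
  have h3 := m_dvd (qval n) (by have := four_le_qval hn; omega)
  rw [← h2] at h3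
  rw [Nat.modEq_iff_dvd] at h1
  rw [← m_cast] at h3
  set e := C.relIndex (Subgroup.normalizer (C : Set (SU3 n)))
  set i := (Subgroup.normalizer (C : Set (SU3 n))).index
  set m := qval n ^ 2 - qval n + 1
  have h4 : (m : ℤ) ∣ (e : ℤ) - 3 := by
    have h5 : (e : ℤ) - 3 = (((e * i : ℕ) : ℤ) - 3) + e * (((1 : ℕ) : ℤ) - i) := by
      rw [Nat.cast_mul, Nat.cast_one]; ring
    rw [h5]
    exact dvd_add h3 (h1.mul_left (e : ℤ))
  have h5 : (e : ℤ) - 3 = 0 := Int.eq_zero_of_abs_lt_dvd h4 (by rw [abs_lt]; constructor <;> omega)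
  omega

theorem IsSinger.card_normalizer (hn : 1 ≤ n) (hC : IsSinger C) :
    Nat.card (Subgroup.normalizer (C : Set (SU3 n))) = 3 * (qval n ^ 2 - qval n + 1) := by
  rw [← card_mul_relIndex (Subgroup.le_normalizer (H := C)), hC.relIndex hn, hC.card, mul_comm]

theorem coprime_three (hn : 1 ≤ n) : Nat.Coprime 3 (qval n ^ 2 - qval n + 1) :=
  (Nat.Prime.coprime_iff_not_dvd Nat.prime_three).2 fun h => prime_ne_three hn h rfl

theorem IsSinger.index_coprime (hn : 1 ≤ n) (hC : IsSinger C) :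
    C.index.Coprime (Nat.card C) := by
  rw [hC.index_eq hn, hC.card]
  obtain ⟨t, ht⟩ := m_dvd (qval n) (by have := four_le_qval hn; omega)
  rw [← m_cast] at ht
  rw [← Nat.isCoprime_iff_coprime]
  have h3 := Nat.isCoprime_iff_coprime.2 (coprime_three hn)
  obtain ⟨x, y, hxy⟩ := h3
  refine ⟨x, y - x * t, ?_⟩
  rw [Nat.cast_ofNat] at hxy
  linear_combination hxy + x * ht

theorem IsSinger.normalizer_normalizer (hn : 1 ≤ n) (hC : IsSinger C) :
    Subgroup.normalizer (Subgroup.normalizer (C : Set (SU3 n)) : Set (SU3 n)) =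
      Subgroup.normalizer (C : Set (SU3 n)) := by
  apply normalizer_eq_self
  rw [hC.relIndex hn, hC.card]
  exact coprime_three hn

/-- A prime divisor `r` of `q² - q + 1` exceeds 3. -/
theorem three_lt (hn : 1 ≤ n) {r : ℕ} (hr : r.Prime) (hd : r ∣ qval n ^ 2 - qval n + 1) : 3 < r := by
  have h3 := prime_ne_three hn hd
  have h2 : r ≠ 2 := by
    rintro rfl
    obtain ⟨k, hk⟩ := four_dvd_qval hn
    have e : (qval n ^ 2 - qval n + 1) = qval n * (qval n - 1) + 1 := by
      rw [Nat.mul_sub, mul_one, sq]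
    rw [e] at hd
    have : 2 ∣ 1 := (Nat.dvd_add_right (Dvd.intro (2 * k * (qval n - 1)) (by rw [hk]; ring))).1 hd
    omega
  have := hr.two_le
  omega

/-- The elements of `N(C)` outside `C` have order 3: the cube of such an element lies in `C` and is
centralized by it, so it is trivial. -/
theorem IsSinger.orderOf_three_iff (hn : 1 ≤ n) (hC : IsSinger C) {g : SU3 n}
    (hg : g ∈ Subgroup.normalizer (C : Set (SU3 n))) : orderOf g = 3 ↔ g ∉ C := by
  constructor
  · intro h hgC
    have h1 := pow_card_of_mem hgC
    have h2 := orderOf_dvd_of_pow_eq_one h1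
    rw [h, hC.card] at h2
    exact prime_ne_three hn h2 rfl
  · intro hgC
    have h1 := pow_relIndex_mem le_rfl hg
    rw [hC.relIndex hn] at h1
    refine orderOf_eq_prime_iff.2 ⟨?_, fun h => hgC (h ▸ one_mem C)⟩
    by_contra h3
    exact hgC (hC.cent _ h1 h3 g (by rw [← pow_succ, ← pow_succ']))

/-- The Singer normalizer contains `2 (q² - q + 1)` elements of order 3, namely those outside
the torus. -/
theorem IsSinger.card_order_three (hn : 1 ≤ n) (hC : IsSinger C) :
    Nat.card {ν : SU3 n // ν ∈ Subgroup.normalizer (C : Set (SU3 n)) ∧ orderOf ν = 3} =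
      2 * (qval n ^ 2 - qval n + 1) := by
  have hs : {ν : SU3 n | ν ∈ Subgroup.normalizer (C : Set (SU3 n)) ∧ orderOf ν = 3} =
      (Subgroup.normalizer (C : Set (SU3 n)) : Set (SU3 n)) \ C := by
    ext ν
    constructor
    · rintro ⟨h1, h2⟩
      exact ⟨h1, (hC.orderOf_three_iff hn h1).1 h2⟩
    · rintro ⟨h1, h2⟩
      exact ⟨h1, (hC.orderOf_three_iff hn h1).2 h2⟩
  have h1 : Nat.card {ν : SU3 n // ν ∈ Subgroup.normalizer (C : Set (SU3 n)) ∧ orderOf ν = 3} =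
      ((Subgroup.normalizer (C : Set (SU3 n)) : Set (SU3 n)) \ C).ncard := by
    rw [← hs]
    exact Nat.card_coe_set_eq _
  have h2 : (C : Set (SU3 n)).ncard = qval n ^ 2 - qval n + 1 := hC.card
  have h3 : (Subgroup.normalizer (C : Set (SU3 n)) : Set (SU3 n)).ncard =
      3 * (qval n ^ 2 - qval n + 1) := hC.card_normalizer hn
  rw [h1, Set.ncard_sdiff (SetLike.coe_subset_coe.2 Subgroup.le_normalizer), h2, h3]
  omega

/-- The case `q = 4` of maximality: no overgroup of the Singer normalizer has order 1560. -/
theorem IsSinger.card_ne (hn : 1 ≤ n) (h4 : qval n = 4) (hC : IsSinger C) {H : Subgroup (SU3 n)}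
    (hH : Subgroup.normalizer (C : Set (SU3 n)) ≤ H) : Nat.card H ≠ 1560 := by
  intro hcard
  have hCH : C ≤ H := Subgroup.le_normalizer.trans hH
  have hm : qval n ^ 2 - qval n + 1 = 13 := by rw [h4]; norm_num
  -- an element of order 3
  obtain ⟨s, hs, hs3⟩ : ∃ s ∈ Subgroup.normalizer (C : Set (SU3 n)), orderOf s = 3 := by
    have h1 := hC.card_order_three hn
    rw [hm] at h1
    obtain ⟨⟨⟨s, hs⟩⟩, -⟩ := Nat.card_pos_iff.1 (h1 ▸ (by norm_num : 0 < 2 * 13))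
    exact ⟨s, hs⟩
  have hcs := centralizer_three hn hs3
  rw [h4] at hcs
  set s' : H := ⟨s, hH hs⟩
  have hs' : orderOf s' = 3 := (Subgroup.orderOf_mk s _).trans hs3
  set P : Subgroup H := Subgroup.zpowers s'
  have hP : Nat.card P = 3 := (Nat.card_zpowers s').trans hs'
  have hcen : ∀ x ∈ Subgroup.centralizer (P : Set H), x.1 ∈ Subgroup.centralizer ({s} : Set (SU3 n)) := by
    intro x hx
    rw [Subgroup.mem_centralizer_singleton_iff]
    exact congrArg Subtype.val (Subgroup.mem_centralizer_iff.1 hx s' (Subgroup.mem_zpowers s')).symm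
  have hcard15 : Nat.card (Subgroup.centralizer (P : Set H)) ∣ 15 := by
    have h1 : (Subgroup.centralizer (P : Set H)).map H.subtype ≤
        Subgroup.centralizer ({s} : Set (SU3 n)) := by
      rintro _ ⟨x, hx, rfl⟩
      exact hcen x hx
    have h2 := Subgroup.card_dvd_of_le h1
    rw [Subgroup.card_map_of_injective H.subtype_injective] at h2
    exact h2.trans (by rw [hcs.1]; norm_num)
  have hrel : (Subgroup.centralizer (P : Set H)).relIndex (Subgroup.normalizer (P : Set H)) ∣ 2 := by
    have key := Subgroup.card_dvd_of_injective _
      (QuotientGroup.kerLift_injective P.normalizerMonoidHom)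
    rw [Subgroup.normalizerMonoidHom_ker, ← Subgroup.index, ← Subgroup.relIndex] at key
    have : IsCyclic P := inferInstance
    rw [IsCyclic.card_mulAut, hP] at key
    exact key
  have hmul : Nat.card (Subgroup.centralizer (P : Set H)) *
      (Subgroup.centralizer (P : Set H)).relIndex (Subgroup.normalizer (P : Set H)) =
      Nat.card (Subgroup.normalizer (P : Set H)) :=
    card_mul_relIndex (Subgroup.centralizer_le_normalizer _)
  have hdvd : Nat.card (Subgroup.normalizer (P : Set H)) ∣ 30 := by
    rw [← hmul]
    exact mul_dvd_mul hcard15 hrel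
  have hnorm : Nat.card (Subgroup.normalizer (C.subgroupOf H : Set H)) = 39 := by
    have e : Subgroup.normalizer (C.subgroupOf H : Set H) =
        (Subgroup.normalizer (C : Set (SU3 n))).subgroupOf H := by
      ext x
      rw [Subgroup.mem_subgroupOf, Subgroup.mem_normalizer_iff, Subgroup.mem_normalizer_iff]
      constructor
      · intro h y
        constructor
        · intro hy
          exact (h ⟨y, hCH hy⟩).1 hy
        · intro hy
          have hyH : y ∈ H := by
            have := H.mul_mem (H.mul_mem (H.inv_mem x.2) (hCH hy)) x.2
            simpa [mul_assoc] using this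
          exact (h ⟨y, hyH⟩).2 hy
      · intro h y
        exact h y
    rw [e, Nat.card_congr (Subgroup.subgroupOfEquivOfLe hH).toEquiv, hC.card_normalizer hn, hm]
  refine no_1560 (G := H) hcard (C.subgroupOf H) P ?_ hnorm ?_ hP hdvd ?_
  · rw [Nat.card_congr (Subgroup.subgroupOfEquivOfLe hCH).toEquiv, hC.card, hm]
  · intro c hc h1 g hg
    exact hC.cent c hc (fun h => h1 (Subtype.ext h)) g (congrArg Subtype.val hg)
  · intro h30
    refine ⟨?_, fun x hx y hy => Subtype.ext (hcs.2 _ (hcen x hx) _ (hcen y hy))⟩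
    rw [h30] at hmul
    have h2 := Nat.le_of_dvd (by norm_num) hrel
    have h15 := Nat.le_of_dvd (by norm_num) hcard15
    nlinarith

/-- In an overgroup `H`, `N(C)` has index `1` modulo `q² - q + 1`. By `arith_singer` this leaves only
`N(C)`, the whole group, and `|H| = 1560` for `q = 4`, which is excluded by `no_1560`. -/
theorem IsSinger.isCoatom (hn : 1 ≤ n) (hC : IsSinger C) :
    IsCoatom (Subgroup.normalizer (C : Set (SU3 n))) := by
  have h13 := thirteen_le hn
  have h4 := four_le_qval hn
  constructor
  · intro h
    have h1 := Subgroup.relIndex_mul_index (Subgroup.le_normalizer (H := C))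
    rw [hC.index_eq hn, hC.relIndex hn, Subgroup.index_eq_one.2 h] at h1
    have h2 : 4 ^ 3 * (4 + 1) ^ 2 * 1 ≤ qval n ^ 3 * (qval n + 1) ^ 2 * (qval n - 1) := by
      gcongr; omega
    omega
  · intro H hlt
    have h1 := relIndex_normalizer_modEq hC.comm hC.cent hlt.le
    rw [hC.card] at h1
    set N := Subgroup.normalizer (C : Set (SU3 n)) with hN
    have hpos : 0 < N.relIndex H := Nat.pos_of_ne_zero (Subgroup.index_ne_zero_of_finite (H := N.subgroupOf H))
    obtain ⟨k, hk⟩ := (Nat.modEq_iff_dvd' hpos).1 h1.symm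
    have hk' : N.relIndex H = 1 + k * (qval n ^ 2 - qval n + 1) := by
      rw [mul_comm k]; omega
    have e1 := Subgroup.relIndex_mul_relIndex C N H Subgroup.le_normalizer hlt.le
    have e2 := Subgroup.relIndex_mul_index (Subgroup.le_normalizer.trans hlt.le : C ≤ H)
    rw [← e1, hC.relIndex hn, hk', hC.index_eq hn] at e2
    have hj : 0 < H.index := Nat.pos_of_ne_zero Subgroup.index_ne_zero_of_finite
    rcases arith_singer _ k H.index (qval_cases hn) (qval_mod_three hn) hj e2 with h | h | ⟨hq, h⟩
    · rw [h, zero_mul, add_zero, Subgroup.relIndex_eq_one] at hk'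
      exact absurd hk' hlt.not_ge
    · exact Subgroup.index_eq_one.1 h
    · exfalso
      refine hC.card_ne hn hq hlt.le ?_
      rw [← card_mul_relIndex hlt.le, hk', hN, hC.card_normalizer hn, h, hq]
      norm_num

end singerNormalizer

/-! ### Counting -/

section counting
variable {n : ℕ}

theorem isCoatom_map {G H : Type*} [Group G] [Group H] (f : G ≃* H) {M : Subgroup G} :
    IsCoatom (M.map f.toMonoidHom) ↔ IsCoatom M :=
  (f.mapSubgroup).isCoatom_iff M

theorem isCoatom_cj {G : Type*} [Group G] {M : Subgroup G} (h : IsCoatom M) (g : G) :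
    IsCoatom (cj g M) :=
  (isCoatom_map (MulAut.conj g)).2 h

/-- The maximal subgroups of order `k` containing `σ` are counted by double counting, once the
subgroups of order `k` are known to form one class of self-normalizing maximal subgroups. -/
theorem card_maximal_mul {G : Type*} [Group G] [Finite G] (N : Subgroup G) (k : ℕ)
    (hNN : Subgroup.normalizer (N : Set G) = N) (hN : IsCoatom N) (hk : Nat.card N = k)
    (hconj : ∀ F : Subgroup G, Nat.card F = k → ∃ g, F = cj g N) (σ : G)
    (hσ : ∀ τ, orderOf τ = 3 ↔ ∃ g, τ = g⁻¹ * σ * g) :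
    Nat.card {M : Subgroup G // IsCoatom M ∧ Nat.card M = k ∧ σ ∈ M} * k =
      Nat.card {ν // ν ∈ N ∧ orderOf ν = 3} * Nat.card (Subgroup.centralizer ({σ} : Set G)) := by
  have h := card_conj_mul N hNN σ hσ
  rw [hk] at h
  rw [← h]
  congr 1
  refine Nat.card_congr (Equiv.subtypeEquivRight fun M => ?_)
  constructor
  · rintro ⟨-, h2, h3⟩
    exact ⟨hconj M h2, h3⟩
  · rintro ⟨⟨g, rfl⟩, h3⟩
    exact ⟨isCoatom_cj hN g, by rw [card_cj, hk], h3⟩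

theorem card_maximal_congr {G H : Type*} [Group G] [Group H] (f : G ≃* H) (k : ℕ) (σ : G) :
    Nat.card {M : Subgroup G // IsCoatom M ∧ Nat.card M = k ∧ σ ∈ M} =
      Nat.card {M : Subgroup H // IsCoatom M ∧ Nat.card M = k ∧ f σ ∈ M} := by
  refine Nat.card_congr (Equiv.subtypeEquiv f.mapSubgroup.toEquiv fun M => ?_)
  have h1 : IsCoatom (M.map f.toMonoidHom) ↔ IsCoatom M := isCoatom_map f
  have h2 : Nat.card (M.map f.toMonoidHom) = Nat.card M :=
    Subgroup.card_map_of_injective f.injective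
  have h3 : f σ ∈ M.map f.toMonoidHom ↔ σ ∈ M := Subgroup.mem_map_iff_mem f.injective
  show _ ↔ IsCoatom (M.map f.toMonoidHom) ∧ Nat.card (M.map f.toMonoidHom) = k ∧
    f σ ∈ M.map f.toMonoidHom
  rw [h1, h2, h3]

theorem T_index (hn : 1 ≤ n) : (T n).index =
    (qval n ^ 2 - qval n + 1) * (qval n ^ 3 * (qval n - 1)) := by
  have h := (T n).card_mul_index
  rw [card_T, card_SU3' hn] at h
  apply Nat.eq_of_mul_eq_mul_left (show 0 < (qval n + 1) ^ 2 by positivity)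
  rw [h]; ring

theorem T_index_coprime (hn : 1 ≤ n) : (T n).index.Coprime (Nat.card (T n)) := by
  rw [T_index hn, card_T]
  apply Nat.Coprime.pow_right
  rw [← Nat.isCoprime_iff_coprime]
  obtain ⟨k, hk⟩ := four_dvd_qval hn
  have h3 := qval_mod_three hn
  have h4 := four_le_qval hn
  rw [Nat.cast_mul, m_cast, Nat.cast_mul, Nat.cast_pow (qval n) 3, Nat.cast_sub (by omega : 1 ≤ qval n)]
  generalize qval n = q at *
  refine IsCoprime.mul_left ?_ (IsCoprime.mul_left (IsCoprime.pow_left ?_) ?_)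
  · obtain ⟨j, hj⟩ : ∃ j : ℤ, (q : ℤ) = 3 * j + 1 := ⟨((q / 3 : ℕ) : ℤ), by omega⟩
    refine ⟨j + 1, -(j + 1) * (q - 2) - 1, ?_⟩
    push_cast
    rw [hj]; ring
  · exact ⟨-1, 1, by push_cast; ring⟩
  · have hk' : (q : ℤ) = 4 * k := by exact_mod_cast hk
    refine ⟨2 * k, 1 - 2 * k, ?_⟩
    push_cast
    rw [hk']; ring

theorem three_lt_T (hn : 1 ≤ n) {r : ℕ} (hr : r.Prime) (hd : r ∣ Nat.card (T n)) : 3 < r := by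
  rw [card_T] at hd
  have hd := hr.dvd_of_dvd_pow hd
  have h3 := qval_mod_three hn
  have h4 := four_dvd_qval hn
  have := hr.two_le
  by_contra hlt
  interval_cases r <;> omega

/-- The center of `SU(3,q)` is trivial: it lies in a Singer torus and in the diagonal torus. -/
theorem center_eq_bot (hn : 1 ≤ n) : Subgroup.center (SU3 n) = ⊥ := by
  obtain ⟨C, hC1, hC2, hC3⟩ := exists_singer hn
  have hC : IsSinger C := ⟨hC1, hC2, hC3⟩
  rw [eq_bot_iff]
  intro z hz
  rw [Subgroup.mem_bot]
  rw [Subgroup.mem_center_iff] at hz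
  have hzC : z ∈ C := by
    obtain ⟨c, hc⟩ : ∃ c : C, c ≠ 1 := by
      have := (Finite.one_lt_card_iff_nontrivial (α := C)).1
        (by rw [hC1]; have := thirteen_le hn; omega)
      exact exists_ne 1
    exact hC3 c c.2 (fun h => hc (Subtype.ext h)) z (hz c).symm
  have hzT : z ∈ T n := by
    have h4 := four_le_qval hn
    obtain ⟨r, hr, hd⟩ := Nat.exists_prime_and_dvd (n := Nat.card (T n)) (by
      rw [card_T]; nlinarith)
    obtain ⟨x, -, -, -, hx⟩ := exists_regular_prime hr hd
    exact hx z (hz x).symm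
  have h1 := pow_card_of_mem hzC
  have h2 := pow_card_of_mem hzT
  have h3 : (Nat.card C).Coprime (Nat.card (T n)) :=
    (T_index_coprime hn).coprime_dvd_left (by rw [T_index hn, hC1]; exact dvd_mul_right _ _)
  have := mem_of_pow_mem_of_coprime ⊥ z h3 (by rw [h1]; exact one_mem _) (by rw [h2]; exact one_mem _)
  exact this

theorem div_three {a b c k : ℕ} (hc : 0 < c) (h : a * (3 * c) = c * k * b) : a = k * b / 3 := by
  have h3 : a * 3 = k * b := Nat.eq_of_mul_eq_mul_left hc (by rw [← mul_assoc c k b, ← h]; ring)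
  rw [← h3, Nat.mul_div_cancel _ (by norm_num)]

/-- Subgroups of order `6(q+1)²` are the conjugates of the triangle stabilizer, which contains
`2(q+1)²` elements of order 3. -/
theorem card_triangle (hn : 1 ≤ n) {σ : SU3 n} (hσ : orderOf σ = 3) :
    Nat.card {M : Subgroup (SU3 n) //
      IsCoatom M ∧ Nat.card M = 6 * (qval n + 1) ^ 2 ∧ σ ∈ M} = (qval n ^ 2 - 1) / 3 := by
  have h := card_maximal_mul (Mon n) _ (normalizer_Mon hn) (isCoatom_Mon hn) card_Mon
    (fun F hF => conj_normalizer_of_card_eq (T n) F 6 (Or.inr rfl) (fun x hx y hy => T_comm hx hy)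
      (T_index_coprime hn) (fun r hr hd => exists_regular_prime hr hd)
      (fun r hr hd => three_lt_T hn hr hd) (by rw [card_T]; exact card_Mon) (by rw [card_T, hF]))
    σ (orderOf_three_iff hn hσ)
  rw [card_order_three_Mon hn, (centralizer_three hn hσ).1] at h
  rw [← one_mul (qval n ^ 2 - 1)]
  exact div_three (c := 2 * (qval n + 1) ^ 2) (by positivity)
    (Eq.trans (by congr 1; ring) (h.trans (by ring)))

/-- Subgroups of order `3(q²-q+1)` are the conjugates of the Singer normalizer, which contains
`2(q²-q+1)` elements of order 3. -/
theorem card_singer (hn : 1 ≤ n) {σ : SU3 n} (hσ : orderOf σ = 3) :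
    Nat.card {M : Subgroup (SU3 n) //
      IsCoatom M ∧ Nat.card M = 3 * (qval n ^ 2 - qval n + 1) ∧ σ ∈ M} =
      2 * (qval n ^ 2 - 1) / 3 := by
  obtain ⟨C, hC1, hC2, hC3⟩ := exists_singer hn
  have hC : IsSinger C := ⟨hC1, hC2, hC3⟩
  have h := card_maximal_mul (Subgroup.normalizer (C : Set (SU3 n))) _
    (hC.normalizer_normalizer hn) (hC.isCoatom hn) (hC.card_normalizer hn)
    (fun F hF => conj_normalizer_of_card_eq C F 3 (Or.inl rfl) hC2
      (hC.index_coprime hn) (fun r hr hd => ?_)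
      (fun r hr hd => three_lt hn hr (hC1 ▸ hd))
      (by rw [hC1]; exact hC.card_normalizer hn) (by rw [hC1, hF]))
    σ (orderOf_three_iff hn hσ)
  · rw [hC.card_order_three hn, (centralizer_three hn hσ).1] at h
    exact div_three (Nat.succ_pos _) (h.trans (congrArg (· * _) (mul_comm _ _)))
  · have : Fact r.Prime := ⟨hr⟩
    obtain ⟨x, hx⟩ := exists_prime_orderOf_dvd_card' r hd
    have h1 : x ≠ 1 := by
      rintro rfl
      rw [orderOf_one] at hx
      exact hr.one_lt.ne hx
    have h1' : x.1 ≠ 1 := fun h => h1 (Subtype.ext h)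
    have h2 : x ^ r = 1 := orderOf_dvd_iff_pow_eq_one.1 hx.dvd
    exact ⟨x, x.2, h1', congrArg Subtype.val h2, hC3 x x.2 h1'⟩

end counting

-- STATEMENT 13
theorem stmt13 (n : ℕ) (hn : 1 ≤ n) (σ : PSU3 n) (hσ : orderOf σ = 3) :
    Nat.card {M : Subgroup (PSU3 n) //
      IsCoatom M ∧ Nat.card M = 6 * (qval n + 1) ^ 2 ∧ σ ∈ M} = (qval n ^ 2 - 1) / 3 ∧
    Nat.card {M : Subgroup (PSU3 n) //
      IsCoatom M ∧ Nat.card M = 3 * (qval n ^ 2 - qval n + 1) ∧ σ ∈ M} =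
      2 * (qval n ^ 2 - 1) / 3 := by
  have f : PSU3 n ≃* SU3 n :=
    (QuotientGroup.quotientMulEquivOfEq (center_eq_bot hn)).trans QuotientGroup.quotientBot
  have hf : orderOf (f σ) = 3 := (f.orderOf_eq σ).trans hσ
  exact ⟨(card_maximal_congr f _ σ).trans (card_triangle hn hf),
    (card_maximal_congr f _ σ).trans (card_singer hn hf)⟩

end PSUPaper
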